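/- Let d ≥ 2 and ℓ ≥ 0 be integers. Every r > 0 such that (Ξ_ℓ^{(d)})'(r) = 0 is a transcendental number (i.e. r is not a root of any nonzero polynomial with rational coefficients). -/

import Mathlib

/-- The Bessel function of the first kind `J_ν`, defined for real order `ν`
by its power series (interpreted with real powers `(x/2)^(2k+ν)`). -/
noncomputable def besselJ (ν x : ℝ) : ℝ :=
  ∑' k : ℕ, (-1 : ℝ) ^ k / (k.factorial * Real.Gamma ((k : ℝ) + ν + 1)) *
    (x / 2) ^ (2 * (k : ℝ) + ν)

/-- `Ξ_ℓ^{(d)}(r) = r^{(2-d)/2} J_{ℓ + d/2 - 1}(r)`. -/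
noncomputable def Xi (d ℓ : ℕ) (r : ℝ) : ℝ :=
  r ^ (((2 : ℝ) - d) / 2) * besselJ ((ℓ : ℝ) + (d : ℝ) / 2 - 1) r

/-!
Put `d = e + 2` and `ν = ℓ + e / 2`. A zero `r` of the derivative of `Ξ_ℓ` satisfies
`r J_ν'(r) = (e / 2) J_ν(r)`.

For odd `e` the order `ν` is half an odd integer. If `r` is algebraic, the three-term recursion
turns this relation into `A cos r + B sin r = 0` with algebraic `A`, `B` that are not both zero,
so `exp (2 i r)` is algebraic, against the Hermite–Lindemann theorem.

For even `e` the order `ν` is an integer and Siegel's method applies to the monomials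
`J_ν ^ (N - i) * (θ J_ν) ^ i`, where `θ = x d/dx`. At an algebraic `r`, all their values would be
rational multiples of the single number `J_ν(r) ^ N`. An auxiliary polynomial combination of the
monomials that vanishes to high order at the origin then has, together with many of its
derivatives, values at `r` that are algebraic of controlled height up to this common factor, but
too small to be nonzero. So the combination vanishes to high order at `r` too, against the zero
estimate: the matrix formed by the successive derivatives of the combination has nonzero
determinant, because the symmetric powers of Bessel's equation of integer order have no nonzero
proper invariant subspaces, and its degree bounds the total order of vanishing at the origin and
at `r`.

The Hermite–Lindemann theorem follows from the same method, applied to the powers of `exp`.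
-/

open Polynomial

/-! ### Linear differential systems and their duals -/

section DualDerivation

variable {R S ι : Type*} [CommRing R] [CommRing S] [Algebra R S] [Fintype ι]

/-- The operator on row vectors dual to the linear differential system `d Y = A Y`: it is
determined by `d (∑ i, P i * Y i) = ∑ i, dualDeriv d A P i * Y i` for every solution `Y`. -/
def dualDeriv (d : Derivation R S S) (A : Matrix ι ι S) : (ι → S) →ₗ[R] ι → S :=
  d.toLinearMap.compLeft ι + A.vecMulLinear.restrictScalars R

lemma dualDeriv_apply (d : Derivation R S S) (A : Matrix ι ι S) (P : ι → S) (j : ι) :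
    dualDeriv d A P j = d (P j) + ∑ i, P i * A i j := rfl

lemma dualDeriv_smul (d : Derivation R S S) (A : Matrix ι ι S) (g : S) (P : ι → S) :
    dualDeriv d A (g • P) = d g • P + g • dualDeriv d A P := by
  ext j
  simp only [dualDeriv_apply, Pi.add_apply, Pi.smul_apply, smul_eq_mul, Derivation.leibniz,
    mul_add, Finset.mul_sum, mul_assoc]
  ring

variable {R' S' : Type*} [CommRing R'] [CommRing S'] [Algebra R' S']

lemma map_dualDeriv_iterate (φ : S →+* S') {d : Derivation R S S} {d' : Derivation R' S' S'}
    (hφ : ∀ s, φ (d s) = d' (φ s)) (A : Matrix ι ι S) (P : ι → S) (k : ℕ) (j : ι) :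
    φ ((dualDeriv d A)^[k] P j) = (dualDeriv d' (A.map φ))^[k] (fun i => φ (P i)) j := by
  induction k generalizing P with
  | zero => rfl
  | succ k ih =>
    rw [Function.iterate_succ_apply, Function.iterate_succ_apply, ih]
    have hφD : (fun i => φ (dualDeriv d A P i)) = dualDeriv d' (A.map φ) fun i => φ (P i) :=
      funext fun i => by simp [dualDeriv_apply, hφ]
    rw [hφD]

lemma derivation_iterate_sum_smul [Algebra S S'] {d : Derivation R S S}
    {d' : Derivation R' S' S'} (hd : ∀ s, algebraMap S S' (d s) = d' (algebraMap S S' s))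
    {A : Matrix ι ι S} {Y : ι → S'} (hY : ∀ i, d' (Y i) = ∑ j, A i j • Y j)
    (P : ι → S) (k : ℕ) :
    d'^[k] (∑ i, P i • Y i) = ∑ i, (dualDeriv d A)^[k] P i • Y i := by
  induction k generalizing P with
  | zero => rfl
  | succ k ih =>
    rw [Function.iterate_succ_apply, Function.iterate_succ_apply, ← ih]
    congr 1
    simp only [Algebra.smul_def] at hY ⊢
    simp only [dualDeriv_apply, map_sum, Derivation.leibniz, smul_eq_mul, hY, map_add, map_mul, hd,
      add_mul, Finset.sum_add_distrib, Finset.mul_sum, Finset.sum_mul]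
    rw [add_comm, Finset.sum_comm (γ := ι)]
    simp only [mul_comm, mul_left_comm]

end DualDerivation

section EulerOperator

variable (R : Type*) [CommRing R]

/-- The Euler operator `X d/dX` on polynomials. -/
noncomputable def eulerPoly : Derivation R R[X] R[X] :=
  (X : R[X]) • derivative'

/-- The Euler operator `X d/dX` on power series. -/
noncomputable def eulerPS : Derivation R (PowerSeries R) (PowerSeries R) :=
  (PowerSeries.X : PowerSeries R) • PowerSeries.derivative R

variable {R}

lemma coeff_eulerPoly (p : R[X]) (k : ℕ) : (eulerPoly R p).coeff k = k * p.coeff k := by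
  change (X * derivative p).coeff k = _
  cases k with
  | zero => simp
  | succ k => rw [coeff_X_mul, coeff_derivative, mul_comm]; norm_cast

lemma coeff_eulerPS (f : PowerSeries R) (k : ℕ) :
    PowerSeries.coeff k (eulerPS R f) = k * PowerSeries.coeff k f := by
  change PowerSeries.coeff k (PowerSeries.X * PowerSeries.derivative R f) = _
  cases k with
  | zero => simp
  | succ k => rw [PowerSeries.coeff_succ_X_mul, PowerSeries.coeff_derivative, mul_comm]; norm_cast

lemma coeff_eulerPS_iterate (f : PowerSeries R) (t k : ℕ) :
    PowerSeries.coeff k ((eulerPS R)^[t] f) = (k : R) ^ t * PowerSeries.coeff k f := by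
  induction t with
  | zero => simp
  | succ t ih => rw [Function.iterate_succ_apply', coeff_eulerPS, ih]; ring

lemma map_eulerPoly {R' : Type*} [CommRing R'] (φ : R →+* R') (p : R[X]) :
    mapRingHom φ (eulerPoly R p) = eulerPoly R' (mapRingHom φ p) := by
  ext k
  simp [coeff_eulerPoly]

lemma coeff_algebraMap_powerSeries {R' : Type*} [CommRing R'] [Algebra R R'] (p : R[X]) (k : ℕ) :
    PowerSeries.coeff k (algebraMap R[X] (PowerSeries R') p) = algebraMap R R' (p.coeff k) := by
  simp [PowerSeries.algebraMap_apply']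

lemma algebraMap_X_powerSeries {R' : Type*} [CommRing R'] [Algebra R R'] :
    algebraMap R[X] (PowerSeries R') X = PowerSeries.X := by
  simp [PowerSeries.algebraMap_apply']

lemma algebraMap_eulerPoly {R' : Type*} [CommRing R'] [Algebra R R'] (p : R[X]) :
    algebraMap R[X] (PowerSeries R') (eulerPoly R p) =
      eulerPS R' (algebraMap R[X] (PowerSeries R') p) := by
  ext k
  simp [coeff_algebraMap_powerSeries, coeff_eulerPoly, coeff_eulerPS]

lemma X_pow_dvd_eulerPS_iterate {T : ℕ} {f : PowerSeries R} (h : PowerSeries.X ^ T ∣ f) (k : ℕ) :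
    PowerSeries.X ^ T ∣ (eulerPS R)^[k] f := by
  rw [PowerSeries.X_pow_dvd_iff] at h ⊢
  intro m hm
  rw [coeff_eulerPS_iterate, h m hm, mul_zero]

lemma natDegree_eulerPoly_le (p : R[X]) : (eulerPoly R p).natDegree ≤ p.natDegree := by
  rw [natDegree_le_iff_coeff_eq_zero]
  intro k hk
  rw [coeff_eulerPoly, coeff_eq_zero_of_natDegree_lt hk, mul_zero]

lemma natDegree_dualDeriv_iterate_le {ι : Type*} [Fintype ι] {A : Matrix ι ι R[X]} {P : ι → R[X]}
    {n a : ℕ} (hA : ∀ i j, (A i j).natDegree ≤ a) (hP : ∀ i, (P i).natDegree ≤ n) (k : ℕ)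
    (j : ι) : ((dualDeriv (eulerPoly R) A)^[k] P j).natDegree ≤ n + a * k := by
  induction k generalizing P n with
  | zero => simpa using hP j
  | succ k ih =>
    have hstep (j : ι) : (dualDeriv (eulerPoly R) A P j).natDegree ≤ n + a :=
      (natDegree_add_le _ _).trans <| max_le
        ((natDegree_eulerPoly_le _).trans ((hP j).trans (Nat.le_add_right _ _)))
        (natDegree_sum_le_of_forall_le _ _ fun i _ =>
          natDegree_mul_le.trans (add_le_add (hP i) (hA i j)))
    exact (ih hstep).trans (le_of_eq (by ring))

end EulerOperator

/-! ### The zero estimate -/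

section Vanishing

variable {R S K ι : Type*} [CommRing R] [CommRing S] [Algebra R S] [Field K] [Fintype ι]

lemma sum_dualDeriv_iterate_smul_eq_zero (d : Derivation R S S) (A : Matrix ι ι S) (ε : S →+* K)
    (w : ι → K) {k : ℕ} (g : S) {P : ι → S}
    (hP : ∀ j ≤ k, ∑ i, ε ((dualDeriv d A)^[j] P i) * w i = 0) :
    ∑ i, ε ((dualDeriv d A)^[k] (g • P) i) * w i = 0 := by
  induction k generalizing g P with
  | zero =>
    have h0 := hP 0 le_rfl
    simp only [Function.iterate_zero, id] at h0
    simp only [Function.iterate_zero, id, Pi.smul_apply, smul_eq_mul, map_mul, mul_assoc,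
      ← Finset.mul_sum, h0, mul_zero]
  | succ k ih =>
    have h1 := ih (d g) fun j hj => hP j (hj.trans k.le_succ)
    have h2 := ih (P := dualDeriv d A P) g fun j hj => hP (j + 1) (Nat.succ_le_succ hj)
    rw [Function.iterate_succ_apply, dualDeriv_smul, iterate_map_add]
    simp only [Pi.add_apply, map_add, add_mul, Finset.sum_add_distrib, h1, h2, add_zero]

/-- The row vectors `P` for which `∑ i, P i * Y i` vanishes to order `s` at the point given by the
specialization `ε`, where `Y` is the solution of `d Y = A Y` with value `w` at that point. The
solution itself does not enter: the derivatives of `P Y` are the values of the iterates of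
`dualDeriv d A` at `P`. -/
def vanishingSubmodule (d : Derivation R S S) (A : Matrix ι ι S) (ε : S →+* K) (w : ι → K)
    (s : ℕ) : Submodule S (ι → S) where
  carrier := {P | ∀ k < s, ∑ i, ε ((dualDeriv d A)^[k] P i) * w i = 0}
  zero_mem' k _ := by simp [iterate_map_zero]
  add_mem' hP hQ k hk := by
    simp only [iterate_map_add, Pi.add_apply, map_add, add_mul, Finset.sum_add_distrib, hP k hk,
      hQ k hk, add_zero]
  smul_mem' g _ hP _ hk :=
    sum_dualDeriv_iterate_smul_eq_zero d A ε w g fun j hj => hP j (hj.trans_lt hk)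

variable {d : Derivation R S S} {A : Matrix ι ι S} {ε : S →+* K} {w : ι → K}

lemma iterate_mem_vanishingSubmodule {s k : ℕ} {P : ι → S}
    (hP : P ∈ vanishingSubmodule d A ε w (s + k)) :
    (dualDeriv d A)^[k] P ∈ vanishingSubmodule d A ε w s := fun j hj => by
  rw [← Function.iterate_add_apply]
  exact hP (j + k) (by lia)

lemma sum_eq_zero_of_pow_smul_mem_vanishingSubmodule [CharZero K] {π : S} (hπ : ε π = 0)
    (hdπ : ε (d π) ≠ 0) {m s : ℕ} (hm : m < s) {P : ι → S}
    (hP : π ^ m • P ∈ vanishingSubmodule d A ε w s) : ∑ i, ε (P i) * w i = 0 := by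
  induction m generalizing s P with
  | zero => simpa using hP 0 hm
  | succ m ih =>
    obtain ⟨s, rfl⟩ : ∃ s', s = s' + 1 := ⟨s - 1, by lia⟩
    have hderiv : dualDeriv d A (π ^ (m + 1) • P) =
        π ^ m • (((m + 1 : ℕ) * d π) • P + π • dualDeriv d A P) := by
      rw [dualDeriv_smul, Derivation.leibniz_pow, smul_add, smul_smul, smul_smul, ← pow_succ]
      simp only [add_tsub_cancel_right, nsmul_eq_mul, smul_eq_mul]
      congr 2
      ring
    have hmem := iterate_mem_vanishingSubmodule (k := 1) hP
    rw [Function.iterate_one, hderiv] at hmem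
    have hsum := ih (s := s) (by lia) hmem
    have hfactor : ((m + 1 : ℕ) : K) * ε (d π) * ∑ i, ε (P i) * w i = 0 := by
      rw [← hsum, Finset.mul_sum]
      simp [hπ, mul_assoc]
    exact (mul_eq_zero.mp hfactor).resolve_left
      (mul_ne_zero (Nat.cast_ne_zero.mpr m.succ_ne_zero) hdπ)

lemma X_sub_C_pow_dvd_of_smul_mem_vanishingSubmodule [CharZero K] {A : Matrix ι ι K[X]} {ρ : K}
    (hρ : ρ ≠ 0) {s : ℕ} {g : K[X]} {P : ι → K[X]} (hP : ∑ i, (P i).eval ρ * w i ≠ 0)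
    (h : g • P ∈ vanishingSubmodule (eulerPoly K) A (evalRingHom ρ) w s) :
    (X - C ρ) ^ s ∣ g := by
  rcases eq_or_ne g 0 with rfl | hg
  · exact dvd_zero _
  obtain ⟨q, hgq, hq⟩ := exists_eq_pow_rootMultiplicity_mul_and_not_dvd g hg ρ
  refine (le_rootMultiplicity_iff hg).mp (not_lt.mp fun hlt => ?_)
  rw [hgq, mul_smul] at h
  have hsum := sum_eq_zero_of_pow_smul_mem_vanishingSubmodule (by simp) (by simp [eulerPoly, hρ])
    hlt h
  simp only [Pi.smul_apply, smul_eq_mul, map_mul, coe_evalRingHom, mul_assoc, ← Finset.mul_sum]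
    at hsum
  exact (mul_ne_zero (fun h0 => hq (dvd_iff_isRoot.mpr h0)) hP) hsum

end Vanishing

section ZeroEstimate

lemma natDegree_det_le {R ι : Type*} [CommRing R] [Fintype ι] [DecidableEq ι]
    {M : Matrix ι ι R[X]} {b : ℕ} (hM : ∀ i j, (M i j).natDegree ≤ b) :
    M.det.natDegree ≤ Fintype.card ι * b := by
  rw [Matrix.det_apply]
  refine natDegree_sum_le_of_forall_le _ _ fun σ _ => ?_
  have hprod : (∏ i, M (σ i) i).natDegree ≤ Fintype.card ι * b :=
    (natDegree_prod_le _ _).trans <|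
      (Finset.sum_le_card_nsmul _ _ b fun i _ => hM (σ i) i).trans_eq (by simp)
  rcases Int.units_eq_one_or (Equiv.Perm.sign σ) with h | h <;> simpa [h] using hprod

lemma det_smul_mem {R ι : Type*} [CommRing R] [Fintype ι] [DecidableEq ι] {M : Matrix ι ι R}
    {N : Submodule R (ι → R)} (hM : ∀ i, M i ∈ N) (v : ι → R) : M.det • v ∈ N := by
  have hv : M.det • v = Matrix.vecMul (Matrix.vecMul v M.adjugate) M := by
    rw [Matrix.vecMul_vecMul, Matrix.adjugate_mul, Matrix.vecMul_smul, Matrix.vecMul_one]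
  rw [hv, Matrix.vecMul_eq_sum]
  exact N.sum_mem fun i _ => N.smul_mem _ (hM i)

lemma X_pow_sub_dvd_of_dvd_mul {R : Type*} [CommRing R] [IsDomain R] {T o : ℕ}
    {f g : PowerSeries R} (h : PowerSeries.X ^ T ∣ f * g) (hg : PowerSeries.coeff o g ≠ 0) :
    PowerSeries.X ^ (T - o) ∣ f := by
  have hfg : (T : ℕ∞) ≤ f.order + g.order := by
    rw [← PowerSeries.order_mul]
    exact PowerSeries.le_order _ _ fun i hi =>
      PowerSeries.X_pow_dvd_iff.mp h i (by exact_mod_cast hi)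
  have hTo : ((T - o : ℕ) : ℕ∞) ≤ f.order := by
    rw [ENat.natCast_sub]
    exact tsub_le_iff_right.mpr (hfg.trans (by gcongr; exact PowerSeries.order_le _ hg))
  exact PowerSeries.X_pow_dvd_iff.mpr fun m hm =>
    PowerSeries.coeff_of_lt_order _ (lt_of_lt_of_le (by exact_mod_cast hm) hTo)

variable {ι K : Type*} [Fintype ι] [DecidableEq ι] [Field K] {A : Matrix ι ι K[X]}
  {P : ι → K[X]}

lemma X_pow_dvd_det {Y : ι → PowerSeries K} (hY : ∀ i, eulerPS K (Y i) = ∑ j, A i j • Y j)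
    {κ : ι → ℕ} {T o : ℕ} {j₀ : ι} (hj₀ : PowerSeries.coeff o (Y j₀) ≠ 0)
    (hT : PowerSeries.X ^ T ∣ ∑ i, P i • Y i) :
    X ^ (T - o) ∣ (Matrix.of fun i => (dualDeriv (eulerPoly K) A)^[κ i] P).det := by
  let N : Submodule K[X] (ι → K[X]) :=
    ((Ideal.span {PowerSeries.X ^ T}).restrictScalars K[X]).comap (Fintype.linearCombination K[X] Y)
  have hmem := det_smul_mem (N := N)
    (M := Matrix.of fun i => (dualDeriv (eulerPoly K) A)^[κ i] P) (fun i => ?_) (Pi.single j₀ 1)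
  · have hdvd : PowerSeries.X ^ T ∣ algebraMap K[X] (PowerSeries K)
        (Matrix.of fun i => (dualDeriv (eulerPoly K) A)^[κ i] P).det * Y j₀ := by
      rw [Submodule.mem_comap, map_smul, Fintype.linearCombination_apply_single, one_smul,
        Algebra.smul_def] at hmem
      exact Ideal.mem_span_singleton.mp hmem
    have hX := PowerSeries.X_pow_dvd_iff.mp (X_pow_sub_dvd_of_dvd_mul hdvd hj₀)
    exact X_pow_dvd_iff.mpr fun k hk => by simpa [coeff_algebraMap_powerSeries] using hX k hk
  · have := X_pow_dvd_eulerPS_iterate hT (κ i)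
    rw [derivation_iterate_sum_smul algebraMap_eulerPoly hY] at this
    simpa [N, Ideal.mem_span_singleton, Fintype.linearCombination_apply] using this

lemma X_sub_C_pow_dvd_det [CharZero K] {ρ : K} (hρ : ρ ≠ 0) {w : ι → K} {κ : ι → ℕ} {c t : ℕ}
    (hκ : ∀ i, κ i ≤ c) {j₁ : ι} (hw : w j₁ ≠ 0)
    (ht : ∀ k < t, ∑ i, ((dualDeriv (eulerPoly K) A)^[k] P i).eval ρ * w i = 0) :
    (X - C ρ) ^ (t - c) ∣ (Matrix.of fun i => (dualDeriv (eulerPoly K) A)^[κ i] P).det := by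
  rcases le_total t c with htc | hct
  · simp [Nat.sub_eq_zero_of_le htc]
  refine X_sub_C_pow_dvd_of_smul_mem_vanishingSubmodule (w := w) (A := A) (P := Pi.single j₁ 1) hρ
    ?_ (det_smul_mem (fun i => iterate_mem_vanishingSubmodule fun k hk => ht k ?_) _)
  · simpa [Pi.single_apply, apply_ite (eval ρ)] using hw
  · have := hκ i
    omega

theorem zero_estimate [CharZero K] {Y : ι → PowerSeries K} {ρ : K} (hρ : ρ ≠ 0) {w : ι → K}
    {n a c o T t : ℕ}
    (hA : ∀ i j, (A i j).natDegree ≤ a) (hP : ∀ i, (P i).natDegree ≤ n) {κ : ι → ℕ}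
    (hκ : ∀ i, κ i ≤ c)
    (hdet : (Matrix.of fun i => (dualDeriv (eulerPoly K) A)^[κ i] P).det ≠ 0)
    (hY : ∀ i, eulerPS K (Y i) = ∑ j, A i j • Y j) {j₀ : ι} (hj₀ : PowerSeries.coeff o (Y j₀) ≠ 0)
    (hT : PowerSeries.X ^ T ∣ ∑ i, P i • Y i) {j₁ : ι} (hw : w j₁ ≠ 0)
    (ht : ∀ k < t, ∑ i, ((dualDeriv (eulerPoly K) A)^[k] P i).eval ρ * w i = 0) :
    T + t ≤ Fintype.card ι * (n + a * c) + o + c := by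
  have hcop : IsCoprime ((X : K[X]) ^ (T - o)) ((X - C ρ) ^ (t - c)) := by
    simpa using (isCoprime_X_sub_C_of_isUnit_sub (a := 0) (b := ρ) (by simpa using hρ)).pow
      (m := T - o) (n := t - c)
  have hdvd := natDegree_le_of_dvd
    (hcop.mul_dvd (X_pow_dvd_det hY hj₀ hT) (X_sub_C_pow_dvd_det hρ hκ hw ht)) hdet
  have hdeg := natDegree_det_le
    (M := Matrix.of fun i => (dualDeriv (eulerPoly K) A)^[κ i] P)
    fun i j => (natDegree_dualDeriv_iterate_le hA hP (κ i) j).trans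
      (Nat.add_le_add_left (Nat.mul_le_mul_left a (hκ i)) n)
  rw [natDegree_mul (pow_ne_zero _ X_ne_zero) (pow_ne_zero _ (X_sub_C_ne_zero _)),
    natDegree_pow, natDegree_pow, natDegree_X, natDegree_X_sub_C] at hdvd
  omega

end ZeroEstimate

section IntegerForms

/-- If `Y` is the solution of `X dY/dX = A Y` taking the value `w` at `ρ`, then this is the value
at `ρ` of `∑ i, P i * Y i` differentiated `t` times by the Euler operator. -/
noncomputable def formValue {K ι : Type*} [Field K] [Fintype ι] (A : Matrix ι ι ℤ[X]) (ρ : K)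
    (w : ι → K) (P : ι → ℤ[X]) (t : ℕ) : K :=
  ∑ i, aeval ρ ((dualDeriv (eulerPoly ℤ) A)^[t] P i) * w i

variable {K : Type*} [Field K] [CharZero K]

lemma map_eulerPS {R R' : Type*} [CommRing R] [CommRing R'] (φ : R →+* R') (f : PowerSeries R) :
    PowerSeries.map φ (eulerPS R f) = eulerPS R' (PowerSeries.map φ f) := by
  ext k
  simp [coeff_eulerPS]

lemma map_int_smul_powerSeries (p : ℤ[X]) (f : PowerSeries ℚ) :
    PowerSeries.map (algebraMap ℚ K) (p • f) =
      mapRingHom (Int.castRingHom K) p • PowerSeries.map (algebraMap ℚ K) f := by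
  rw [Algebra.smul_def, Algebra.smul_def, map_mul]
  congr 1
  ext k
  simp [coeff_algebraMap_powerSeries]

theorem zero_estimate_int {ι : Type*} [Fintype ι] [DecidableEq ι] {A : Matrix ι ι ℤ[X]}
    {P : ι → ℤ[X]} {Y : ι → PowerSeries ℚ} {ρ : K} (hρ : ρ ≠ 0) {w : ι → K} {n a c o T t : ℕ}
    (hA : ∀ i j, (A i j).natDegree ≤ a) (hP : ∀ i, (P i).natDegree ≤ n) {κ : ι → ℕ}
    (hκ : ∀ i, κ i ≤ c)
    (hdet : (Matrix.of fun i => (dualDeriv (eulerPoly ℤ) A)^[κ i] P).det ≠ 0)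
    (hY : ∀ i, eulerPS ℚ (Y i) = ∑ j, A i j • Y j) {j₀ : ι} (hj₀ : PowerSeries.coeff o (Y j₀) ≠ 0)
    (hT : PowerSeries.X ^ T ∣ ∑ i, P i • Y i) {j₁ : ι} (hw : w j₁ ≠ 0)
    (ht : ∀ k < t, formValue A ρ w P k = 0) :
    T + t ≤ Fintype.card ι * (n + a * c) + o + c := by
  let φ : ℤ[X] →+* K[X] := mapRingHom (Int.castRingHom K)
  have hφ : Function.Injective φ := map_injective _ Int.cast_injective
  have hiter := map_dualDeriv_iterate φ (d' := eulerPoly K) (map_eulerPoly _) A P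
  refine zero_estimate (A := A.map φ) (P := fun i => φ (P i)) (κ := κ) (j₀ := j₀)
    (Y := fun i => PowerSeries.map (algebraMap ℚ K) (Y i)) hρ
    (fun i j => natDegree_map_le.trans (hA i j)) (fun i => natDegree_map_le.trans (hP i)) hκ ?_
    (fun i => ?_) (by simpa using hj₀) ?_ hw fun k hk => ?_
  · have hdetφ : (Matrix.of fun i => (dualDeriv (eulerPoly K) (A.map φ))^[κ i] fun j => φ (P j)) =
        φ.mapMatrix (Matrix.of fun i => (dualDeriv (eulerPoly ℤ) A)^[κ i] P) := by
      ext1 i j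
      exact (hiter (κ i) j).symm
    rw [hdetφ, ← RingHom.map_det]
    exact (map_ne_zero_iff φ hφ).mpr hdet
  · rw [← map_eulerPS, hY, map_sum]
    exact Finset.sum_congr rfl fun j _ => map_int_smul_powerSeries _ _
  · have := map_dvd (PowerSeries.map (algebraMap ℚ K)) hT
    simpa only [map_pow, PowerSeries.map_X, map_sum, map_int_smul_powerSeries] using this
  · rw [← ht k hk]
    refine Finset.sum_congr rfl fun i _ => ?_
    rw [← hiter, coe_mapRingHom, eval_map, aeval_def]
    rfl

end IntegerForms

/-! ### Evaluation of power series -/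

section Evaluation

/-- The value at a complex number of a power series with rational coefficients. The junk value of
`tsum` is avoided on `absConvergent x`. -/
noncomputable def psEval (x : ℂ) (f : PowerSeries ℚ) : ℂ :=
  ∑' k, ((PowerSeries.coeff k f : ℚ) : ℂ) * x ^ k

lemma coeff_mul_mul_pow (x : ℂ) (f g : PowerSeries ℚ) (k : ℕ) :
    ((PowerSeries.coeff k (f * g) : ℚ) : ℂ) * x ^ k = ∑ p ∈ Finset.HasAntidiagonal.antidiagonal k,
      (((PowerSeries.coeff p.1 f : ℚ) : ℂ) * x ^ p.1) *
        (((PowerSeries.coeff p.2 g : ℚ) : ℂ) * x ^ p.2) := by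
  rw [PowerSeries.coeff_mul]
  push_cast
  rw [Finset.sum_mul]
  refine Finset.sum_congr rfl fun p hp => ?_
  rw [← Finset.HasAntidiagonal.mem_antidiagonal.mp hp, pow_add]
  ring

/-- The algebra of the rational power series which converge absolutely at `x`. -/
def absConvergent (x : ℂ) : Subalgebra ℚ (PowerSeries ℚ) where
  carrier := {f | Summable fun k => ‖((PowerSeries.coeff k f : ℚ) : ℂ) * x ^ k‖}
  mul_mem' hf hg := by
    have := summable_norm_sum_mul_antidiagonal_of_summable_norm hf hg
    simpa only [Set.mem_ofPred_eq, coeff_mul_mul_pow] using this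
  add_mem' hf hg := by
    refine Summable.of_nonneg_of_le (fun _ => norm_nonneg _) (fun k => ?_) (Summable.add hf hg)
    rw [map_add, Rat.cast_add, add_mul]
    exact norm_add_le _ _
  algebraMap_mem' q := summable_of_ne_finset_zero (s := {0}) fun k hk => by
    simp_all [PowerSeries.coeff_C]

/-- `psEval` as a homomorphism of algebras. -/
noncomputable def psEvalHom (x : ℂ) : absConvergent x →ₐ[ℚ] ℂ :=
  AlgHom.ofLinearMap
    { toFun := fun f => psEval x f
      map_add' := fun f g => by
        unfold psEval
        rw [← Summable.tsum_add f.2.of_norm g.2.of_norm]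
        exact tsum_congr fun k => by
          simp only [AddMemClass.coe_add, map_add, Rat.cast_add, add_mul]
      map_smul' := fun q f => by
        simp [psEval, mul_assoc, tsum_mul_left, Algebra.smul_def] }
    ((tsum_eq_single 0 fun k hk => by simp [PowerSeries.coeff_one, hk]).trans (by simp))
    fun f g => by
      simp only [LinearMap.coe_mk, AddHom.coe_mk, psEval]
      rw [tsum_mul_tsum_eq_tsum_sum_antidiagonal_of_summable_norm f.2 g.2]
      exact tsum_congr fun k => coeff_mul_mul_pow x f g k

lemma psEvalHom_apply {x : ℂ} (f : absConvergent x) : psEvalHom x f = psEval x f := rfl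

variable {x : ℂ} {f g : PowerSeries ℚ}

lemma psEval_sub (hf : f ∈ absConvergent x) (hg : g ∈ absConvergent x) :
    psEval x (f - g) = psEval x f - psEval x g := by
  simpa only [psEvalHom_apply, AddSubgroupClass.coe_sub] using
    map_sub (psEvalHom x) ⟨f, hf⟩ ⟨g, hg⟩

lemma psEval_mul (hf : f ∈ absConvergent x) (hg : g ∈ absConvergent x) :
    psEval x (f * g) = psEval x f * psEval x g := by
  simpa only [psEvalHom_apply, MulMemClass.coe_mul] using
    map_mul (psEvalHom x) ⟨f, hf⟩ ⟨g, hg⟩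

lemma psEval_pow (hf : f ∈ absConvergent x) (n : ℕ) : psEval x (f ^ n) = psEval x f ^ n :=
  map_pow (psEvalHom x) ⟨f, hf⟩ n

lemma psEval_neg (x : ℂ) (f : PowerSeries ℚ) : psEval x (-f) = -psEval x f := by
  simp [psEval, tsum_neg]

lemma psEval_C_mul (x : ℂ) (q : ℚ) (f : PowerSeries ℚ) :
    psEval x (PowerSeries.C q * f) = q * psEval x f := by
  simp [psEval, mul_assoc, tsum_mul_left]

lemma algebraMap_int_mem_absConvergent (x : ℂ) (p : ℤ[X]) :
    algebraMap ℤ[X] (PowerSeries ℚ) p ∈ absConvergent x :=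
  summable_of_ne_finset_zero (s := p.support) fun k hk => by
    simp [coeff_algebraMap_powerSeries, notMem_support_iff.mp hk]

lemma psEval_algebraMap_int (x : ℂ) (p : ℤ[X]) :
    psEval x (algebraMap ℤ[X] (PowerSeries ℚ) p) = aeval x p := by
  rw [psEval, tsum_eq_sum (s := p.support) fun k hk => by
    simp [coeff_algebraMap_powerSeries, notMem_support_iff.mp hk], aeval_def, eval₂_eq_sum]
  simp [coeff_algebraMap_powerSeries, Polynomial.sum]

lemma int_smul_mem_absConvergent (p : ℤ[X]) (hf : f ∈ absConvergent x) :
    p • f ∈ absConvergent x := by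
  rw [Algebra.smul_def]
  exact mul_mem (algebraMap_int_mem_absConvergent x p) hf

lemma psEval_int_smul (p : ℤ[X]) (hf : f ∈ absConvergent x) :
    psEval x (p • f) = aeval x p * psEval x f := by
  rw [Algebra.smul_def, psEval_mul (algebraMap_int_mem_absConvergent x p) hf,
    psEval_algebraMap_int]

lemma psEval_sum_int_smul {ι : Type*} [Fintype ι] {Y : ι → PowerSeries ℚ}
    (hY : ∀ i, Y i ∈ absConvergent x) (P : ι → ℤ[X]) :
    psEval x (∑ i, P i • Y i) = ∑ i, aeval x (P i) * psEval x (Y i) := by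
  have hsum := map_sum (psEvalHom x)
    (fun i => ⟨P i • Y i, int_smul_mem_absConvergent (P i) (hY i)⟩) Finset.univ
  calc psEval x (∑ i, P i • Y i) = ∑ i, psEval x (P i • Y i) := by
        simpa only [psEvalHom_apply, AddSubmonoidClass.coe_finsetSum] using hsum
    _ = _ := Finset.sum_congr rfl fun i _ => psEval_int_smul (P i) (hY i)

/-- A power series with rational coefficients of the shape `a k / (C ^ k * k!)`, where the integers
`a k` grow at most geometrically. These are Siegel's `E`-functions with rational coefficients, with
a special shape of the denominators. -/
def IsEType (C B : ℕ) (f : PowerSeries ℚ) : Prop :=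
  ∀ k, ∃ a : ℤ, |a| ≤ (B : ℤ) ^ (k + 1) ∧
    PowerSeries.coeff k f = (a : ℚ) / ((C : ℚ) ^ k * (k.factorial : ℚ))

variable {C B : ℕ}

lemma IsEType.norm_coeff_le (hC : 0 < C) (hf : IsEType C B f)
    (k : ℕ) : ‖((PowerSeries.coeff k f : ℚ) : ℂ)‖ ≤ (B : ℝ) ^ (k + 1) / k.factorial := by
  obtain ⟨a, ha, hk⟩ := hf k
  have ha' : |(a : ℝ)| ≤ (B : ℝ) ^ (k + 1) := by exact_mod_cast ha
  have hCk : (1 : ℝ) ≤ (C : ℝ) ^ k := one_le_pow₀ (by exact_mod_cast hC)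
  have hk0 : (0 : ℝ) < k.factorial := by positivity
  simp only [hk, Rat.cast_div, Rat.cast_mul, Rat.cast_pow, Rat.cast_intCast, Rat.cast_natCast,
    norm_div, norm_mul, norm_pow, Complex.norm_natCast, Complex.norm_intCast]
  exact div_le_div₀ (by positivity) ha' hk0 (le_mul_of_one_le_left hk0.le hCk)

lemma IsEType.mem_absConvergent (hC : 0 < C) (hf : IsEType C B f) (x : ℂ) :
    f ∈ absConvergent x := by
  refine Summable.of_nonneg_of_le (fun _ => norm_nonneg _) (fun k => ?_)
    ((Real.summable_pow_div_factorial (B * ‖x‖)).mul_left (B : ℝ))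
  calc ‖((PowerSeries.coeff k f : ℚ) : ℂ) * x ^ k‖
      ≤ (B : ℝ) ^ (k + 1) / k.factorial * ‖x‖ ^ k := by
        rw [norm_mul, norm_pow]
        gcongr
        exact hf.norm_coeff_le hC k
    _ = B * ((B * ‖x‖) ^ k / k.factorial) := by rw [mul_pow]; ring

end Evaluation

section ValueBound

lemma pow_add_le_mul_exp {T t : ℕ} (hT : 0 < T) (ht : t ≤ T) (l : ℕ) :
    ((T + l : ℕ) : ℝ) ^ t ≤ (T : ℝ) ^ t * Real.exp l := by
  have hT' : (0 : ℝ) < T := by exact_mod_cast hT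
  have hfactor : ((T + l : ℕ) : ℝ) = T * (l / T + 1) := by
    push_cast
    field_simp
    ring
  rw [hfactor, mul_pow]
  gcongr
  calc ((l : ℝ) / T + 1) ^ t ≤ ((l : ℝ) / T + 1) ^ T :=
        pow_le_pow_right₀ (by linarith [div_nonneg (Nat.cast_nonneg (α := ℝ) l) hT'.le]) ht
    _ ≤ (Real.exp (l / T)) ^ T := by
        gcongr
        exact Real.add_one_le_exp _
    _ = Real.exp l := by
        rw [← Real.exp_nat_mul]
        congr 1
        field_simp

lemma tsum_norm_le_of_shift {a : ℕ → ℂ} {T : ℕ} {F z : ℝ} (ha : ∀ s < T, a s = 0)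
    (hle : ∀ l, ‖a (l + T)‖ ≤ F * (z ^ l / l.factorial)) : ‖∑' s, a s‖ ≤ F * Real.exp z := by
  have hexp := (NormedSpace.expSeries_div_hasSum_exp z).mul_left F
  rw [← Real.exp_eq_exp_ℝ] at hexp
  have hsum : Summable a :=
    (summable_nat_add_iff T).mp (Summable.of_norm_bounded hexp.summable hle)
  rw [← hsum.sum_add_tsum_nat_add T, Finset.sum_eq_zero fun s hs => ha s (by simpa using hs),
    zero_add]
  exact tsum_of_norm_bounded hexp hle

lemma factorial_sub_mul_factorial_le {n T : ℕ} (hn : n ≤ T) (l : ℕ) :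
    (T - n).factorial * l.factorial ≤ (l + T - n).factorial := by
  rw [show l + T - n = T - n + l by omega]
  exact Nat.le_of_dvd (Nat.factorial_pos _) (Nat.factorial_mul_factorial_dvd_factorial_add _ _)

lemma norm_psEval_eulerPS_iterate_le {f : PowerSeries ℚ} {T t n : ℕ} {Q b ϱ : ℝ} {x : ℂ}
    (hT : 0 < T) (ht : t ≤ T) (hn : n ≤ T) (hQ : 0 ≤ Q) (hb : 0 ≤ b) (hx : ‖x‖ ≤ ϱ)
    (hf : PowerSeries.X ^ T ∣ f)
    (hcoeff : ∀ s, n ≤ s → ‖((PowerSeries.coeff s f : ℚ) : ℂ)‖ ≤ Q * b ^ s / (s - n).factorial) :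
    ‖psEval x ((eulerPS ℚ)^[t] f)‖ ≤
      Q * (T : ℝ) ^ t * (b * ϱ) ^ T / (T - n).factorial * Real.exp (Real.exp 1 * (b * ϱ)) := by
  have hϱ : 0 ≤ ϱ := (norm_nonneg x).trans hx
  refine tsum_norm_le_of_shift (T := T) (fun s hs => ?_) fun l => ?_
  · rw [coeff_eulerPS_iterate, PowerSeries.X_pow_dvd_iff.mp hf s hs]
    simp
  have hpow : ‖((l + T : ℕ) : ℂ)‖ ^ t ≤ (T : ℝ) ^ t * Real.exp l := by
    rw [Complex.norm_natCast, add_comm]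
    exact pow_add_le_mul_exp hT ht l
  have hfact : ((T - n).factorial * l.factorial : ℝ) ≤ (l + T - n).factorial := by
    exact_mod_cast factorial_sub_mul_factorial_le hn l
  rw [coeff_eulerPS_iterate, Rat.cast_mul, Rat.cast_pow, Rat.cast_natCast, norm_mul, norm_mul,
    norm_pow, norm_pow]
  calc _ ≤ ((T : ℝ) ^ t * Real.exp l) * (Q * b ^ (l + T) / (l + T - n).factorial)
        * ϱ ^ (l + T) := by
        gcongr
        exact hcoeff (l + T) (by omega)
    _ ≤ ((T : ℝ) ^ t * Real.exp l) * (Q * b ^ (l + T) / ((T - n).factorial * l.factorial))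
        * ϱ ^ (l + T) := by gcongr
    _ = _ := by
      rw [mul_pow (Real.exp 1), ← Real.exp_nat_mul, mul_one, mul_pow, mul_pow, pow_add, pow_add]
      field_simp

end ValueBound

/-! ### The auxiliary form -/

section AuxiliaryForm

lemma exists_int_vec_abs_le {α β : Type*} [Fintype α] [Fintype β] (A : Matrix α β ℤ)
    (hlt : Fintype.card α < Fintype.card β) (h0 : 0 < Fintype.card α) {N q : ℕ} (hN : 1 ≤ N)
    (hA : ∀ i j, |A i j| ≤ (N : ℤ))
    (hq : Fintype.card α ≤ q * (Fintype.card β - Fintype.card α)) :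
    ∃ t : β → ℤ, t ≠ 0 ∧ A.mulVec t = 0 ∧ ∀ j, |t j| ≤ (((Fintype.card β * N) ^ q : ℕ) : ℤ) := by
  let _ : SeminormedAddCommGroup (Matrix α β ℤ) := Matrix.seminormedAddCommGroup
  obtain ⟨t, ht0, ht, hle⟩ := Int.Matrix.exists_ne_zero_int_vec_norm_le A hlt h0
  refine ⟨t, ht0, ht, fun j => ?_⟩
  have hN' : (1 : ℝ) ≤ N := by exact_mod_cast hN
  have hnorm : max 1 ‖A‖ ≤ N := by
    refine max_le hN' ((Matrix.norm_le_iff (by positivity)).mpr fun i j => ?_)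
    rw [Int.norm_eq_abs]
    exact_mod_cast hA i j
  have hβ : (1 : ℝ) ≤ Fintype.card β := by exact_mod_cast (by omega : 1 ≤ Fintype.card β)
  have hsub : (0 : ℝ) < (Fintype.card β : ℝ) - Fintype.card α := by
    rw [sub_pos]
    exact_mod_cast hlt
  have hexp : (Fintype.card α : ℝ) / ((Fintype.card β : ℝ) - Fintype.card α) ≤ (q : ℝ) := by
    rw [div_le_iff₀ hsub, ← Nat.cast_sub hlt.le]
    exact_mod_cast hq
  have htj : ‖t j‖ ≤ ((Fintype.card β : ℝ) * N) ^ q := by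
    calc ‖t j‖ ≤ ((Fintype.card β : ℝ) * max 1 ‖A‖) ^
          ((Fintype.card α : ℝ) / ((Fintype.card β : ℝ) - Fintype.card α)) :=
          (norm_le_pi_norm t j).trans hle
      _ ≤ ((Fintype.card β : ℝ) * N) ^
          ((Fintype.card α : ℝ) / ((Fintype.card β : ℝ) - Fintype.card α)) :=
          Real.rpow_le_rpow (by positivity) (by gcongr) (by positivity)
      _ ≤ ((Fintype.card β : ℝ) * N) ^ (q : ℝ) :=
          Real.rpow_le_rpow_of_exponent_le (by nlinarith) hexp
      _ = ((Fintype.card β : ℝ) * N) ^ q := Real.rpow_natCast _ _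
  rw [Int.norm_eq_abs] at htj
  exact_mod_cast htj

variable {D B : ℕ} {n : ℕ}

lemma IsEType.exists_int_coeff_X_pow_mul {f : PowerSeries ℚ} (hf : IsEType D B f) (hD : 0 < D)
    (hB : 0 < B) {T j s : ℕ} (hj : j ≤ n) (hs : s < T) :
    ∃ m : ℤ, |m| ≤ ((D ^ n * T ^ n * B ^ T : ℕ) : ℤ) ∧
      (D : ℚ) ^ s * s.factorial * PowerSeries.coeff s (PowerSeries.X ^ j * f) = m := by
  rcases lt_or_ge s j with hsj | hjs
  · exact ⟨0, by positivity, by simp [PowerSeries.coeff_X_pow_mul', hsj.not_ge]⟩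
  obtain ⟨a, ha, hfa⟩ := hf (s - j)
  refine ⟨D ^ j * (s.descFactorial j : ℕ) * a, ?_, ?_⟩
  · have hdesc : s.descFactorial j ≤ T ^ n :=
      calc s.descFactorial j ≤ s ^ j := Nat.descFactorial_le_pow _ _
        _ ≤ T ^ j := Nat.pow_le_pow_left hs.le j
        _ ≤ T ^ n := Nat.pow_le_pow_right (by omega) hj
    have hD' : (D : ℤ) ^ j ≤ (D : ℤ) ^ n := pow_le_pow_right₀ (by exact_mod_cast hD) hj
    have ha' : |a| ≤ (B : ℤ) ^ T :=
      ha.trans (pow_le_pow_right₀ (by exact_mod_cast hB) (by omega))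
    rw [abs_mul, abs_mul, abs_pow, Nat.abs_cast, Nat.abs_cast]
    push_cast
    gcongr
    exact_mod_cast hdesc
  · have hpow : (D : ℚ) ^ s = (D : ℚ) ^ (s - j) * (D : ℚ) ^ j := by
      rw [← pow_add, Nat.sub_add_cancel hjs]
    have hfact : ((s - j).factorial : ℚ) ≠ 0 := by exact_mod_cast Nat.factorial_ne_zero _
    rw [PowerSeries.coeff_X_pow_mul', if_pos hjs, hfa, ← Nat.factorial_mul_descFactorial hjs, hpow]
    push_cast
    field_simp

lemma coeff_int_smul {p : ℤ[X]} (hp : p.natDegree ≤ n) (f : PowerSeries ℚ) (s : ℕ) :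
    PowerSeries.coeff s (p • f) =
      ∑ j : Fin (n + 1), (p.coeff j : ℚ) * PowerSeries.coeff s (PowerSeries.X ^ (j : ℕ) * f) := by
  have hpoly : algebraMap ℤ[X] (PowerSeries ℚ) p =
      ∑ j : Fin (n + 1), PowerSeries.C (p.coeff j : ℚ) * PowerSeries.X ^ (j : ℕ) := by
    conv_lhs => rw [p.as_sum_range_C_mul_X_pow' (Nat.lt_succ_of_le hp),
      ← Fin.sum_univ_eq_sum_range fun j => C (p.coeff j) * X ^ j]
    simp only [map_sum, map_mul, map_pow, PowerSeries.algebraMap_apply', Polynomial.coe_C,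
      Polynomial.coe_X, PowerSeries.map_C, PowerSeries.map_X, algebraMap_int_eq,
      Int.coe_castRingHom]
  simp only [Algebra.smul_def, hpoly, Finset.sum_mul, map_sum, mul_assoc, PowerSeries.coeff_C_mul]

variable {ι : Type*} [Fintype ι] {Y : ι → PowerSeries ℚ}

/-- The bound which Siegel's lemma gives for the coefficients of an auxiliary form: it has `M`
components of degree `n` and vanishes to order `T`. -/
def auxHeight (M D B n T q : ℕ) : ℕ := (M * (n + 1) * (D ^ n * T ^ n * B ^ T)) ^ q

lemma exists_auxiliary_form (hD : 0 < D) (hB : 0 < B) (hY : ∀ i, IsEType D B (Y i)) {T q : ℕ}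
    (hT : 0 < T) (hlt : T < Fintype.card ι * (n + 1))
    (hq : T ≤ q * (Fintype.card ι * (n + 1) - T)) :
    ∃ P : ι → ℤ[X], P ≠ 0 ∧ (∀ i, (P i).natDegree ≤ n) ∧
      (∀ i k, |(P i).coeff k| ≤ (auxHeight (Fintype.card ι) D B n T q : ℤ)) ∧
      PowerSeries.X ^ T ∣ ∑ i, P i • Y i := by
  have hint (s : Fin T) (p : ι × Fin (n + 1)) := (hY p.1).exists_int_coeff_X_pow_mul hD hB
    (Nat.lt_succ_iff.mp p.2.2) s.2
  choose Mx hMx hMxY using hint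
  obtain ⟨t, ht0, ht, htle⟩ := exists_int_vec_abs_le (Matrix.of Mx) (q := q) (by simpa using hlt)
    (by simpa using hT) (Nat.one_le_iff_ne_zero.mpr (by positivity)) hMx (by simpa using hq)
  let P (i : ι) : ℤ[X] := ofFn (n + 1) fun j => t (i, j)
  have hcoeff (i : ι) (j : Fin (n + 1)) : (P i).coeff j = t (i, j) :=
    ofFn_coeff_eq_val_of_lt _ j.2
  have hdeg (i : ι) : (P i).natDegree ≤ n :=
    Nat.lt_succ_iff.mp (ofFn_natDegree_lt (Nat.succ_pos n) _)
  refine ⟨P, fun hP => ht0 (funext fun p => ?_), hdeg, fun i k => ?_, ?_⟩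
  · rw [← hcoeff, hP]
    simp
  · rcases lt_or_ge k (n + 1) with hk | hk
    · simpa [auxHeight, hcoeff i ⟨k, hk⟩] using htle (i, ⟨k, hk⟩)
    · rw [coeff_eq_zero_of_natDegree_lt ((hdeg i).trans_lt hk), abs_zero]
      positivity
  · refine PowerSeries.X_pow_dvd_iff.mpr fun s hs => ?_
    have hrow := congrArg (Int.cast : ℤ → ℚ) (congr_fun ht ⟨s, hs⟩)
    have hD0 : (D : ℚ) ^ s * s.factorial ≠ 0 := by positivity
    refine (mul_eq_zero.mp ?_).resolve_left hD0
    simp only [Matrix.mulVec, dotProduct, Matrix.of_apply, Pi.zero_apply, Int.cast_sum,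
      Int.cast_mul, Int.cast_zero, ← hMxY] at hrow
    rw [← hrow, map_sum, Finset.mul_sum, Fintype.sum_prod_type]
    refine Finset.sum_congr rfl fun i _ => ?_
    rw [coeff_int_smul (hdeg i), Finset.mul_sum]
    refine Finset.sum_congr rfl fun j _ => ?_
    rw [hcoeff]
    ring

lemma norm_coeff_sum_int_smul_le (hD : 0 < D) (hB : 0 < B) (hY : ∀ i, IsEType D B (Y i))
    {P : ι → ℤ[X]} (hP : ∀ i, (P i).natDegree ≤ n) {H : ℕ} (hH : ∀ i k, |(P i).coeff k| ≤ (H : ℤ))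
    {s : ℕ} (hs : n ≤ s) :
    ‖((PowerSeries.coeff s (∑ i, P i • Y i) : ℚ) : ℂ)‖ ≤
      Fintype.card ι * (n + 1) * H * B * (B : ℝ) ^ s / (s - n).factorial := by
  have hterm (i : ι) (j : Fin (n + 1)) : ‖((P i).coeff j : ℂ) *
      ((PowerSeries.coeff s (PowerSeries.X ^ (j : ℕ) * Y i) : ℚ) : ℂ)‖ ≤
        H * ((B : ℝ) ^ (s + 1) / (s - n).factorial) := by
    have hj : (j : ℕ) ≤ n := Nat.lt_succ_iff.mp j.2
    have hPH : |((P i).coeff j : ℝ)| ≤ H := by exact_mod_cast hH i j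
    rw [PowerSeries.coeff_X_pow_mul', if_pos (hj.trans hs), norm_mul, Complex.norm_intCast]
    calc _ ≤ H * ((B : ℝ) ^ (s - j + 1) / (s - j).factorial) := by
          gcongr
          exact (hY i).norm_coeff_le hD _
      _ ≤ H * ((B : ℝ) ^ (s + 1) / (s - n).factorial) := by
          gcongr
          · exact_mod_cast hB
          · omega
  simp only [map_sum, coeff_int_smul (hP _), Rat.cast_sum, Rat.cast_mul, Rat.cast_intCast]
  refine (norm_sum_le_of_le _ fun i _ => norm_sum_le_of_le _ fun j _ => hterm i j).trans_eq ?_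
  simp only [Finset.sum_const, Finset.card_univ, Fintype.card_fin, nsmul_eq_mul, Nat.cast_add,
    Nat.cast_one]
  ring

end AuxiliaryForm

section Heights

/-- The length of an integer polynomial: the sum of the absolute values of its coefficients. -/
def coeffLength (p : ℤ[X]) : ℤ := ∑ k ∈ p.support, |p.coeff k|

lemma abs_coeff_mul_le {p q : ℤ[X]} {H : ℤ} (hp : ∀ k, |p.coeff k| ≤ H) (k : ℕ) :
    |(p * q).coeff k| ≤ H * coeffLength q := by
  have hterm (l : ℕ) : |(p * (C (q.coeff l) * X ^ l)).coeff k| ≤ H * |q.coeff l| := by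
    rw [mul_left_comm, coeff_C_mul, coeff_mul_X_pow', abs_mul, mul_comm]
    gcongr
    split_ifs
    · exact hp _
    · exact abs_zero.trans_le ((abs_nonneg _).trans (hp 0))
  conv_lhs => rw [q.as_sum_support_C_mul_X_pow, Finset.mul_sum, finsetSum_coeff]
  rw [coeffLength, Finset.mul_sum]
  exact (Finset.abs_sum_le_sum_abs _ _).trans (Finset.sum_le_sum fun l _ => hterm l)

variable {ι : Type*} [Fintype ι] {A : Matrix ι ι ℤ[X]} {P : ι → ℤ[X]} {L n : ℕ} {H : ℤ}

lemma abs_coeff_dualDeriv_le (hL : ∀ j, ∑ i, coeffLength (A i j) ≤ (L : ℤ))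
    (hn : ∀ i, (P i).natDegree ≤ n) (hP : ∀ i k, |(P i).coeff k| ≤ H) (j : ι) (k : ℕ) :
    |(dualDeriv (eulerPoly ℤ) A P j).coeff k| ≤ ((n + L : ℕ) : ℤ) * H := by
  have hH : 0 ≤ H := (abs_nonneg _).trans (hP j 0)
  have heuler : |(k : ℤ) * (P j).coeff k| ≤ n * H := by
    rcases le_or_gt k n with hk | hk
    · rw [abs_mul, Nat.abs_cast]
      gcongr
      exact hP j k
    · rw [coeff_eq_zero_of_natDegree_lt ((hn j).trans_lt hk), mul_zero, abs_zero]
      positivity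
  have hlin : |∑ i, (P i * A i j).coeff k| ≤ L * H :=
    calc |∑ i, (P i * A i j).coeff k| ≤ ∑ i, H * coeffLength (A i j) :=
          (Finset.abs_sum_le_sum_abs _ _).trans
            (Finset.sum_le_sum fun i _ => abs_coeff_mul_le (hP i) k)
      _ ≤ L * H := by
          rw [← Finset.mul_sum, mul_comm]
          gcongr
          exact hL j
  rw [dualDeriv_apply, coeff_add, finsetSum_coeff, coeff_eulerPoly]
  push_cast
  rw [add_mul]
  exact (abs_add_le _ _).trans (add_le_add heuler hlin)

lemma abs_coeff_dualDeriv_iterate_le (hL : ∀ j, ∑ i, coeffLength (A i j) ≤ (L : ℤ)) {a : ℕ}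
    (hA : ∀ i j, (A i j).natDegree ≤ a) (hn : ∀ i, (P i).natDegree ≤ n)
    (hP : ∀ i k, |(P i).coeff k| ≤ H) (t : ℕ) (j : ι) (k : ℕ) :
    |((dualDeriv (eulerPoly ℤ) A)^[t] P j).coeff k| ≤ ((n + a * t + L : ℕ) : ℤ) ^ t * H := by
  have hH : 0 ≤ H := (abs_nonneg _).trans (hP j 0)
  induction t generalizing j k with
  | zero => simpa using hP j k
  | succ t ih =>
    rw [Function.iterate_succ_apply']
    calc _ ≤ ((n + a * t + L : ℕ) : ℤ) * (((n + a * t + L : ℕ) : ℤ) ^ t * H) :=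
          abs_coeff_dualDeriv_le hL (natDegree_dualDeriv_iterate_le hA hn t) ih j k
      _ = ((n + a * t + L : ℕ) : ℤ) ^ (t + 1) * H := by ring
      _ ≤ ((n + a * (t + 1) + L : ℕ) : ℤ) ^ (t + 1) * H := by
          gcongr
          exact t.le_succ

lemma norm_aeval_le {p : ℤ[X]} (hn : p.natDegree ≤ n) (hp : ∀ k, |p.coeff k| ≤ H) {z : ℂ} {ϱ : ℝ}
    (hϱ : 1 ≤ ϱ) (hz : ‖z‖ ≤ ϱ) : ‖aeval z p‖ ≤ (n + 1) * (H * ϱ ^ n) := by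
  have hterm (k : ℕ) (hk : k ∈ Finset.range (n + 1)) : ‖p.coeff k • z ^ k‖ ≤ H * ϱ ^ n := by
    have hcoeff : |(p.coeff k : ℝ)| ≤ H := by exact_mod_cast hp k
    have hpow : ‖z‖ ^ k ≤ ϱ ^ n := (pow_le_pow_left₀ (norm_nonneg z) hz k).trans
      (pow_le_pow_right₀ hϱ (Finset.mem_range_succ_iff.mp hk))
    rw [zsmul_eq_mul, norm_mul, Complex.norm_intCast, norm_pow]
    gcongr
    exact (abs_nonneg _).trans hcoeff
  rw [aeval_eq_sum_range' (Nat.lt_succ_of_le hn)]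
  refine (norm_sum_le_of_le _ hterm).trans_eq ?_
  simp

lemma isIntegral_pow_mul_aeval {K : Type*} [Field K] {ω : ℤ} {ρ : K} (hρ : IsIntegral ℤ (ω • ρ))
    {p : ℤ[X]} (hn : p.natDegree ≤ n) : IsIntegral ℤ ((ω : K) ^ n * aeval ρ p) := by
  rw [aeval_eq_sum_range' (Nat.lt_succ_of_le hn), Finset.mul_sum]
  refine IsIntegral.sum _ fun k hk => ?_
  have hterm : (ω : K) ^ n * p.coeff k • ρ ^ k = (p.coeff k * ω ^ (n - k)) • (ω • ρ) ^ k := by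
    simp only [zsmul_eq_mul, mul_pow, Int.cast_mul, Int.cast_pow,
      ← pow_sub_mul_pow (ω : K) (Finset.mem_range_succ_iff.mp hk)]
    ring
  rw [hterm]
  exact (hρ.pow k).smul _

/-- Liouville's inequality: the product of the conjugates is a nonzero integer. -/
lemma one_le_mul_pow_of_isIntegral {K : Type*} [Field K] [NumberField K] (φ : K →ₐ[ℚ] ℂ) {γ : K}
    (hγ : γ ≠ 0) (hint : IsIntegral ℤ γ) {V U : ℝ} (hV : ‖φ γ‖ ≤ V)
    (hU : ∀ σ : K →ₐ[ℚ] ℂ, ‖σ γ‖ ≤ U) : 1 ≤ V * U ^ (Module.finrank ℚ K - 1) := by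
  classical
  obtain ⟨m, hm⟩ := IsIntegrallyClosed.isIntegral_iff.mp (Algebra.isIntegral_norm ℚ hint)
  have hm0 : m ≠ 0 := by
    rintro rfl
    rw [map_zero] at hm
    exact hγ (Algebra.norm_eq_zero_iff.mp hm.symm)
  calc (1 : ℝ) ≤ ‖∏ σ : K →ₐ[ℚ] ℂ, σ γ‖ := by
        rw [← Algebra.norm_eq_prod_embeddings ℚ ℂ γ, ← hm]
        simp only [algebraMap_int_eq, eq_intCast, map_intCast, Complex.norm_intCast]
        exact_mod_cast Int.one_le_abs hm0
    _ = ‖φ γ‖ * ∏ σ ∈ Finset.univ.erase φ, ‖σ γ‖ := by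
        rw [norm_prod, Finset.mul_prod_erase _ (fun σ => ‖σ γ‖) (Finset.mem_univ φ)]
    _ ≤ V * ∏ _σ ∈ Finset.univ.erase φ, U :=
        mul_le_mul hV (Finset.prod_le_prod (fun _ _ => norm_nonneg _) fun σ _ => hU σ)
          (Finset.prod_nonneg fun _ _ => norm_nonneg _) ((norm_nonneg _).trans hV)
    _ = V * U ^ (Module.finrank ℚ K - 1) := by
        rw [Finset.prod_const, Finset.card_erase_of_mem (Finset.mem_univ φ), Finset.card_univ,
          AlgHom.card]

end Heights

/-! ### Siegel's method -/

section Growth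

/-- The nonnegative sequence `u` grows at most like `h ^ (a * h)`, up to a geometric factor. -/
def HasPowGrowth (a : ℕ) (u : ℕ → ℝ) : Prop :=
  ∃ G : ℝ, 1 ≤ G ∧ ∀ h : ℕ, 1 ≤ h → 0 ≤ u h ∧ u h ≤ (G * (h : ℝ) ^ a) ^ h

variable {a b : ℕ} {u v : ℕ → ℝ}

lemma HasPowGrowth.mul (hu : HasPowGrowth a u) (hv : HasPowGrowth b v) :
    HasPowGrowth (a + b) fun h => u h * v h := by
  obtain ⟨G, hG, hu⟩ := hu
  obtain ⟨G', hG', hv⟩ := hv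
  refine ⟨G * G', one_le_mul_of_one_le_of_one_le hG hG', fun h hh =>
    ⟨mul_nonneg (hu h hh).1 (hv h hh).1, ?_⟩⟩
  calc u h * v h ≤ (G * (h : ℝ) ^ a) ^ h * (G' * (h : ℝ) ^ b) ^ h :=
        mul_le_mul (hu h hh).2 (hv h hh).2 (hv h hh).1 (by positivity)
    _ = (G * G' * (h : ℝ) ^ (a + b)) ^ h := by rw [← mul_pow, pow_add]; ring

lemma HasPowGrowth.mono (hu : HasPowGrowth a u) (hv : ∀ h, 1 ≤ h → 0 ≤ v h ∧ v h ≤ u h) :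
    HasPowGrowth a v := by
  obtain ⟨G, hG, hu⟩ := hu
  exact ⟨G, hG, fun h hh => ⟨(hv h hh).1, (hv h hh).2.trans (hu h hh).2⟩⟩

lemma hasPowGrowth_const {c : ℝ} (hc : 0 ≤ c) : HasPowGrowth 0 fun _ => c := by
  refine ⟨max 1 c, le_max_left _ _, fun h hh => ⟨hc, ?_⟩⟩
  rw [pow_zero, mul_one]
  exact (le_max_right 1 c).trans (le_self_pow₀ (le_max_left _ _) (by omega))

lemma HasPowGrowth.pow (hu : HasPowGrowth a u) (k : ℕ) :
    HasPowGrowth (a * k) fun h => u h ^ k := by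
  induction k with
  | zero => simpa using hasPowGrowth_const zero_le_one
  | succ k ih => simpa only [pow_succ, Nat.mul_succ] using ih.mul hu

lemma hasPowGrowth_const_pow {c : ℝ} (hc : 0 ≤ c) (α β : ℕ) :
    HasPowGrowth 0 fun h => c ^ (α * h + β) := by
  refine ⟨max 1 c ^ (α + β), one_le_pow₀ (le_max_left _ _), fun h hh => ⟨by positivity, ?_⟩⟩
  rw [pow_zero, mul_one, ← pow_mul]
  calc c ^ (α * h + β) ≤ max 1 c ^ (α * h + β) := by
        gcongr
        exact le_max_right _ _
    _ ≤ max 1 c ^ ((α + β) * h) := pow_le_pow_right₀ (le_max_left _ _) (by nlinarith)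

lemma hasPowGrowth_linear (α β : ℕ) : HasPowGrowth 0 fun h => ((α * h + β : ℕ) : ℝ) := by
  refine (hasPowGrowth_const_pow (c := (α + β + 2 : ℕ)) (by positivity) 1 1).mono
    fun h hh => ⟨by positivity, ?_⟩
  have hpow : h < (α + β + 2) ^ h := Nat.lt_pow_self (by omega)
  have hle : α * h + β ≤ (α + β + 2) ^ (1 * h + 1) := by
    rw [one_mul, pow_succ]
    nlinarith
  exact_mod_cast hle

lemma hasPowGrowth_linear_pow_linear (α β γ η : ℕ) :
    HasPowGrowth γ fun h => ((α * h + β : ℕ) : ℝ) ^ (γ * h + η) := by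
  have hpow : HasPowGrowth γ fun h : ℕ => ((α * h + β : ℕ) : ℝ) ^ (γ * h) := by
    refine ⟨((α + β + 1 : ℕ) : ℝ) ^ γ, one_le_pow₀ (by norm_cast; omega), fun h hh =>
      ⟨by positivity, ?_⟩⟩
    have hle : α * h + β ≤ (α + β + 1) * h := by nlinarith
    beta_reduce
    rw [← mul_pow, pow_mul]
    gcongr
    exact_mod_cast hle
  simpa only [pow_add, Nat.add_zero, Nat.zero_mul] using
    hpow.mul ((hasPowGrowth_linear α β).pow η)

lemma HasPowGrowth.exists_lt_factorial (hu : HasPowGrowth a u) {μ : ℕ} (haμ : a < μ) (h₀ : ℕ) :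
    ∃ h, h₀ ≤ h ∧ u h < ((μ * h).factorial : ℝ) := by
  obtain ⟨G, hG, hu⟩ := hu
  obtain ⟨h, hh⟩ := exists_nat_gt (G * Real.exp μ + h₀ + 1)
  have hGpos : 0 < G * Real.exp μ := by positivity
  have hh₀ : h₀ ≤ h := by exact_mod_cast (by linarith : (h₀ : ℝ) ≤ h)
  have hh1 : (1 : ℝ) ≤ h := by linarith [h₀.cast_nonneg (α := ℝ)]
  refine ⟨h, hh₀, lt_of_mul_lt_mul_left ?_ (Real.exp_pos (μ * h : ℕ)).le⟩
  have hbase : Real.exp μ * (G * (h : ℝ) ^ a) < (h : ℝ) ^ μ :=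
    calc Real.exp μ * (G * (h : ℝ) ^ a) = G * Real.exp μ * (h : ℝ) ^ a := by ring
      _ < h * (h : ℝ) ^ a := by
          gcongr
          linarith [h₀.cast_nonneg (α := ℝ)]
      _ = (h : ℝ) ^ (a + 1) := by ring
      _ ≤ (h : ℝ) ^ μ := pow_le_pow_right₀ hh1 haμ
  have hh0 : h ≠ 0 := by
    rintro rfl
    norm_num at hh1
  calc Real.exp (μ * h : ℕ) * u h ≤ Real.exp (μ * h : ℕ) * (G * (h : ℝ) ^ a) ^ h := by
        gcongr
        exact (hu h (Nat.one_le_iff_ne_zero.mpr hh0)).2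
    _ = (Real.exp μ * (G * (h : ℝ) ^ a)) ^ h := by
        rw [mul_pow (Real.exp μ), ← Real.exp_nat_mul, Nat.cast_mul, mul_comm (μ : ℝ)]
    _ < ((h : ℝ) ^ μ) ^ h := pow_lt_pow_left₀ hbase (by positivity) hh0
    _ ≤ ((μ * h : ℕ) : ℝ) ^ (μ * h) := by
        rw [← pow_mul]
        gcongr
        exact Nat.le_mul_of_pos_left h (by omega)
    _ ≤ Real.exp (μ * h : ℕ) * (μ * h).factorial := by
        have hexp := Real.pow_div_factorial_le_exp ((μ * h : ℕ) : ℝ) (by positivity) (μ * h)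
        rwa [div_le_iff₀ (by positivity)] at hexp

end Growth

section FormValueBounds

variable {K : Type*} [Field K] {ι : Type*} [Fintype ι] {A : Matrix ι ι ℤ[X]} {P : ι → ℤ[X]}
  {ρ : K} {w : ι → K}

lemma isIntegral_pow_mul_formValue {ω : ℤ} (hρ : IsIntegral ℤ (ω • ρ))
    (hw : ∀ i, IsIntegral ℤ (ω • w i)) {a n m t : ℕ} (hA : ∀ i j, (A i j).natDegree ≤ a)
    (hn : ∀ i, (P i).natDegree ≤ n) (ht : t ≤ m) :
    IsIntegral ℤ ((ω : K) ^ (n + a * m + 1) * formValue A ρ w P t) := by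
  rw [formValue, Finset.mul_sum]
  refine IsIntegral.sum _ fun i _ => ?_
  have hdeg : ((dualDeriv (eulerPoly ℤ) A)^[t] P i).natDegree ≤ n + a * m :=
    (natDegree_dualDeriv_iterate_le hA hn t i).trans (by gcongr)
  rw [pow_succ, mul_mul_mul_comm, ← zsmul_eq_mul]
  exact (isIntegral_pow_mul_aeval hρ hdeg).mul (hw i)

/-- The bound for the conjugates of the value of an auxiliary form differentiated at most `m`
times, in terms of the height `H` of the form and the bound `N` for the degrees. -/
def houseBound (M L N m H : ℕ) (ϱ : ℝ) : ℝ :=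
  M * ((N + 1) * (((N + L : ℕ) : ℝ) ^ m * H * ϱ ^ N) * ϱ)

/-- The bound, up to the factor `(T - n)!`, for the value of an auxiliary form of height `H` which
vanishes to order `T` at the origin and is differentiated at most `m` times. The function values
are the coordinates of a point of the number field, multiplied by a number of absolute value
`ε`. -/
noncomputable def valueBound (M B H n T m : ℕ) (ϱ ε : ℝ) : ℝ :=
  M * (n + 1) * H * B * (T : ℝ) ^ m * (B * ϱ) ^ T * Real.exp (Real.exp 1 * (B * ϱ)) / ε

variable [CharZero K]

lemma map_formValue (σ : K →ₐ[ℚ] ℂ) (t : ℕ) : σ (formValue A ρ w P t) =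
    ∑ i, aeval (σ ρ) ((dualDeriv (eulerPoly ℤ) A)^[t] P i) * σ (w i) := by
  simp only [formValue, map_sum, map_mul]
  exact Finset.sum_congr rfl fun i _ => congrArg (· * σ (w i))
    (aeval_algHom_apply (σ.restrictScalars ℤ) ρ _).symm

lemma norm_map_formValue_le {a L n H m t : ℕ} (hA : ∀ i j, (A i j).natDegree ≤ a)
    (hL : ∀ j, ∑ i, coeffLength (A i j) ≤ (L : ℤ)) (hn : ∀ i, (P i).natDegree ≤ n)
    (hH : ∀ i k, |(P i).coeff k| ≤ (H : ℤ)) {σ : K →ₐ[ℚ] ℂ} {ϱ : ℝ} (hϱ : 1 ≤ ϱ)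
    (hρ : ‖σ ρ‖ ≤ ϱ) (hw : ∀ i, ‖σ (w i)‖ ≤ ϱ) (hpos : 0 < n) (ht : t ≤ m) :
    ‖σ (formValue A ρ w P t)‖ ≤ houseBound (Fintype.card ι) L (n + a * m) m H ϱ := by
  have hdeg (i : ι) : ((dualDeriv (eulerPoly ℤ) A)^[t] P i).natDegree ≤ n + a * m :=
    (natDegree_dualDeriv_iterate_le hA hn t i).trans (by gcongr)
  have hcoeff (i : ι) (k : ℕ) : |((dualDeriv (eulerPoly ℤ) A)^[t] P i).coeff k| ≤
      (((n + a * m + L) ^ m * H : ℕ) : ℤ) := by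
    refine (abs_coeff_dualDeriv_iterate_le hL hA hn hH t i k).trans ?_
    have hpow : (n + a * t + L) ^ t ≤ (n + a * m + L) ^ m :=
      (Nat.pow_le_pow_left (by gcongr) t).trans (Nat.pow_le_pow_right (by omega) ht)
    exact_mod_cast Nat.mul_le_mul_right H hpow
  have hterm (i : ι) (_ : i ∈ Finset.univ) :
      ‖aeval (σ ρ) ((dualDeriv (eulerPoly ℤ) A)^[t] P i) * σ (w i)‖ ≤
        ((n + a * m : ℕ) + 1) * (((n + a * m + L : ℕ) : ℝ) ^ m * H * ϱ ^ (n + a * m)) * ϱ := by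
    rw [norm_mul]
    refine mul_le_mul ?_ (hw i) (norm_nonneg _) (by positivity)
    exact_mod_cast norm_aeval_le (hdeg i) (hcoeff i) hϱ hρ
  rw [map_formValue, houseBound]
  refine (norm_sum_le_of_le _ hterm).trans_eq ?_
  rw [Finset.sum_const, Finset.card_univ, nsmul_eq_mul]

variable {Y : ι → PowerSeries ℚ} {D B : ℕ} {φ : K →ₐ[ℚ] ℂ} {c : ℂ}

lemma mul_map_formValue_eq_psEval (hY : ∀ i, eulerPS ℚ (Y i) = ∑ j, A i j • Y j)
    (hconv : ∀ i, Y i ∈ absConvergent (φ ρ)) (hval : ∀ i, psEval (φ ρ) (Y i) = c * φ (w i))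
    (t : ℕ) : c * φ (formValue A ρ w P t) =
      psEval (φ ρ) ((eulerPS ℚ)^[t] (∑ i, P i • Y i)) := by
  rw [derivation_iterate_sum_smul algebraMap_eulerPoly hY, psEval_sum_int_smul hconv,
    map_formValue, Finset.mul_sum]
  refine Finset.sum_congr rfl fun i _ => ?_
  rw [hval, mul_left_comm]

lemma norm_map_formValue_le_div_factorial (hD : 0 < D) (hB : 0 < B)
    (hE : ∀ i, IsEType D B (Y i)) (hY : ∀ i, eulerPS ℚ (Y i) = ∑ j, A i j • Y j) (hc : c ≠ 0)
    (hval : ∀ i, psEval (φ ρ) (Y i) = c * φ (w i)) {n H T m t : ℕ}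
    (hn : ∀ i, (P i).natDegree ≤ n) (hH : ∀ i k, |(P i).coeff k| ≤ (H : ℤ))
    (hvan : PowerSeries.X ^ T ∣ ∑ i, P i • Y i) {ϱ : ℝ} (hρ : ‖φ ρ‖ ≤ ϱ) (hT : 0 < T)
    (hnT : n ≤ T) (hmT : m ≤ T) (ht : t ≤ m) :
    ‖φ (formValue A ρ w P t)‖ ≤
      valueBound (Fintype.card ι) B H n T m ϱ ‖c‖ / (T - n).factorial := by
  have hT1 : (1 : ℝ) ≤ T := by exact_mod_cast hT
  have hϱ : 0 ≤ ϱ := (norm_nonneg _).trans hρ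
  have hsmall := norm_psEval_eulerPS_iterate_le hT (ht.trans hmT) hnT (by positivity)
    B.cast_nonneg hρ hvan fun s hs => norm_coeff_sum_int_smul_le hD hB hE hn hH hs
  rw [← mul_map_formValue_eq_psEval hY (fun i => (hE i).mem_absConvergent hD _) hval, norm_mul]
    at hsmall
  rw [valueBound, div_right_comm, le_div_iff₀ (norm_pos_iff.mpr hc), mul_comm,
    ← div_mul_eq_mul_div]
  refine hsmall.trans ?_
  gcongr

end FormValueBounds

section Siegel

lemma exists_natDegree_le {ι : Type*} [Finite ι] (A : Matrix ι ι ℤ[X]) :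
    ∃ a, ∀ i j, (A i j).natDegree ≤ a := by
  obtain ⟨a, ha⟩ := (Set.finite_range fun p : ι × ι => (A p.1 p.2).natDegree).bddAbove
  exact ⟨a, fun i j => ha ⟨(i, j), rfl⟩⟩

lemma exists_sum_coeffLength_le {ι : Type*} [Fintype ι] (A : Matrix ι ι ℤ[X]) :
    ∃ L : ℕ, ∀ j, ∑ i, coeffLength (A i j) ≤ (L : ℤ) := by
  obtain ⟨L, hL⟩ := (Set.finite_range fun j => (∑ i, coeffLength (A i j)).toNat).bddAbove
  exact ⟨L, fun j => (Int.self_le_toNat _).trans (by exact_mod_cast hL ⟨j, rfl⟩)⟩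

lemma exists_house_le {ι K : Type*} [Finite ι] [Field K] [NumberField K] (ρ : K) (w : ι → K) :
    ∃ ϱ : ℝ, 1 ≤ ϱ ∧ (∀ σ : K →ₐ[ℚ] ℂ, ‖σ ρ‖ ≤ ϱ) ∧ ∀ (σ : K →ₐ[ℚ] ℂ) i, ‖σ (w i)‖ ≤ ϱ := by
  obtain ⟨ϱ₁, hϱ₁⟩ := (Set.finite_range fun σ : K →ₐ[ℚ] ℂ => ‖σ ρ‖).bddAbove
  obtain ⟨ϱ₂, hϱ₂⟩ := (Set.finite_range fun p : (K →ₐ[ℚ] ℂ) × ι => ‖p.1 (w p.2)‖).bddAbove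
  exact ⟨max 1 (max ϱ₁ ϱ₂), le_max_left _ _, fun σ => le_max_of_le_right
    (le_max_of_le_left (hϱ₁ ⟨σ, rfl⟩)), fun σ i => le_max_of_le_right
    (le_max_of_le_right (hϱ₂ ⟨(σ, i), rfl⟩))⟩

lemma hasPowGrowth_auxHeight (M D B γ τ q : ℕ) :
    HasPowGrowth (γ * q) fun h => (auxHeight M D B (γ * h) (τ * h) q : ℝ) := by
  have hprod := ((hasPowGrowth_linear (M * γ) M).mul
    (((hasPowGrowth_const_pow D.cast_nonneg γ 0).mul (hasPowGrowth_linear_pow_linear τ 0 γ 0)).mul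
      (hasPowGrowth_const_pow B.cast_nonneg τ 0))).pow q
  simp only [Nat.add_zero, Nat.zero_add] at hprod
  refine hprod.mono fun h _ => ⟨by positivity, le_of_eq ?_⟩
  rw [auxHeight]
  push_cast
  ring

lemma HasPowGrowth.valueBound {b : ℕ} {H : ℕ → ℕ} (hH : HasPowGrowth b fun h => (H h : ℝ))
    {ϱ ε : ℝ} (hϱ : 0 ≤ ϱ) (hε : 0 ≤ ε) (M B γ τ μ η : ℕ) : HasPowGrowth (b + μ) fun h =>
      valueBound M B (H h) (γ * h) (τ * h) (μ * h + η) ϱ ε := by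
  have hprod := ((((hasPowGrowth_linear (M * γ) M).mul hH).mul (hasPowGrowth_const
    (c := B * Real.exp (Real.exp 1 * (B * ϱ)) / ε) (by positivity))).mul
    (hasPowGrowth_linear_pow_linear τ 0 μ η)).mul
    (hasPowGrowth_const_pow (c := B * ϱ) (by positivity) τ 0)
  simp only [Nat.add_zero, Nat.zero_add] at hprod
  refine hprod.mono fun h _ => ⟨by rw [_root_.valueBound]; positivity, le_of_eq ?_⟩
  rw [_root_.valueBound]
  push_cast
  ring

lemma HasPowGrowth.houseBound {b : ℕ} {H : ℕ → ℕ} (hH : HasPowGrowth b fun h => (H h : ℝ))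
    {ϱ : ℝ} (hϱ : 0 ≤ ϱ) (M L ν κ μ η : ℕ) : HasPowGrowth (b + μ) fun h =>
      houseBound M L (ν * h + κ) (μ * h + η) (H h) ϱ := by
  have hprod := ((((hasPowGrowth_linear ν (κ + 1)).mul (hasPowGrowth_const (c := M * ϱ)
    (by positivity))).mul hH).mul (hasPowGrowth_linear_pow_linear ν (κ + L) μ η)).mul
    (hasPowGrowth_const_pow hϱ ν κ)
  simp only [Nat.add_zero, Nat.zero_add] at hprod
  refine hprod.mono fun h _ => ⟨by rw [_root_.houseBound]; positivity, le_of_eq ?_⟩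
  rw [_root_.houseBound]
  push_cast
  ring

lemma siegel_exponent_lt {δ M : ℕ} (hδ : 1 ≤ δ) (hM : (δ + 2) * (δ ^ 2 + δ + 1) < M) :
    (δ + 2) * (δ + 1) + M + ((δ + 2) * (δ + 1) + M) * (δ - 1) < M * (δ + 1) - (δ + 2) := by
  obtain ⟨k, rfl⟩ := Nat.exists_eq_add_of_le' hδ
  rw [Nat.add_sub_cancel, Nat.lt_sub_iff_add_lt]
  nlinarith

variable {ι : Type*} [Fintype ι] {A : Matrix ι ι ℤ[X]} {Y : ι → PowerSeries ℚ} {D B : ℕ}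
  {K : Type*} [Field K] [NumberField K] {φ : K →ₐ[ℚ] ℂ} {ρ : K} {w : ι → K} {c : ℂ}

/-- The value of an auxiliary form is small, whereas it is a nonzero algebraic number of controlled
height. -/
lemma factorial_le_of_auxiliary_form (hD : 0 < D) (hB : 0 < B) (hE : ∀ i, IsEType D B (Y i))
    (hY : ∀ i, eulerPS ℚ (Y i) = ∑ j, A i j • Y j) (hc : c ≠ 0)
    (hval : ∀ i, psEval (φ ρ) (Y i) = c * φ (w i)) {a L : ℕ}
    (hA : ∀ i j, (A i j).natDegree ≤ a) (hL : ∀ j, ∑ i, coeffLength (A i j) ≤ (L : ℤ))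
    {ω : ℤ} (hω : ω ≠ 0) (hωρ : IsIntegral ℤ (ω • ρ)) (hωw : ∀ i, IsIntegral ℤ (ω • w i))
    {ϱ : ℝ} (hϱ : 1 ≤ ϱ) (hρϱ : ∀ σ : K →ₐ[ℚ] ℂ, ‖σ ρ‖ ≤ ϱ)
    (hwϱ : ∀ (σ : K →ₐ[ℚ] ℂ) i, ‖σ (w i)‖ ≤ ϱ) {n T q m : ℕ} (hn : 0 < n) (hnT : n ≤ T)
    (hmT : m ≤ T) (hlt : T < Fintype.card ι * (n + 1))
    (hq : T ≤ q * (Fintype.card ι * (n + 1) - T))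
    (hzero : ∀ P : ι → ℤ[X], P ≠ 0 → (∀ i, (P i).natDegree ≤ n) →
      PowerSeries.X ^ T ∣ ∑ i, P i • Y i → ∃ t ≤ m, formValue A ρ w P t ≠ 0) :
    ((T - n).factorial : ℝ) ≤
      |(ω : ℝ)| ^ (n + a * m + 1) * valueBound (Fintype.card ι) B
        (auxHeight (Fintype.card ι) D B n T q) n T m ϱ ‖c‖ *
      (|(ω : ℝ)| ^ (n + a * m + 1) * houseBound (Fintype.card ι) L (n + a * m) m
        (auxHeight (Fintype.card ι) D B n T q) ϱ) ^ (Module.finrank ℚ K - 1) := by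
  obtain ⟨P, hP0, hPn, hPH, hPT⟩ := exists_auxiliary_form hD hB hE (hn.trans_le hnT) hlt hq
  obtain ⟨t, htm, ht⟩ := hzero P hP0 hPn hPT
  have hnorm (σ : K →ₐ[ℚ] ℂ) : ‖σ ((ω : K) ^ (n + a * m + 1) * formValue A ρ w P t)‖ =
      |(ω : ℝ)| ^ (n + a * m + 1) * ‖σ (formValue A ρ w P t)‖ := by
    rw [map_mul, map_pow, map_intCast, norm_mul, norm_pow, Complex.norm_intCast]
  have hsmall := norm_map_formValue_le_div_factorial hD hB hE hY hc hval hPn hPH hPT (hρϱ φ)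
    (hn.trans_le hnT) hnT hmT htm
  have hhouse (σ : K →ₐ[ℚ] ℂ) :=
    norm_map_formValue_le hA hL hPn hPH hϱ (hρϱ σ) (hwϱ σ) hn htm
  have hliouville := one_le_mul_pow_of_isIntegral φ
    (mul_ne_zero (pow_ne_zero _ (Int.cast_ne_zero.mpr hω)) ht)
    (isIntegral_pow_mul_formValue hωρ hωw hA hPn htm)
    ((hnorm φ).trans_le (mul_le_mul_of_nonneg_left hsmall (by positivity)))
    (fun σ => (hnorm σ).trans_le (mul_le_mul_of_nonneg_left (hhouse σ) (by positivity)))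
  rwa [← mul_div_assoc, div_mul_eq_mul_div, le_div_iff₀ (by positivity), one_mul] at hliouville

/-- With `M` functions, take forms of degree `(δ + 2) * h` that vanish to order `M * (δ + 1) * h`
at the origin. By the zero estimate, some derivative of order at most `M * h + c₁` does not
vanish at the point, and for large `h` the two sides of `factorial_le_of_auxiliary_form`
contradict each other. -/
theorem siegel_method (hD : 0 < D) (hB : 0 < B) (hE : ∀ i, IsEType D B (Y i))
    (hY : ∀ i, eulerPS ℚ (Y i) = ∑ j, A i j • Y j) (hc : c ≠ 0)
    (hval : ∀ i, psEval (φ ρ) (Y i) = c * φ (w i)) {δ : ℕ} (hδ : Module.finrank ℚ K = δ)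
    (hcard : (δ + 2) * (δ ^ 2 + δ + 1) < Fintype.card ι) {c₁ : ℕ}
    (hzero : ∀ (P : ι → ℤ[X]) (n T t : ℕ), P ≠ 0 → (∀ i, (P i).natDegree ≤ n) →
      PowerSeries.X ^ T ∣ ∑ i, P i • Y i → (∀ k < t, formValue A ρ w P k = 0) →
      T + t ≤ Fintype.card ι * n + c₁) : False := by
  classical
  set M := Fintype.card ι with hM
  obtain ⟨a, hA⟩ := exists_natDegree_le A
  obtain ⟨L, hL⟩ := exists_sum_coeffLength_le A
  obtain ⟨ω, hω, hωi⟩ := exists_integral_multiples ℤ ℚ (insert ρ (Finset.univ.image w))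
  obtain ⟨ϱ, hϱ, hρϱ, hwϱ⟩ := exists_house_le ρ w
  have hδ1 : 1 ≤ δ := hδ ▸ Module.finrank_pos
  have hM1 : δ + 2 < M := by nlinarith
  have hH := hasPowGrowth_auxHeight M D B (δ + 2) (M * (δ + 1)) (δ + 1)
  have hω_pow := hasPowGrowth_const_pow (abs_nonneg (ω : ℝ)) (δ + 2 + a * M) (a * c₁ + 1)
  obtain ⟨h, hh, hlt⟩ := ((hω_pow.mul (hH.valueBound (zero_le_one.trans hϱ) (norm_nonneg c) M B
      (δ + 2) (M * (δ + 1)) M c₁)).mul ((hω_pow.mul (hH.houseBound (zero_le_one.trans hϱ) M L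
        (δ + 2 + a * M) (a * c₁) M c₁)).pow (δ - 1))).exists_lt_factorial
      (by simpa only [Nat.zero_add] using siegel_exponent_lt hδ1 hcard) (c₁ + 1)
  have hnT : (δ + 2) * h ≤ M * (δ + 1) * h := Nat.mul_le_mul_right h (by nlinarith)
  have hmT : M * h + c₁ ≤ M * (δ + 1) * h :=
    calc M * h + c₁ ≤ M * 2 * h := by nlinarith
      _ ≤ M * (δ + 1) * h := by gcongr; omega
  have hdefect : M * ((δ + 2) * h + 1) - M * (δ + 1) * h = M * (h + 1) :=
    Nat.sub_eq_of_eq_add (by ring)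
  have hle := factorial_le_of_auxiliary_form (n := (δ + 2) * h) (T := M * (δ + 1) * h)
    (q := δ + 1) (m := M * h + c₁) hD hB hE hY hc hval hA hL hω (hωi _ (by simp))
    (fun i => hωi _ (by simp)) hϱ hρϱ hwϱ (by nlinarith) hnT hmT (by nlinarith)
    (by rw [← hM, hdefect]; nlinarith) fun P hP hPn hPT => by
      by_contra! hvan
      have := hzero P _ _ (M * h + c₁ + 1) hP hPn hPT fun k hk => hvan k (by omega)
      nlinarith
  have hN : (δ + 2) * h + a * (M * h + c₁) = (δ + 2 + a * M) * h + a * c₁ := by ring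
  rw [hδ, ← Nat.sub_mul, hN] at hle
  exact hlt.not_ge hle

end Siegel

/-! ### The Hermite–Lindemann theorem -/

section DiagonalSystem

lemma coeff_prod_sum_of_natDegree_le {R ι : Type*} [CommRing R] (s : Finset ι) {f : ι → R[X]}
    {n : ι → ℕ} (h : ∀ i ∈ s, (f i).natDegree ≤ n i) :
    (∏ i ∈ s, f i).coeff (∑ i ∈ s, n i) = ∏ i ∈ s, (f i).coeff (n i) := by
  classical
  induction s using Finset.induction_on with
  | empty => simp
  | insert a s ha ih =>
    have hs (i : ι) (hi : i ∈ s) := h i (Finset.mem_insert_of_mem hi)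
    rw [Finset.prod_insert ha, Finset.sum_insert ha, Finset.prod_insert ha,
      coeff_mul_add_eq_of_natDegree_le (h a (Finset.mem_insert_self a s))
        ((natDegree_prod_le s f).trans (Finset.sum_le_sum hs)), ih hs]

lemma coeff_det_of_natDegree_le {R ι : Type*} [CommRing R] [Fintype ι] [DecidableEq ι]
    {M : Matrix ι ι R[X]} {r s : ι → ℕ} (h : ∀ i j, (M i j).natDegree ≤ r i + s j) :
    M.det.coeff (∑ i, r i + ∑ j, s j) =
      (Matrix.of fun i j => (M i j).coeff (r i + s j)).det := by
  rw [Matrix.det_apply', Matrix.det_apply', finsetSum_coeff]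
  refine Finset.sum_congr rfl fun σ _ => ?_
  have hdeg : ∑ i, r i + ∑ j, s j = ∑ j, (r (σ j) + s j) := by
    rw [Finset.sum_add_distrib, Equiv.sum_comp σ r]
  rw [hdeg, coeff_intCast_mul, coeff_prod_sum_of_natDegree_le _ fun j _ => h (σ j) j]
  rfl

lemma dualDeriv_diagonal_iterate {R S ι : Type*} [CommRing R] [CommRing S] [Algebra R S]
    [Fintype ι] [DecidableEq ι] (d : Derivation R S S) (v : ι → S) (P : ι → S) (k : ℕ) (j : ι) :
    (dualDeriv d (Matrix.diagonal v))^[k] P j = (fun p => d p + p * v j)^[k] (P j) := by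
  induction k generalizing P with
  | zero => rfl
  | succ k ih =>
    rw [Function.iterate_succ_apply, Function.iterate_succ_apply, ih]
    congr 1
    simp [dualDeriv_apply, Matrix.diagonal_apply]

lemma natDegree_iterate_eulerPoly_add_mul_X_le (v : ℤ) (p : ℤ[X]) (k : ℕ) :
    ((fun p => eulerPoly ℤ p + p * (C v * X))^[k] p).natDegree ≤ k + p.natDegree := by
  induction k with
  | zero => simp
  | succ k ih =>
    rw [Function.iterate_succ_apply']
    refine (natDegree_add_le _ _).trans (max_le ?_ ?_)
    · exact (natDegree_eulerPoly_le _).trans (ih.trans (by omega))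
    · have hvX := (natDegree_C_mul_le v X).trans natDegree_X_le
      exact (natDegree_mul_le.trans (add_le_add ih hvX)).trans (by omega)

lemma coeff_iterate_eulerPoly_add_mul_X (v : ℤ) (p : ℤ[X]) (k : ℕ) :
    ((fun p => eulerPoly ℤ p + p * (C v * X))^[k] p).coeff (k + p.natDegree) =
      v ^ k * p.leadingCoeff := by
  induction k with
  | zero => simp
  | succ k ih =>
    have hdeg := natDegree_iterate_eulerPoly_add_mul_X_le v p k
    rw [Function.iterate_succ_apply', Nat.add_right_comm, coeff_add, coeff_eulerPoly,
      coeff_eq_zero_of_natDegree_lt (Nat.lt_succ_of_le hdeg), ← mul_assoc, mul_comm _ (C v),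
      coeff_mul_X, coeff_C_mul, ih]
    ring

variable {ι : Type*} [Fintype ι] [DecidableEq ι] {P : ι → ℤ[X]}

lemma det_dualDeriv_diagonal_ne_zero {v : ι → ℤ} (hv : Function.Injective v)
    (hP : ∀ i, P i ≠ 0) (e : ι ≃ Fin (Fintype.card ι)) :
    (Matrix.of fun i =>
      (dualDeriv (eulerPoly ℤ) (Matrix.diagonal fun i => C (v i) * X))^[(e i : ℕ)] P).det ≠ 0 := by
  have hvandermonde : (Matrix.of fun i j => v j ^ (e i : ℕ)).det ≠ 0 := by
    have heq : (Matrix.of fun i j => v j ^ (e i : ℕ)) =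
        (Matrix.vandermonde (v ∘ e.symm)).transpose.submatrix e e := by
      ext i j
      simp [Matrix.vandermonde]
    rw [heq, Matrix.det_submatrix_equiv_self, Matrix.det_transpose,
      Matrix.det_vandermonde_ne_zero_iff]
    exact hv.comp e.symm.injective
  intro hdet
  have hcoeff := coeff_det_of_natDegree_le (r := fun i => (e i : ℕ))
    (s := fun j => (P j).natDegree) (M := Matrix.of fun i =>
      (dualDeriv (eulerPoly ℤ) (Matrix.diagonal fun i => C (v i) * X))^[(e i : ℕ)] P) fun i j => by
    rw [Matrix.of_apply, dualDeriv_diagonal_iterate]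
    exact natDegree_iterate_eulerPoly_add_mul_X_le (v j) (P j) (e i)
  simp only [hdet, coeff_zero, Matrix.of_apply, dualDeriv_diagonal_iterate,
    coeff_iterate_eulerPoly_add_mul_X, mul_comm _ (leadingCoeff _)] at hcoeff
  have hprod := hcoeff.trans
    (Matrix.det_mul_row (fun j => (P j).leadingCoeff) (Matrix.of fun i j => v j ^ (e i : ℕ)))
  exact mul_ne_zero (Finset.prod_ne_zero_iff.mpr fun j _ => leadingCoeff_ne_zero.mpr (hP j))
    hvandermonde hprod.symm

end DiagonalSystem

section HermiteLindemann

lemma eulerPS_exp_pow (m : ℕ) :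
    eulerPS ℚ (PowerSeries.exp ℚ ^ m) = (C (m : ℤ) * X) • PowerSeries.exp ℚ ^ m := by
  rcases m.eq_zero_or_pos with rfl | hm
  · simp [eulerPS]
  rw [eulerPS, Derivation.smul_apply, Derivation.leibniz_pow, PowerSeries.derivative_exp,
    smul_eq_mul, smul_eq_mul, ← pow_succ, Nat.sub_add_cancel hm, Algebra.smul_def]
  simp [algebraMap_X_powerSeries, mul_assoc, mul_left_comm]

lemma isEType_exp_pow {m M : ℕ} (hm : m ≤ M) (hM : 0 < M) :
    IsEType 1 M (PowerSeries.exp ℚ ^ m) := by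
  refine fun k => ⟨(m : ℤ) ^ k, ?_, ?_⟩
  · rw [abs_pow, Nat.abs_cast]
    exact_mod_cast (Nat.pow_le_pow_left hm k).trans (Nat.pow_le_pow_right hM k.le_succ)
  · simp [PowerSeries.exp_pow_eq_rescale_exp, PowerSeries.coeff_rescale, PowerSeries.coeff_exp,
      div_eq_mul_inv]

lemma psEval_exp (x : ℂ) : psEval x (PowerSeries.exp ℚ) = Complex.exp x := by
  rw [Complex.exp_eq_exp_ℂ, NormedSpace.exp_eq_tsum_div]
  refine tsum_congr fun k => ?_
  simp [PowerSeries.coeff_exp, div_eq_inv_mul]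

lemma psEval_exp_pow (x : ℂ) (m : ℕ) :
    psEval x (PowerSeries.exp ℚ ^ m) = Complex.exp x ^ m := by
  rw [psEval_pow, psEval_exp]
  have hmem := (isEType_exp_pow (m := 1) le_rfl one_pos).mem_absConvergent one_pos x
  rwa [pow_one] at hmem

variable {K : Type*} [Field K] [CharZero K]

lemma diagonal_system_exp {ι : Type*} [Fintype ι] [DecidableEq ι] (v : ι → ℕ) (i : ι) :
    eulerPS ℚ (PowerSeries.exp ℚ ^ v i) =
      ∑ j, Matrix.diagonal (fun i => C (v i : ℤ) * X) i j • PowerSeries.exp ℚ ^ v j := by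
  rw [eulerPS_exp_pow, Finset.sum_eq_single i (fun j _ hj => by
    rw [Matrix.diagonal_apply_ne' _ hj, zero_smul]) (by simp), Matrix.diagonal_apply_eq]

lemma zero_estimate_exp_of_ne_zero {ι : Type*} [Fintype ι] [DecidableEq ι] [Nonempty ι]
    {v : ι → ℕ} (hv : Function.Injective v) {P : ι → ℤ[X]} (hP : ∀ i, P i ≠ 0) {ρ : K}
    (hρ : ρ ≠ 0) {w : ι → K} (hw : ∀ i, w i ≠ 0) {n T t : ℕ} (hn : ∀ i, (P i).natDegree ≤ n)
    (hT : PowerSeries.X ^ T ∣ ∑ i, P i • PowerSeries.exp ℚ ^ v i)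
    (ht : ∀ k < t, formValue (Matrix.diagonal fun i => C (v i : ℤ) * X) ρ w P k = 0) :
    T + t ≤ Fintype.card ι * (n + Fintype.card ι) + Fintype.card ι := by
  obtain ⟨i₀⟩ := ‹Nonempty ι›
  have hle := zero_estimate_int (a := 1) (o := 0) (j₀ := i₀) hρ (fun i j => ?_) hn
    (fun i => (Fintype.equivFin ι i).2.le) (det_dualDeriv_diagonal_ne_zero
      (Nat.cast_injective.comp hv) hP (Fintype.equivFin ι)) (diagonal_system_exp v) ?_ hT
    (hw i₀) ht
  · simpa using hle
  · rcases eq_or_ne i j with rfl | hij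
    · rw [Matrix.diagonal_apply_eq]
      exact (natDegree_C_mul_le _ _).trans natDegree_X_le
    · rw [Matrix.diagonal_apply_ne _ hij]
      simp
  · simp

lemma zero_estimate_exp {ι : Type*} [Fintype ι] [DecidableEq ι] {v : ι → ℕ}
    (hv : Function.Injective v) {P : ι → ℤ[X]} (hP : P ≠ 0) {ρ : K} (hρ : ρ ≠ 0) {w : ι → K}
    (hw : ∀ i, w i ≠ 0) {n T t : ℕ} (hn : ∀ i, (P i).natDegree ≤ n)
    (hT : PowerSeries.X ^ T ∣ ∑ i, P i • PowerSeries.exp ℚ ^ v i)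
    (ht : ∀ k < t, formValue (Matrix.diagonal fun i => C (v i : ℤ) * X) ρ w P k = 0) :
    T + t ≤ Fintype.card ι * (n + Fintype.card ι) + Fintype.card ι := by
  classical
  let S := {i // P i ≠ 0}
  obtain ⟨i₀, hi₀⟩ := Function.ne_iff.mp hP
  have : Nonempty S := ⟨⟨i₀, hi₀⟩⟩
  have hS : Fintype.card S ≤ Fintype.card ι := Fintype.card_subtype_le _
  have hzero {i : ι} (hi : i ∉ Set.range (Subtype.val : S → ι)) : P i = 0 := by simpa [S] using hi
  have hT' : PowerSeries.X ^ T ∣ ∑ i : S, P i • PowerSeries.exp ℚ ^ v i := by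
    rwa [Fintype.sum_of_injective _ Subtype.val_injective _
      (fun i => P i • PowerSeries.exp ℚ ^ v i)
      (fun i hi => by rw [hzero hi, zero_smul]) fun _ => rfl]
  have ht' (k : ℕ) (hk : k < t) : formValue (Matrix.diagonal fun i : S => C (v i : ℤ) * X) ρ
      (fun i => w i) (fun i => P i) k = 0 := by
    rw [← ht k hk, formValue, formValue]
    refine Fintype.sum_of_injective _ Subtype.val_injective _ _ (fun i hi => ?_) fun i => ?_
    · rw [dualDeriv_diagonal_iterate, hzero hi, Function.iterate_fixed (by simp), map_zero,
        zero_mul]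
    · rw [dualDeriv_diagonal_iterate, dualDeriv_diagonal_iterate]
  have hle := zero_estimate_exp_of_ne_zero (hv.comp Subtype.val_injective) (fun i : S => i.2) hρ
    (fun i => hw i) (fun i => hn i) hT' ht'
  exact hle.trans (by gcongr)

theorem transcendental_exp_of_isAlgebraic {α : ℂ} (hα : α ≠ 0) (halg : IsAlgebraic ℚ α) :
    Transcendental ℚ (Complex.exp α) := by
  intro hexp
  let K := IntermediateField.adjoin ℚ ({α, Complex.exp α} : Set ℂ)
  have : FiniteDimensional ℚ K := IntermediateField.finiteDimensional_adjoin <| by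
    rintro x (rfl | rfl)
    exacts [halg.isIntegral, hexp.isIntegral]
  have : NumberField K := {}
  let ρ : K := ⟨α, IntermediateField.subset_adjoin ℚ _ (by simp)⟩
  let x : K := ⟨Complex.exp α, IntermediateField.subset_adjoin ℚ _ (by simp)⟩
  have hρ : ρ ≠ 0 := fun h => hα (congr_arg Subtype.val h)
  have hx : x ≠ 0 := fun h => Complex.exp_ne_zero α (congr_arg Subtype.val h)
  let δ := Module.finrank ℚ K
  let M := (δ + 2) * (δ ^ 2 + δ + 1) + 1
  refine siegel_method (ι := Fin M) (Y := fun i => PowerSeries.exp ℚ ^ (i : ℕ)) one_pos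
    (Nat.succ_pos _) (fun i => isEType_exp_pow i.2.le (Nat.succ_pos _))
    (diagonal_system_exp fun i : Fin M => (i : ℕ)) (φ := (algebraMap K ℂ).toRatAlgHom) (ρ := ρ)
    (w := fun i => x ^ (i : ℕ)) one_ne_zero (fun i => ?_) rfl (by simp [M, δ]) (c₁ := M * M + M)
    fun P n T t hP hPn hT ht => ?_
  · exact (psEval_exp_pow α i).trans (one_mul _).symm
  · have hle := zero_estimate_exp Fin.val_injective hP hρ (fun i => pow_ne_zero _ hx) hPn hT ht
    simp only [Fintype.card_fin] at hle ⊢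
    linarith

end HermiteLindemann

/-! ### Bessel functions -/

section BesselSeries

/-- The normalized Bessel function `Γ(ν + 1) (x / 2) ^ (-ν) J_ν(x)` of order `ν = (p - 1) / 2`, as a
power series in `x`. -/
noncomputable def besselPS (p : ℕ) : PowerSeries ℚ :=
  PowerSeries.mk fun k => if Even k then
    (-1) ^ (k / 2) / ∏ j ∈ Finset.range (k / 2), ((2 * j + 2) * (p + 2 * j + 1) : ℚ) else 0

variable (p : ℕ)

@[simp]
lemma coeff_zero_besselPS : PowerSeries.coeff 0 (besselPS p) = 1 := by
  simp [besselPS]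

@[simp]
lemma coeff_one_besselPS : PowerSeries.coeff 1 (besselPS p) = 0 := by
  simp [besselPS]

lemma coeff_add_two_besselPS (k : ℕ) : PowerSeries.coeff (k + 2) (besselPS p) *
    ((k + 2) * (p + k + 1)) = -PowerSeries.coeff k (besselPS p) := by
  rcases k.even_or_odd' with ⟨m, rfl | rfl⟩
  · have : ∏ j ∈ Finset.range m, ((2 * j + 2) * (p + 2 * j + 1) : ℚ) ≠ 0 :=
      Finset.prod_ne_zero_iff.mpr fun j _ => by positivity
    have : ((2 * m + 2) * (p + 2 * m + 1) : ℚ) ≠ 0 := by positivity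
    simp only [besselPS, PowerSeries.coeff_mk, Nat.even_add_one, even_two_mul, not_true,
      not_false_eq_true, if_true, show (2 * m + 2) / 2 = m + 1 by omega,
      Nat.mul_div_cancel_left m two_pos, Finset.prod_range_succ]
    push_cast
    field_simp
    ring
  · simp [besselPS, Nat.even_add_one]

lemma coeff_besselPS_add_two (k : ℕ) : PowerSeries.coeff k (besselPS (p + 2)) * (p + k + 1) =
    (p + 1) * PowerSeries.coeff k (besselPS p) := by
  induction k using Nat.twoStepInduction with
  | zero => simp
  | one => simp
  | more k ih _ =>
    have hrec := coeff_add_two_besselPS p k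
    have hrec' := coeff_add_two_besselPS (p + 2) k
    have hfactor : ((k + 2) * (p + k + 1) : ℚ) ≠ 0 := by positivity
    push_cast at hrec' ⊢
    refine mul_right_cancel₀ hfactor ?_
    linear_combination (p + k + 1 : ℚ) * hrec' - ih - (p + 1 : ℚ) * hrec

lemma eulerPS_besselPS : PowerSeries.C (p + 1 : ℚ) * eulerPS ℚ (besselPS p) =
    -(PowerSeries.X ^ 2 * besselPS (p + 2)) := by
  ext k
  rw [PowerSeries.coeff_C_mul, coeff_eulerPS, map_neg, PowerSeries.coeff_X_pow_mul']
  rcases k with _ | _ | k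
  · simp
  · simp
  · rw [if_pos (by omega), Nat.add_sub_cancel (n := k) (m := 2)]
    have hrec := coeff_add_two_besselPS p k
    have hshift := coeff_besselPS_add_two p k
    have hfactor : (p + k + 1 : ℚ) ≠ 0 := by positivity
    push_cast
    refine mul_right_cancel₀ hfactor ?_
    linear_combination (p + 1 : ℚ) * hrec + hshift

lemma besselPS_three_term : PowerSeries.X ^ 2 * besselPS (p + 4) =
    PowerSeries.C ((p + 1) * (p + 3) : ℚ) * (besselPS (p + 2) - besselPS p) := by
  ext k
  rw [PowerSeries.coeff_C_mul, map_sub, PowerSeries.coeff_X_pow_mul']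
  rcases k with _ | _ | k
  · simp
  · simp
  · rw [if_pos (by omega), Nat.add_sub_cancel (n := k) (m := 2)]
    have hrec := coeff_add_two_besselPS p k
    have hshift₀ := coeff_besselPS_add_two p k
    have hshift₂ := coeff_besselPS_add_two p (k + 2)
    have hshift := coeff_besselPS_add_two (p + 2) k
    have hfactor : ((p + k + 3) * (p + k + 1) : ℚ) ≠ 0 := by positivity
    push_cast at hshift hshift₂ ⊢
    refine mul_right_cancel₀ hfactor ?_
    linear_combination (p + k + 1 : ℚ) * hshift + (p + 3 : ℚ) * hshift₀ -
      (p + 1) * (p + 3) * (p + k + 1) * hshift₂ + (p + 3) * (p + 1) * hrec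

lemma eulerPS_eulerPS_besselPS : eulerPS ℚ (eulerPS ℚ (besselPS (p + 1))) =
    -(PowerSeries.C (p : ℚ) * eulerPS ℚ (besselPS (p + 1)) +
      PowerSeries.X ^ 2 * besselPS (p + 1)) := by
  ext k
  rw [map_neg, map_add, PowerSeries.coeff_C_mul, coeff_eulerPS, coeff_eulerPS,
    PowerSeries.coeff_X_pow_mul']
  rcases k with _ | _ | k
  · simp
  · simp
  · rw [if_pos (by omega), Nat.add_sub_cancel (n := k) (m := 2)]
    have hrec := coeff_add_two_besselPS (p + 1) k
    push_cast at hrec ⊢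
    linear_combination hrec

lemma abs_coeff_besselPS_le (k : ℕ) :
    |PowerSeries.coeff k (besselPS p)| ≤ 1 / (k.factorial : ℚ) := by
  induction k using Nat.twoStepInduction with
  | zero => simp
  | one => simp
  | more k ih _ =>
    rw [eq_div_of_mul_eq (by positivity) (coeff_add_two_besselPS p k), abs_div, abs_neg,
      abs_of_pos (a := ((k : ℚ) + 2) * _) (by positivity), Nat.factorial_succ, Nat.factorial_succ]
    calc |PowerSeries.coeff k (besselPS p)| / ((k + 2) * (p + k + 1))
        ≤ 1 / k.factorial / ((k + 2) * (0 + k + 1)) := by gcongr; positivity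
      _ = _ := by push_cast; field_simp; ring

lemma abs_coeff_besselPS_le_of_ne_zero {k : ℕ} (hk : k ≠ 0) :
    |PowerSeries.coeff k (besselPS p)| ≤ 1 / ((p : ℚ) + 1) := by
  obtain _ | _ | k := k
  · exact absurd rfl hk
  · simpa using by positivity
  have hle : |PowerSeries.coeff k (besselPS p)| ≤ 1 :=
    (abs_coeff_besselPS_le p k).trans
      (div_le_one_of_le₀ (by exact_mod_cast k.factorial_pos) (by positivity))
  rw [eq_div_of_mul_eq (by positivity) (coeff_add_two_besselPS p k), abs_div, abs_neg,
    abs_of_pos (a := ((k : ℚ) + 2) * _) (by positivity)]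
  gcongr
  nlinarith [(p.cast_nonneg : (0 : ℚ) ≤ p), (k.cast_nonneg : (0 : ℚ) ≤ k),
    mul_nonneg (p.cast_nonneg : (0 : ℚ) ≤ p) (k.cast_nonneg : (0 : ℚ) ≤ k)]

lemma coeff_two_mul_besselPS_mul_Gamma (m : ℕ) :
    ((PowerSeries.coeff (2 * m) (besselPS (p + 1)) : ℚ) : ℝ) *
      (4 ^ m * m.factorial * Real.Gamma (m + p / 2 + 1)) = (-1) ^ m * Real.Gamma (p / 2 + 1) := by
  induction m with
  | zero => simp
  | succ m ih =>
    have hrec : ((PowerSeries.coeff (2 * m + 2) (besselPS (p + 1)) : ℚ) : ℝ) *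
        ((2 * m + 2) * (p + 1 + 2 * m + 1)) =
          -((PowerSeries.coeff (2 * m) (besselPS (p + 1)) : ℚ) : ℝ) := by
      exact_mod_cast coeff_add_two_besselPS (p + 1) (2 * m)
    have hGamma : Real.Gamma (((m + 1 : ℕ) : ℝ) + p / 2 + 1) =
        (m + p / 2 + 1) * Real.Gamma (m + p / 2 + 1) := by
      rw [← Real.Gamma_add_one (by positivity)]
      push_cast
      ring_nf
    rw [hGamma, Nat.factorial_succ, mul_add_one]
    push_cast
    linear_combination 4 ^ m * m.factorial * Real.Gamma (m + p / 2 + 1) * hrec - ih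

end BesselSeries

section BesselValues

variable (p : ℕ) (x : ℂ)

lemma norm_coeff_besselPS_mul_pow_le (k : ℕ) :
    ‖((PowerSeries.coeff k (besselPS p) : ℚ) : ℂ) * x ^ k‖ ≤ ‖x‖ ^ k / k.factorial := by
  have hcoeff : ((|PowerSeries.coeff k (besselPS p)| : ℚ) : ℝ) ≤ ((1 / k.factorial : ℚ) : ℝ) :=
    Rat.cast_le.mpr (abs_coeff_besselPS_le p k)
  push_cast at hcoeff
  rw [norm_mul, norm_pow, Complex.norm_ratCast, div_eq_mul_one_div, mul_comm]
  gcongr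

lemma besselPS_mem_absConvergent : besselPS p ∈ absConvergent x :=
  Summable.of_nonneg_of_le (fun _ => norm_nonneg _) (norm_coeff_besselPS_mul_pow_le p x)
    (Real.summable_pow_div_factorial ‖x‖)

lemma psEval_X_pow_mul {x : ℂ} {f : PowerSeries ℚ} (hf : f ∈ absConvergent x) (n : ℕ) :
    psEval x (PowerSeries.X ^ n * f) = x ^ n * psEval x f := by
  simpa [Algebra.smul_def, algebraMap_X_powerSeries] using psEval_int_smul (X ^ n) hf

lemma psEval_besselPS_three_term : x ^ 2 * psEval x (besselPS (p + 4)) =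
    (p + 1) * (p + 3) * (psEval x (besselPS (p + 2)) - psEval x (besselPS p)) := by
  rw [← psEval_X_pow_mul (besselPS_mem_absConvergent _ _), besselPS_three_term, psEval_C_mul,
    psEval_sub (besselPS_mem_absConvergent _ _) (besselPS_mem_absConvergent _ _)]
  push_cast
  rfl

lemma psEval_eulerPS_besselPS :
    (p + 1) * psEval x (eulerPS ℚ (besselPS p)) = -(x ^ 2 * psEval x (besselPS (p + 2))) := by
  rw [← psEval_X_pow_mul (besselPS_mem_absConvergent _ _), ← psEval_neg, ← eulerPS_besselPS,
    psEval_C_mul]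
  push_cast
  rfl

lemma tendsto_psEval_besselPS :
    Filter.Tendsto (fun j : ℕ => psEval x (besselPS (p + 2 * j))) Filter.atTop (nhds 1) := by
  have hlim (k : ℕ) : Filter.Tendsto
      (fun j : ℕ => ((PowerSeries.coeff k (besselPS (p + 2 * j)) : ℚ) : ℂ) * x ^ k) Filter.atTop
      (nhds (if k = 0 then 1 else 0)) := by
    split_ifs with hk
    · simp [hk]
    rw [← zero_mul (x ^ k)]
    refine (squeeze_zero_norm (fun j => ?_)
      (tendsto_one_div_add_atTop_nhds_zero_nat (𝕜 := ℝ))).mul_const _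
    have hle : ((|PowerSeries.coeff k (besselPS (p + 2 * j))| : ℚ) : ℝ) ≤
        ((1 / ((j : ℚ) + 1) : ℚ) : ℝ) := by
      refine Rat.cast_le.mpr ((abs_coeff_besselPS_le_of_ne_zero _ hk).trans ?_)
      gcongr
      omega
    rw [Complex.norm_ratCast]
    simpa using hle
  simpa only [psEval, tsum_ite_eq] using
    tendsto_tsum_of_dominated_convergence (Real.summable_pow_div_factorial ‖x‖) hlim
      (.of_forall fun j => norm_coeff_besselPS_mul_pow_le (p + 2 * j) x)

variable {p x}

/-- If both functions vanished, the three-term recursion would propagate the zero to all the orders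
`p + 2 * j`, but the values tend to `1` as the order grows. -/
lemma psEval_besselPS_ne_zero (hx : x ≠ 0)
    (h : psEval x (besselPS p) = 0 → psEval x (besselPS (p + 2)) = 0) :
    psEval x (besselPS p) ≠ 0 := by
  intro h0
  have hall (j : ℕ) : psEval x (besselPS (p + 2 * j)) = 0 ∧
      psEval x (besselPS (p + 2 * j + 2)) = 0 := by
    induction j with
    | zero => exact ⟨h0, h h0⟩
    | succ j ih =>
      refine ⟨ih.2, ?_⟩
      have hrec := psEval_besselPS_three_term (p + 2 * j) x
      rw [ih.1, ih.2, sub_zero, mul_zero] at hrec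
      exact (mul_eq_zero.mp hrec).resolve_left (pow_ne_zero 2 hx)
  have hlim := tendsto_psEval_besselPS p x
  simp only [(hall _).1] at hlim
  exact zero_ne_one (tendsto_nhds_unique tendsto_const_nhds hlim)

variable (p x)

lemma psEval_besselPS : psEval x (besselPS p) =
    ∑' m : ℕ, ((PowerSeries.coeff (2 * m) (besselPS p) : ℚ) : ℂ) * x ^ (2 * m) := by
  unfold psEval
  rw [← (mul_right_injective₀ (two_ne_zero (α := ℕ))).tsum_eq]
  intro k hk
  obtain ⟨m, rfl | rfl⟩ := k.even_or_odd'
  · exact ⟨m, rfl⟩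
  · simp [besselPS] at hk

lemma psEval_besselPS_zero : psEval x (besselPS 0) = Complex.cos x := by
  have hcoeff (m : ℕ) :
      PowerSeries.coeff (2 * m) (besselPS 0) * (2 * m).factorial = (-1) ^ m := by
    induction m with
    | zero => simp
    | succ m ih =>
      have hrec := coeff_add_two_besselPS 0 (2 * m)
      rw [mul_add_one, Nat.factorial_succ, Nat.factorial_succ]
      push_cast at hrec ⊢
      linear_combination ((2 * m).factorial : ℚ) * hrec - ih
  rw [psEval_besselPS, ← (Complex.hasSum_cos x).tsum_eq]
  refine tsum_congr fun m => ?_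
  rw [eq_div_of_mul_eq (by positivity) (hcoeff m)]
  push_cast
  ring

lemma mul_psEval_besselPS_two : x * psEval x (besselPS 2) = Complex.sin x := by
  have hcoeff (m : ℕ) :
      PowerSeries.coeff (2 * m) (besselPS 2) * (2 * m + 1).factorial = (-1) ^ m := by
    induction m with
    | zero => simp
    | succ m ih =>
      have hrec := coeff_add_two_besselPS 2 (2 * m)
      rw [mul_add_one, Nat.factorial_succ, Nat.factorial_succ (2 * m + 1)]
      push_cast at hrec ⊢
      linear_combination ((2 * m + 1).factorial : ℚ) * hrec - ih
  rw [psEval_besselPS, ← (Complex.hasSum_sin x).tsum_eq, ← tsum_mul_left]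
  refine tsum_congr fun m => ?_
  rw [eq_div_of_mul_eq (by positivity) (hcoeff m)]
  push_cast
  ring

end BesselValues

section HalfIntegerOrder

variable {x : ℂ}

lemma exists_psEval_besselPS_two_mul (hx : x ≠ 0) (halg : IsAlgebraic ℚ x) (n : ℕ) :
    ∃ a b a' b' : ℂ, (IsAlgebraic ℚ a ∧ IsAlgebraic ℚ b ∧ IsAlgebraic ℚ a' ∧ IsAlgebraic ℚ b') ∧
      a * b' - a' * b ≠ 0 ∧
      psEval x (besselPS (2 * n)) = a * Complex.cos x + b * Complex.sin x ∧
      psEval x (besselPS (2 * n + 2)) = a' * Complex.cos x + b' * Complex.sin x := by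
  induction n with
  | zero =>
    refine ⟨1, 0, 0, x⁻¹, ⟨isAlgebraic_one, isAlgebraic_zero, isAlgebraic_zero, halg.inv⟩,
      by simpa using hx, by simp [psEval_besselPS_zero], ?_⟩
    rw [mul_zero, zero_add, ← mul_psEval_besselPS_two, zero_mul, zero_add,
      inv_mul_cancel_left₀ hx]
  | succ n ih =>
    obtain ⟨a, b, a', b', ⟨ha, hb, ha', hb'⟩, hdet, hfirst, hsecond⟩ := ih
    set c : ℂ := ((2 * n + 1) * (2 * n + 3) : ℕ) * x⁻¹ ^ 2 with hc
    have hcalg : IsAlgebraic ℚ c := (isAlgebraic_natCast _).mul (halg.inv.pow 2)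
    have hc0 : c ≠ 0 :=
      mul_ne_zero (Nat.cast_ne_zero.mpr (by positivity)) (pow_ne_zero 2 (inv_ne_zero hx))
    refine ⟨a', b', c * (a' - a), c * (b' - b), ⟨ha', hb', hcalg.mul (ha'.sub ha),
      hcalg.mul (hb'.sub hb)⟩, ?_, hsecond, ?_⟩
    · convert mul_ne_zero hc0 hdet using 1
      ring
    · have hrec := psEval_besselPS_three_term (2 * n) x
      rw [hfirst, hsecond] at hrec
      refine mul_left_cancel₀ (pow_ne_zero 2 hx) (hrec.trans ?_)
      rw [hc]
      push_cast
      field_simp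
      ring

lemma transcendental_of_cos_sin_relation {A B : ℂ} (hx : x ≠ 0) (hA : IsAlgebraic ℚ A)
    (hB : IsAlgebraic ℚ B) (hAB : A ≠ 0 ∨ B ≠ 0)
    (h : A * Complex.cos x + B * Complex.sin x = 0) : Transcendental ℚ x := by
  intro halg
  have hI : IsAlgebraic ℚ Complex.I := Complex.isIntegral_rat_I.isAlgebraic
  have hexp : Complex.exp (x * Complex.I * 2) * (A - B * Complex.I) =
      -(A + B * Complex.I) := by
    have hdouble : Complex.exp (x * Complex.I * 2) = Complex.exp (x * Complex.I) ^ 2 := by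
      rw [← Complex.exp_nat_mul, Nat.cast_ofNat, mul_comm]
    rw [hdouble, Complex.exp_mul_I]
    linear_combination 2 * (Complex.cos x + Complex.sin x * Complex.I) * h -
      (A + B * Complex.I) * Complex.sin_sq_add_cos_sq x + (A * Complex.sin x ^ 2 -
        2 * B * Complex.cos x * Complex.sin x - B * Complex.sin x ^ 2 * Complex.I) * Complex.I_sq
  have hne : A - B * Complex.I ≠ 0 := by
    intro hsub
    have hadd : A + B * Complex.I = 0 := by
      linear_combination hexp - Complex.exp (x * Complex.I * 2) * hsub
    refine hAB.elim (fun hA0 => hA0 ?_) fun hB0 => hB0 ?_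
    · linear_combination (hsub + hadd) / 2
    · linear_combination Complex.I / 2 * (hsub - hadd) + B * Complex.I_sq
  have hx2 : x * Complex.I * 2 ≠ 0 := by simp [hx]
  refine transcendental_exp_of_isAlgebraic hx2 ((halg.mul hI).mul (isAlgebraic_natCast 2)) ?_
  rw [eq_div_of_mul_eq hne hexp, div_eq_mul_inv]
  exact (hA.add (hB.mul hI)).neg.mul (hA.sub (hB.mul hI)).inv

end HalfIntegerOrder

section CriticalPoints

lemma hasDerivAt_psEval {f : PowerSeries ℚ} (hf : ∀ x, f ∈ absConvergent x) {z : ℂ}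
    (hz : z ≠ 0) : HasDerivAt (fun w => psEval w f) (psEval z (eulerPS ℚ f) / z) z := by
  set R : ℝ := ‖z‖ + 1
  have hU : IsOpen (Metric.ball (0 : ℂ) R) := Metric.isOpen_ball
  have hzU : z ∈ Metric.ball (0 : ℂ) R := by simp [R]
  have hd (k : ℕ) : DifferentiableOn ℂ
      (fun w : ℂ => ((PowerSeries.coeff k f : ℚ) : ℂ) * w ^ k) (Metric.ball (0 : ℂ) R) := by
    fun_prop
  have hle (k : ℕ) (w : ℂ) (hw : w ∈ Metric.ball (0 : ℂ) R) :
      ‖((PowerSeries.coeff k f : ℚ) : ℂ) * w ^ k‖ ≤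
        ‖((PowerSeries.coeff k f : ℚ) : ℂ) * (R : ℂ) ^ k‖ := by
    rw [norm_mul, norm_mul, norm_pow, norm_pow, Complex.norm_real,
      Real.norm_of_nonneg (by positivity)]
    gcongr
    simpa using (Metric.mem_ball.mp hw).le
  have hdiff := (Complex.differentiableOn_tsum_of_summable_norm (hf R) hd hU hle).differentiableAt
    (hU.mem_nhds hzU)
  refine hdiff.hasDerivAt.congr_deriv ?_
  rw [← (Complex.hasSum_deriv_of_summable_norm (hf R) hd hU hle hzU).tsum_eq, eq_div_iff hz,
    psEval, ← tsum_mul_right]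
  refine tsum_congr fun k => ?_
  rw [coeff_eulerPS, deriv_const_mul _ (by fun_prop), deriv_pow_field]
  rcases k with _ | k
  · simp
  · push_cast
    ring

lemma ofReal_besselJ (p : ℕ) {x : ℝ} (hx : 0 < x) : (besselJ (p / 2) x : ℂ) =
    ((x / 2) ^ (p / 2 : ℝ) / Real.Gamma (p / 2 + 1) : ℝ) * psEval x (besselPS (p + 1)) := by
  rw [besselJ, Complex.ofReal_tsum, psEval_besselPS, ← tsum_mul_left]
  refine tsum_congr fun m => ?_
  have hpow : (x / 2) ^ (2 * (m : ℝ) + p / 2) = x ^ (2 * m) / 4 ^ m * (x / 2) ^ (p / 2 : ℝ) := by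
    rw [Real.rpow_add (by positivity), ← Nat.cast_ofNat (n := 2), ← Nat.cast_mul,
      Real.rpow_natCast, Nat.cast_ofNat, div_pow, pow_mul 2 2 m]
    norm_num
  rw [← Complex.ofReal_ratCast, ← Complex.ofReal_pow, ← Complex.ofReal_mul, ← Complex.ofReal_mul,
    Complex.ofReal_inj, hpow,
    eq_div_of_mul_eq (by positivity) (coeff_two_mul_besselPS_mul_Gamma p m)]
  field_simp

lemma ofReal_Xi (e ℓ : ℕ) {r : ℝ} (hr : 0 < r) : (Xi (e + 2) ℓ r : ℂ) =
    ((2 ^ ((2 * ℓ + e : ℕ) / 2 : ℝ) * Real.Gamma ((2 * ℓ + e : ℕ) / 2 + 1))⁻¹ : ℝ) *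
      (r ^ ℓ * psEval r (besselPS (2 * ℓ + e + 1))) := by
  have hν : (ℓ : ℝ) + (e + 2 : ℕ) / 2 - 1 = (2 * ℓ + e : ℕ) / 2 := by
    push_cast
    ring
  have hpow : r ^ ((2 - (e + 2 : ℕ)) / 2 : ℝ) * (r / 2) ^ ((2 * ℓ + e : ℕ) / 2 : ℝ) =
      r ^ ℓ / 2 ^ ((2 * ℓ + e : ℕ) / 2 : ℝ) := by
    rw [Real.div_rpow hr.le zero_le_two, ← mul_div_assoc, ← Real.rpow_add hr,
      ← Real.rpow_natCast r ℓ]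
    push_cast
    ring_nf
  rw [Xi, hν, Complex.ofReal_mul, ofReal_besselJ _ hr, ← mul_assoc, ← mul_assoc,
    ← Complex.ofReal_mul, ← mul_div_assoc, hpow]
  push_cast
  rw [mul_inv, div_div, div_eq_mul_inv, mul_inv]
  ring

lemma psEval_eulerPS_of_deriv_Xi_eq_zero {e ℓ : ℕ} {r : ℝ} (hr : 0 < r)
    (h : deriv (Xi (e + 2) ℓ) r = 0) :
    psEval r (eulerPS ℚ (besselPS (2 * ℓ + e + 1))) =
      -(ℓ * psEval r (besselPS (2 * ℓ + e + 1))) := by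
  set f := besselPS (2 * ℓ + e + 1)
  set c : ℝ := (2 ^ ((2 * ℓ + e : ℕ) / 2 : ℝ) * Real.Gamma ((2 * ℓ + e : ℕ) / 2 + 1))⁻¹
  have hc : (c : ℂ) ≠ 0 := Complex.ofReal_ne_zero.mpr
    (inv_ne_zero (mul_ne_zero (by positivity) (Real.Gamma_pos_of_pos (by positivity)).ne'))
  have hr' : (r : ℂ) ≠ 0 := Complex.ofReal_ne_zero.mpr hr.ne'
  have hXi : (fun x : ℝ => (Xi (e + 2) ℓ x : ℂ)) =ᶠ[nhds r]
      fun x : ℝ => (c : ℂ) * ((x : ℂ) ^ ℓ * psEval x f) :=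
    (eventually_gt_nhds hr).mono fun x hx => ofReal_Xi e ℓ hx
  have hderiv : HasDerivAt (fun z : ℂ => (c : ℂ) * (z ^ ℓ * psEval z f))
      (c * (ℓ * (r : ℂ) ^ (ℓ - 1) * psEval r f + r ^ ℓ * (psEval r (eulerPS ℚ f) / r))) r :=
    ((hasDerivAt_pow ℓ (r : ℂ)).mul
      (hasDerivAt_psEval (besselPS_mem_absConvergent _) hr')).const_mul _
  have hreal : HasDerivAt (Xi (e + 2) ℓ) 0 r := by
    rw [← h, hasDerivAt_deriv_iff]
    refine (hderiv.real_of_complex.congr_of_eventuallyEq (hXi.mono fun x hx => ?_)).differentiableAt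
    simp [← hx]
  have hzero := hderiv.comp_ofReal.unique (hreal.ofReal_comp.congr_of_eventuallyEq hXi.symm)
  have hpow : (ℓ : ℂ) * r ^ (ℓ - 1) * r = ℓ * r ^ ℓ := by
    rcases ℓ with _ | ℓ
    · simp
    · rw [Nat.add_sub_cancel]
      ring
  rw [Complex.ofReal_zero, mul_eq_zero, or_iff_right hc] at hzero
  refine mul_left_cancel₀ (pow_ne_zero ℓ hr') ?_
  field_simp at hzero
  linear_combination hzero - psEval r f * hpow

end CriticalPoints

/-! ### Symmetric powers of second-order equations -/

section SymmetricPower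

variable {R S : Type*} [CommRing R] [CommRing S] [Algebra R S]

/-- The derivation of `S[X]` that applies `d` to the coefficients. -/
noncomputable def coeffDerivation (d : Derivation R S S) : Derivation R S[X] S[X] :=
  PolynomialModule.equivPolynomialSelf.compDer d.mapCoeffs

lemma coeff_coeffDerivation (d : Derivation R S S) (p : S[X]) (k : ℕ) :
    (coeffDerivation d p).coeff k = d (p.coeff k) := rfl

@[simp]
lemma coeffDerivation_C (d : Derivation R S S) (a : S) : coeffDerivation d (C a) = C (d a) := by
  ext k
  rw [coeff_coeffDerivation, coeff_C, coeff_C]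
  split_ifs <;> simp

@[simp]
lemma coeffDerivation_X (d : Derivation R S S) : coeffDerivation d X = 0 := by
  ext k
  rw [coeff_coeffDerivation, coeff_X]
  split_ifs <;> simp

lemma taylor_derivative (u : S) (p : S[X]) :
    taylor u (derivative p) = derivative (taylor u p) := by
  rw [taylor_apply, taylor_apply, derivative_comp]
  simp

lemma taylor_coeffDerivation (d : Derivation R S S) (u : S) (p : S[X]) :
    taylor u (coeffDerivation d p) =
      coeffDerivation d (taylor u p) - C (d u) * derivative (taylor u p) := by
  induction p using Polynomial.induction_on' with
  | add p q hp hq =>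
    simp only [map_add, hp, hq]
    ring
  | monomial n a =>
    rw [← C_mul_X_pow_eq_monomial]
    simp only [Derivation.leibniz, Derivation.leibniz_pow, coeffDerivation_C, coeffDerivation_X,
      taylor_mul, taylor_C, taylor_pow, taylor_X, map_add, smul_zero, smul_eq_mul, zero_add,
      derivative_mul, derivative_C, derivative_pow, derivative_X, nsmul_eq_mul, add_zero, mul_zero,
      zero_mul, mul_one, map_natCast]
    ring

lemma coeff_X_sq_mul_derivative (p : S[X]) (a : ℕ) :
    (X ^ 2 * derivative p).coeff (a + 1) = a * p.coeff a := by
  rw [pow_two, mul_assoc, coeff_X_mul]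
  rcases a with _ | a
  · simp
  · rw [coeff_X_mul, coeff_derivative]
    push_cast
    ring

variable (d : Derivation R S S) (q : S) (n : ℕ)

/-- The operator on polynomials of degree at most `n` with
`d (y ^ n * p(d y / y)) = y ^ n * (symOp d q n p)(d y / y)` whenever `d (d y) = q * y`. It is dual
to the `n`-th symmetric power of this equation. -/
noncomputable def symOp : S[X] →ₗ[R] S[X] :=
  (coeffDerivation d : S[X] →ₗ[R] S[X]) +
    LinearMap.mulLeft R (C q - X ^ 2) ∘ₗ derivative.restrictScalars R +
      LinearMap.mulLeft R ((n : S[X]) * X)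

lemma symOp_apply (p : S[X]) : symOp d q n p =
    coeffDerivation d p + (C q - X ^ 2) * derivative p + (n : S[X]) * X * p := rfl

lemma coeff_symOp_zero (p : S[X]) :
    (symOp d q n p).coeff 0 = d (p.coeff 0) + q * p.coeff 1 := by
  simp [symOp_apply, coeff_coeffDerivation, sub_mul, coeff_derivative, mul_coeff_zero]

lemma coeff_symOp_succ (p : S[X]) (a : ℕ) : (symOp d q n p).coeff (a + 1) =
    d (p.coeff (a + 1)) + (a + 2) * q * p.coeff (a + 2) + (n - a) * p.coeff a := by
  rw [symOp_apply, coeff_add, coeff_add, coeff_coeffDerivation, sub_mul, coeff_sub, coeff_C_mul,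
    coeff_X_sq_mul_derivative, mul_assoc, coeff_natCast_mul, coeff_X_mul, coeff_derivative]
  push_cast
  ring

lemma symOp_smul (g : S) (p : S[X]) :
    symOp d q n (g • p) = d g • p + g • symOp d q n p := by
  simp only [symOp_apply, smul_eq_C_mul, Derivation.leibniz, coeffDerivation_C, derivative_mul,
    derivative_C, smul_eq_mul]
  ring

variable {n}

lemma natDegree_symOp_le {p : S[X]} (hp : p.natDegree ≤ n) : (symOp d q n p).natDegree ≤ n := by
  rw [natDegree_le_iff_coeff_eq_zero] at hp ⊢
  rintro (_ | a) ha
  · omega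
  · rw [coeff_symOp_succ, hp _ ha, hp _ (by omega : n < a + 2), map_zero]
    rcases (Nat.lt_succ_iff.mp ha).eq_or_lt with rfl | h
    · simp
    · simp [hp a h]

lemma natDegree_symOp_iterate_le {p : S[X]} (hp : p.natDegree ≤ n) (i : ℕ) :
    ((symOp d q n)^[i] p).natDegree ≤ n :=
  Function.Iterate.rec (natDegree · ≤ n) hp (fun _ => natDegree_symOp_le d q) i

variable (n) {d q}

lemma map_symOp {R' S' : Type*} [CommRing R'] [CommRing S'] [Algebra R' S'] (ψ : S →+* S')
    {d' : Derivation R' S' S'} (hψ : ∀ s, ψ (d s) = d' (ψ s)) (p : S[X]) :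
    (symOp d q n p).map ψ = symOp d' (ψ q) n (p.map ψ) := by
  ext k
  rcases k with _ | k
  · simp [coeff_symOp_zero, hψ]
  · simp only [coeff_map, coeff_symOp_succ, map_add, map_sub, map_mul, hψ, map_natCast, map_ofNat]

variable {u : S}

lemma taylor_symOp (hu : d u = q - u ^ 2) (p : S[X]) :
    taylor u (symOp d q n p) = coeffDerivation d (taylor u p) -
      (C (2 * u) * X + X ^ 2) * derivative (taylor u p) + (n : S[X]) * (X + C u) * taylor u p := by
  have hn : taylor u (n : S[X]) = n := by rw [← C_eq_natCast, taylor_C]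
  simp only [symOp_apply, map_add, taylor_mul, taylor_coeffDerivation, taylor_derivative, map_sub,
    taylor_C, taylor_pow, taylor_X, hu, hn, C_mul, C_pow, C_ofNat]
  ring

lemma coeff_taylor_symOp_zero (hu : d u = q - u ^ 2) (p : S[X]) :
    (taylor u (symOp d q n p)).coeff 0 =
      d ((taylor u p).coeff 0) + n * u * (taylor u p).coeff 0 := by
  rw [taylor_symOp n hu]
  simp [coeff_coeffDerivation, mul_coeff_zero]

lemma coeff_taylor_symOp_succ (hu : d u = q - u ^ 2) (p : S[X]) (a : ℕ) :
    (taylor u (symOp d q n p)).coeff (a + 1) = d ((taylor u p).coeff (a + 1)) +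
      (n - 2 * (a + 1)) * u * (taylor u p).coeff (a + 1) + (n - a) * (taylor u p).coeff a := by
  rw [taylor_symOp n hu, coeff_add, coeff_sub, coeff_coeffDerivation, add_mul, coeff_add,
    coeff_X_sq_mul_derivative, mul_assoc, coeff_C_mul, coeff_X_mul, coeff_derivative,
    mul_assoc (n : S[X]), coeff_natCast_mul, add_mul, coeff_add, coeff_X_mul, coeff_C_mul]
  ring

lemma coeff_taylor_symOp_of_lowest (hu : d u = q - u ^ 2) {p : S[X]} {j : ℕ}
    (hp : ∀ a < j, (taylor u p).coeff a = 0) : (taylor u (symOp d q n p)).coeff j =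
      d ((taylor u p).coeff j) + (n - 2 * j) * u * (taylor u p).coeff j := by
  rcases j with _ | j
  · simpa using coeff_taylor_symOp_zero n hu p
  · simp [coeff_taylor_symOp_succ n hu, hp j (Nat.lt_succ_self j)]

end SymmetricPower

section Independence

variable {R L : Type*} [CommRing R] [Field L] [Algebra R L]

/-- If `d u = q - u ^ 2` and `d y = u * y`, then `y` solves `d (d y) = q * y`, and so does `t / y`
whenever `d t = 2 * u * t - k`, the Wronskian of `y` and `t / y` being `-k`. The condition excludes
such a second solution for positive integers `k`. -/
def NoSecondSolution (d : Derivation R L L) (u : L) : Prop :=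
  ∀ (t : L) (k : ℕ), 0 < k → d t ≠ 2 * u * t - k

/-- The space spanned by `p` and its first `j` images under `symOp d q n`. -/
noncomputable def symOpSpan (d : Derivation R L L) (q : L) (n : ℕ) (p : L[X]) (j : ℕ) :
    Submodule L L[X] :=
  Submodule.span L ((fun i => (symOp d q n)^[i] p) '' Set.Iic j)

variable {d : Derivation R L L} {q : L} {n : ℕ} {p : L[X]} {j : ℕ}

lemma symOpSpan_mono {j' : ℕ} (h : j ≤ j') : symOpSpan d q n p j ≤ symOpSpan d q n p j' :=
  Submodule.span_mono (Set.image_mono (Set.Iic_subset_Iic.mpr h))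

lemma symOp_mem_symOpSpan {w : L[X]} (hw : w ∈ symOpSpan d q n p j) :
    symOp d q n w ∈ symOpSpan d q n p (j + 1) := by
  induction hw using Submodule.span_induction with
  | mem x hx =>
    obtain ⟨i, hi, rfl⟩ := hx
    exact Submodule.subset_span ⟨i + 1, by simpa using hi, Function.iterate_succ_apply' _ _ _⟩
  | zero => simp
  | add x y _ _ hx hy =>
    rw [map_add]
    exact add_mem hx hy
  | smul c x hx hx' =>
    rw [symOp_smul]
    exact add_mem (Submodule.smul_mem _ _ (symOpSpan_mono j.le_succ hx))
      (Submodule.smul_mem _ _ hx')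

lemma symOpSpan_le_degreeLE (hp : p.natDegree ≤ n) :
    symOpSpan d q n p j ≤ degreeLE L n := by
  rw [symOpSpan, Submodule.span_le]
  rintro _ ⟨i, -, rfl⟩
  exact mem_degreeLE.mpr (natDegree_le_iff_degree_le.mp (natDegree_symOp_iterate_le d q hp i))

variable {u : L}

lemma exists_mem_symOpSpan_coeff_taylor (hu : d u = q - u ^ 2) (H : NoSecondSolution d u)
    (hp : p.eval u ≠ 0) (hj : j ≤ n) : ∃ w ∈ symOpSpan d q n p j,
      (∀ a < j, (taylor u w).coeff a = 0) ∧ (taylor u w).coeff j = 1 := by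
  induction j with
  | zero =>
    refine ⟨(p.eval u)⁻¹ • p, Submodule.smul_mem _ _ (Submodule.subset_span ⟨0, by simp, rfl⟩),
      by simp, ?_⟩
    rw [map_smul, coeff_smul, taylor_coeff_zero, smul_eq_mul, inv_mul_cancel₀ hp]
  | succ j ih =>
    obtain ⟨w, hw, hlow, hone⟩ := ih (by omega)
    set t := (taylor u w).coeff (j + 1) with ht
    set g : L := d t - (2 * u * t - (n - j : ℕ)) with hg
    have hg0 : g ≠ 0 := sub_ne_zero.mpr (H t (n - j) (by omega))
    set w' : L[X] := symOp d q n w - ((n - 2 * j) * u) • w with hw'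
    have hlow' (a : ℕ) (ha : a < j + 1) : (taylor u w').coeff a = 0 := by
      have hlowest := coeff_taylor_symOp_of_lowest n hu fun b hb => hlow b (by omega : b < j)
      rw [hw', map_sub, map_smul, coeff_sub, coeff_smul, smul_eq_mul]
      rcases (Nat.lt_succ_iff.mp ha).eq_or_lt with rfl | haj
      · rw [hlowest, hone, Derivation.map_one_eq_zero]
        ring
      · rw [coeff_taylor_symOp_of_lowest n hu fun b hb => hlow b (hb.trans haj), hlow a haj]
        simp
    have hcoeff : (taylor u w').coeff (j + 1) = g := by
      rw [hw', map_sub, map_smul, coeff_sub, coeff_smul, smul_eq_mul,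
        coeff_taylor_symOp_succ n hu, ← ht, hone, hg, Nat.cast_sub (by omega)]
      ring
    refine ⟨g⁻¹ • w', Submodule.smul_mem _ _ (sub_mem (symOp_mem_symOpSpan hw)
      (Submodule.smul_mem _ _ (symOpSpan_mono j.le_succ hw))), fun a ha => ?_, ?_⟩
    · rw [map_smul, coeff_smul, hlow' a ha, smul_zero]
    · rw [map_smul, coeff_smul, hcoeff, smul_eq_mul, inv_mul_cancel₀ hg0]

lemma degreeLE_le_of_exists_coeff_taylor {W : Submodule L L[X]} (hW : W ≤ degreeLE L n)
    (h : ∀ j ≤ n, ∃ w ∈ W, (∀ a < j, (taylor u w).coeff a = 0) ∧ (taylor u w).coeff j = 1) :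
    degreeLE L n ≤ W := by
  suffices hind : ∀ m ≤ n + 1, ∀ r ∈ degreeLE L n,
      (∀ a < n + 1 - m, (taylor u r).coeff a = 0) → r ∈ W from
    fun r hr => hind (n + 1) le_rfl r hr (by simp)
  intro m
  induction m with
  | zero =>
    intro _ r hr hr0
    have hdeg : (taylor u r).natDegree ≤ n := by
      rw [natDegree_taylor]
      exact natDegree_le_iff_degree_le.mpr (mem_degreeLE.mp hr)
    have htaylor : taylor u r = 0 := by
      ext a
      rcases lt_or_ge a (n + 1) with ha | ha
      · exact hr0 a ha
      · exact coeff_eq_zero_of_natDegree_lt (by omega)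
    rw [(taylor_eq_zero u r).mp htaylor]
    exact W.zero_mem
  | succ m ih =>
    intro hm r hr hr0
    obtain ⟨w, hw, hlow, hone⟩ := h (n - m) (Nat.sub_le n m)
    have hcw := W.smul_mem ((taylor u r).coeff (n - m)) hw
    refine (W.sub_mem_iff_left hcw).mp (ih (by omega) _ (sub_mem hr (hW hcw)) fun a ha => ?_)
    rw [map_sub, map_smul, coeff_sub, coeff_smul, smul_eq_mul]
    rcases (show a ≤ n - m by omega).eq_or_lt with rfl | ha'
    · rw [hone, mul_one, sub_self]
    · rw [hlow a ha', hr0 a (by omega), mul_zero, sub_zero]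

lemma symOpSpan_eq_degreeLE (hu : d u = q - u ^ 2) (H : NoSecondSolution d u)
    (hpn : p.natDegree ≤ n) (hp : p.eval u ≠ 0) : symOpSpan d q n p n = degreeLE L n := by
  refine (symOpSpan_le_degreeLE hpn).antisymm
    (degreeLE_le_of_exists_coeff_taylor (u := u) (symOpSpan_le_degreeLE hpn) fun j hj => ?_)
  obtain ⟨w, hw, h⟩ := exists_mem_symOpSpan_coeff_taylor hu H hp hj
  exact ⟨w, symOpSpan_mono hj hw, h⟩

/-- The matrix of the linear system satisfied by the monomials `y ^ (n - i) * (d y) ^ i` when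
`d (d y) = q * y`. -/
def symMatrix {S : Type*} [CommRing S] (q : S) (n : ℕ) : Matrix (Fin (n + 1)) (Fin (n + 1)) S :=
  Matrix.of fun i j => (if (j : ℕ) = i + 1 then ((n : S) - (i : ℕ)) else 0) +
    (if (i : ℕ) = j + 1 then ((i : ℕ) : S) * q else 0)

lemma ofFn_dualDeriv_symMatrix {S : Type*} [CommRing S] [Algebra R S] [DecidableEq S]
    (d : Derivation R S S) (q : S) (n : ℕ) (P : Fin (n + 1) → S) :
    ofFn (n + 1) (dualDeriv d (symMatrix q n) P) = symOp d q n (ofFn (n + 1) P) := by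
  have hP (i : Fin (n + 1)) : P i = (ofFn (n + 1) P).coeff i := by
    rw [ofFn_coeff_eq_val_of_lt P i.2]
  have hdeg : (ofFn (n + 1) P).natDegree ≤ n :=
    Nat.lt_succ_iff.mp (ofFn_natDegree_lt (by omega) P)
  ext a
  rcases lt_or_ge a (n + 1) with ha | ha
  · rw [ofFn_coeff_eq_val_of_lt _ ha]
    simp only [dualDeriv_apply, symMatrix, Matrix.of_apply, hP]
    set p := ofFn (n + 1) P
    rw [Fin.sum_univ_eq_sum_range (fun i => p.coeff i * ((if a = i + 1 then ((n : S) - (i : ℕ))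
      else 0) + (if i = a + 1 then (i : S) * q else 0))) (n + 1)]
    simp only [mul_add, mul_ite, mul_zero, Finset.sum_add_distrib, Finset.sum_ite_eq']
    have hnext : (if a + 1 ∈ Finset.range (n + 1) then p.coeff (a + 1) * (((a + 1 : ℕ) : S) * q)
        else 0) = (a + 1) * q * p.coeff (a + 1) := by
      split_ifs with h
      · push_cast
        ring
      · rw [coeff_eq_zero_of_natDegree_lt (hdeg.trans_lt (by simpa using h)), mul_zero]
    rw [hnext]
    rcases a with _ | a
    · simp [coeff_symOp_zero]
    · simp only [Nat.succ_inj]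
      rw [coeff_symOp_succ, Finset.sum_ite_eq, if_pos (by simp; omega)]
      push_cast
      ring
  · rw [ofFn_coeff_eq_zero_of_ge _ ha, coeff_eq_zero_of_natDegree_lt]
    exact (natDegree_symOp_le d q hdeg).trans_lt ha

lemma det_dualDeriv_symMatrix_ne_zero [DecidableEq L] (hu : d u = q - u ^ 2)
    (H : NoSecondSolution d u) {P : Fin (n + 1) → L} (hP : (ofFn (n + 1) P).eval u ≠ 0) :
    (Matrix.of fun i j : Fin (n + 1) => (dualDeriv d (symMatrix q n))^[(i : ℕ)] P j).det ≠ 0 := by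
  intro hdet
  obtain ⟨v, hv0, hv⟩ := Matrix.exists_mulVec_eq_zero_iff.mpr hdet
  let f : L[X] →ₗ[L] L := ∑ j : Fin (n + 1), v j • lcoeff L j
  have hf (r : L[X]) : f r = ∑ j : Fin (n + 1), v j * r.coeff j := by simp [f]
  have hiter (i : ℕ) : ofFn (n + 1) ((dualDeriv d (symMatrix q n))^[i] P) =
      (symOp d q n)^[i] (ofFn (n + 1) P) :=
    Function.Semiconj.iterate_right (ofFn_dualDeriv_symMatrix d q n) i P
  have hspan : degreeLE L n ≤ LinearMap.ker f := by
    rw [← symOpSpan_eq_degreeLE hu H (Nat.lt_succ_iff.mp (ofFn_natDegree_lt (by omega) P)) hP,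
      symOpSpan, Submodule.span_le]
    rintro _ ⟨i, hi, rfl⟩
    have hrow := congr_fun hv ⟨i, Nat.lt_succ_iff.mpr hi⟩
    simp only [Matrix.mulVec, dotProduct, Matrix.of_apply, Pi.zero_apply] at hrow
    rw [SetLike.mem_coe, LinearMap.mem_ker, hf, ← hrow]
    refine Finset.sum_congr rfl fun j _ => ?_
    beta_reduce
    rw [← hiter, ofFn_coeff_eq_val_of_lt _ j.2, mul_comm]
  refine hv0 (funext fun j => ?_)
  have hXj : (X ^ (j : ℕ) : L[X]) ∈ degreeLE L n := mem_degreeLE.mpr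
    ((degree_X_pow_le _).trans (WithBot.coe_le_coe.mpr (by exact_mod_cast Nat.lt_succ_iff.mp j.2)))
  simpa [hf, coeff_X_pow, Fin.val_inj] using LinearMap.mem_ker.mp (hspan hXj)

end Independence

section RiccatiTranscendence

variable {R L : Type*} [CommRing R] [Field L] [Algebra R L]

lemma exists_eq_C_mul_pow_of_symOp_eq_smul {d : Derivation R L L} {q u : L}
    (hu : d u = q - u ^ 2) (H : NoSecondSolution d u) {n : ℕ} {p : L[X]} (hn : p.natDegree ≤ n)
    {c : L} (hc : symOp d q n p = c • p) : ∃ b, p = C b * (X - C u) ^ n := by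
  set t := taylor u p with ht
  have hcoeff (a : ℕ) : (taylor u (symOp d q n p)).coeff a = c * t.coeff a := by
    rw [hc, map_smul, coeff_smul, smul_eq_mul]
  have hlow (j : ℕ) (hj : j < n) : t.coeff j = 0 := by
    induction j using Nat.strong_induction_on with
    | _ j ih =>
      by_contra hj0
      have hlowest : d (t.coeff j) + (n - 2 * j) * u * t.coeff j = c * t.coeff j := by
        rw [← hcoeff, coeff_taylor_symOp_of_lowest n hu fun a ha => ih a ha (ha.trans hj)]
      have hnext : d (t.coeff (j + 1)) + (n - 2 * (j + 1)) * u * t.coeff (j + 1) +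
          (n - j) * t.coeff j = c * t.coeff (j + 1) := by
        rw [← hcoeff, coeff_taylor_symOp_succ n hu]
      obtain ⟨g, hg⟩ : ∃ g, t.coeff (j + 1) = t.coeff j * g :=
        ⟨_, (mul_div_cancel₀ _ hj0).symm⟩
      refine H g (n - j) (by omega) (mul_left_cancel₀ hj0 ?_)
      rw [hg, Derivation.leibniz, smul_eq_mul, smul_eq_mul] at hnext
      rw [Nat.cast_sub hj.le]
      linear_combination hnext - g * hlowest
  have htX : t = C (t.coeff n) * X ^ n := by
    ext a
    rw [coeff_C_mul, coeff_X_pow]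
    rcases lt_trichotomy a n with ha | rfl | ha
    · rw [hlow a ha, if_neg ha.ne, mul_zero]
    · rw [if_pos rfl, mul_one]
    · rw [coeff_eq_zero_of_natDegree_lt, if_neg ha.ne', mul_zero]
      rw [ht, natDegree_taylor]
      omega
  refine ⟨t.coeff n, taylor_injective u ?_⟩
  rw [taylor_mul, taylor_C, taylor_pow, map_sub, taylor_X, taylor_C, add_sub_cancel_right, ← htX]

variable {R' S : Type*} [CommRing R'] [CommRing S] [Algebra R' S]

/-- A combination of `P` and `symOp d q n P` of smaller degree vanishes at `u` as well, hence is
zero if the degree of `P` is minimal. -/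
lemma exists_leadingCoeff_smul_symOp_eq_smul [Algebra S L] {d : Derivation R' S S}
    {d' : Derivation R L L} (hd : ∀ s, algebraMap S L (d s) = d' (algebraMap S L s)) {q : S}
    {u : L} (hu : d' u = algebraMap S L q - u ^ 2) {P : S[X]} (hPu : aeval u P = 0)
    (hmin : ∀ Q : S[X], Q.natDegree < P.natDegree → aeval u Q = 0 → Q = 0)
    (hdeg : P.natDegree ≠ 0) :
    ∃ e : S, P.leadingCoeff • symOp d q P.natDegree P = e • P := by
  set n := P.natDegree with hn
  set Q := P.leadingCoeff • symOp d q n P - (symOp d q n P).coeff n • P with hQ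
  have hcoeff : Q.coeff n = 0 := by
    rw [hQ, coeff_sub, coeff_smul, coeff_smul, smul_eq_mul, smul_eq_mul, hn, coeff_natDegree,
      mul_comm, sub_self]
  refine ⟨(symOp d q n P).coeff n, sub_eq_zero.mp (hmin Q ?_ ?_)⟩
  · have hle : (P.leadingCoeff • symOp d q n P).natDegree ≤ n :=
      (natDegree_smul_le _ _).trans (natDegree_symOp_le d q le_rfl)
    refine lt_of_le_of_ne (natDegree_sub_le_of_le hle (natDegree_smul_le _ _) |>.trans
      (max_self n).le) fun h => hdeg ?_
    have hzero : Q = 0 := leadingCoeff_eq_zero.mp (by rw [leadingCoeff, h, hcoeff])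
    rw [← h, hzero, natDegree_zero]
  · have hroot : (taylor u (P.map (algebraMap S L))).coeff 0 = 0 := by
      rw [taylor_coeff_zero, eval_map_algebraMap, hPu]
    rw [hQ, map_sub, map_smul, map_smul, hPu, smul_zero, sub_zero, ← eval_map_algebraMap,
      map_symOp n _ hd, ← taylor_coeff_zero, coeff_taylor_symOp_zero n hu, hroot, map_zero,
      mul_zero, add_zero, smul_zero]

/-- The symmetric power of an irrational solution of a Riccati equation has no eigenvector other
than a power of `X - C u`, and such a power is not defined over `S`. -/
theorem transcendental_of_riccati [IsDomain S] [CharZero S] [Algebra S L] [FaithfulSMul S L]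
    {d : Derivation R' S S} {d' : Derivation R L L}
    (hd : ∀ s, algebraMap S L (d s) = d' (algebraMap S L s)) {q : S} {u : L}
    (hu : d' u = algebraMap S L q - u ^ 2) (H : NoSecondSolution d' u)
    (hrat : ∀ a b : S, b ≠ 0 → algebraMap S L a ≠ u * algebraMap S L b) : Transcendental S u := by
  intro halg
  have hinj := FaithfulSMul.algebraMap_injective S L
  obtain ⟨P, ⟨hP, hPu⟩, hPmin⟩ := (measure natDegree).wf.has_min
    {P : S[X] | P ≠ 0 ∧ aeval u P = 0} halg
  have hmin (Q : S[X]) (hQ : Q.natDegree < P.natDegree) (hQu : aeval u Q = 0) : Q = 0 :=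
    of_not_not fun hQ0 => hPmin Q ⟨hQ0, hQu⟩ hQ
  have hlc : algebraMap S L P.leadingCoeff ≠ 0 :=
    (map_ne_zero_iff _ hinj).mpr (leadingCoeff_ne_zero.mpr hP)
  have hdeg : P.natDegree ≠ 0 := fun h => by
    rw [eq_C_of_natDegree_eq_zero h, aeval_C] at hPu
    rw [leadingCoeff, h] at hlc
    exact hlc hPu
  obtain ⟨e, he⟩ := exists_leadingCoeff_smul_symOp_eq_smul hd hu hPu hmin hdeg
  have heigen : symOp d' (algebraMap S L q) P.natDegree (P.map (algebraMap S L)) =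
      (algebraMap S L e / algebraMap S L P.leadingCoeff) • P.map (algebraMap S L) := by
    rw [div_eq_inv_mul, mul_smul, ← map_symOp _ _ hd, eq_inv_smul_iff₀ hlc, ← Polynomial.map_smul,
      ← Polynomial.map_smul, he]
  obtain ⟨b, hb⟩ := exists_eq_C_mul_pow_of_symOp_eq_smul hu H natDegree_map_le heigen
  have hcoeff (k : ℕ) : algebraMap S L (P.coeff k) =
      b * ((-u) ^ (P.natDegree - k) * (P.natDegree.choose k : L)) := by
    rw [← coeff_map, hb, coeff_C_mul, sub_eq_add_neg, ← C_neg, coeff_X_add_C_pow]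
  refine hrat (-P.coeff (P.natDegree - 1)) (P.natDegree * P.leadingCoeff)
    (mul_ne_zero (Nat.cast_ne_zero.mpr hdeg) (leadingCoeff_ne_zero.mpr hP)) ?_
  rw [map_neg, map_mul, map_natCast, leadingCoeff, hcoeff, hcoeff, Nat.sub_sub_self (by omega),
    Nat.choose_symm (by omega), Nat.choose_one_right, Nat.choose_self, Nat.sub_self]
  ring

end RiccatiTranscendence

/-! ### Bessel's equation over rational Laurent series -/

section BesselRiccati

/-- The two sides of the equation cannot have equal degree: a sum of two squares does not lose its
leading coefficient over an ordered ring, while the Euler derivation does not raise the degree. -/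
lemma sq_add_X_mul_sq_ne {R : Type*} [CommRing R] [LinearOrder R] [IsStrictOrderedRing R]
    (c : R) (a : R[X]) {b : R[X]} (hb : b ≠ 0) :
    a ^ 2 + (X * b) ^ 2 ≠ C c * b ^ 2 + a * eulerPoly R b - b * eulerPoly R a := by
  intro h
  set m := max a.natDegree (b.natDegree + 1) with hm
  have ha : a.natDegree ≤ m := le_max_left _ _
  have hXb : (X * b).natDegree ≤ m := (natDegree_X_mul hb).le.trans (le_max_right _ _)
  have hright : (C c * b ^ 2 + a * eulerPoly R b - b * eulerPoly R a).natDegree < 2 * m := by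
    have hbb : (C c * b ^ 2).natDegree ≤ 2 * m - 1 :=
      (natDegree_C_mul_le _ _).trans (natDegree_pow_le.trans (by omega))
    have hab : (a * eulerPoly R b).natDegree ≤ 2 * m - 1 :=
      natDegree_mul_le.trans (by have := natDegree_eulerPoly_le b; omega)
    have hba : (b * eulerPoly R a).natDegree ≤ 2 * m - 1 :=
      natDegree_mul_le.trans (by have := natDegree_eulerPoly_le a; omega)
    have := natDegree_sub_le_of_le (natDegree_add_le_of_le hbb hab) hba
    omega
  have hcoeff : a.coeff m ^ 2 + (X * b).coeff m ^ 2 = 0 := by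
    rw [← coeff_pow_of_natDegree_le ha, ← coeff_pow_of_natDegree_le hXb, ← coeff_add, h,
      coeff_eq_zero_of_natDegree_lt hright]
  obtain ⟨ham, hbm⟩ := (add_eq_zero_iff_of_nonneg (sq_nonneg _) (sq_nonneg _)).mp hcoeff
  rw [sq_eq_zero_iff] at ham hbm
  rcases le_or_gt a.natDegree (b.natDegree + 1) with hle | hlt
  · rw [hm, max_eq_right hle, coeff_X_mul] at hbm
    exact hb (leadingCoeff_eq_zero.mp hbm)
  · rw [hm, max_eq_left hlt.le] at ham
    rw [leadingCoeff_eq_zero.mp ham, natDegree_zero] at hlt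
    omega

lemma algebraMap_ne_mul_of_bessel_riccati {R L : Type*} [CommRing R] [Field L] [Algebra R L]
    [Algebra ℤ[X] L] [FaithfulSMul ℤ[X] L] {d : Derivation R L L}
    (hd : ∀ s, algebraMap ℤ[X] L (eulerPoly ℤ s) = d (algebraMap ℤ[X] L s)) {c : ℤ} {u : L}
    (hu : d u = algebraMap ℤ[X] L (C c - X ^ 2) - u ^ 2) (a b : ℤ[X]) (hb : b ≠ 0) :
    algebraMap ℤ[X] L a ≠ u * algebraMap ℤ[X] L b := by
  intro h
  refine sq_add_X_mul_sq_ne c a hb (FaithfulSMul.algebraMap_injective ℤ[X] L ?_)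
  have hderiv := congr_arg d h
  rw [Derivation.leibniz, smul_eq_mul, smul_eq_mul, hu, ← hd, ← hd] at hderiv
  simp only [map_add, map_sub, map_mul, map_pow] at hderiv ⊢
  linear_combination algebraMap ℤ[X] L b * hderiv +
    (algebraMap ℤ[X] L a + u * algebraMap ℤ[X] L b - algebraMap ℤ[X] L (eulerPoly ℤ b)) * h

end BesselRiccati

section LaurentSeries

/-- The Euler operator `X * d/dX` on Laurent series, as an additive map. It is not bundled as a
derivation because the instances `Algebra R (LaurentSeries R)` and `Module R (LaurentSeries R)` that
are found by unification agree only propositionally. -/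
def eulerLaurent (R : Type*) [CommRing R] : LaurentSeries R →+ LaurentSeries R where
  toFun f :=
    { coeff := fun k => (k : R) * f.coeff k
      isPWO_support' := f.isPWO_support.mono fun k hk h => hk (by simp [h]) }
  map_zero' := by ext k; simp
  map_add' f g := by ext k; simp [mul_add]

lemma coeff_eulerLaurent {R : Type*} [CommRing R] (f : LaurentSeries R) (k : ℤ) :
    (eulerLaurent R f).coeff k = k * f.coeff k := rfl

lemma support_eulerLaurent_subset {R : Type*} [CommRing R] (f : LaurentSeries R) :
    (eulerLaurent R f).support ⊆ f.support :=
  fun k hk h => hk (by rw [coeff_eulerLaurent, h, mul_zero])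

lemma eulerLaurent_mul {R : Type*} [CommRing R] (f g : LaurentSeries R) :
    eulerLaurent R (f * g) = f * eulerLaurent R g + g * eulerLaurent R f := by
  ext k
  rw [mul_comm g, HahnSeries.coeff_add, coeff_eulerLaurent,
    HahnSeries.coeff_mul_left' f.isPWO_support (support_eulerLaurent_subset f),
    HahnSeries.coeff_mul_right' g.isPWO_support (support_eulerLaurent_subset g),
    HahnSeries.coeff_mul, ← Finset.sum_add_distrib, Finset.mul_sum]
  refine Finset.sum_congr rfl fun ij hij => ?_
  rw [coeff_eulerLaurent, coeff_eulerLaurent, ← (Finset.mem_antidiagonal.mp hij).2.2]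
  push_cast
  ring

lemma ofPowerSeries_eulerPS {R : Type*} [CommRing R] (f : PowerSeries R) :
    HahnSeries.ofPowerSeries ℤ R (eulerPS R f) =
      eulerLaurent R (HahnSeries.ofPowerSeries ℤ R f) := by
  ext k
  rw [coeff_eulerLaurent, PowerSeries.coeff_coe, PowerSeries.coeff_coe]
  split_ifs with h
  · rw [mul_zero]
  · obtain ⟨n, rfl⟩ := Int.eq_ofNat_of_zero_le (not_lt.mp h)
    rw [Int.natAbs_natCast, coeff_eulerPS, Int.cast_natCast]

lemma algebraMap_intPoly_laurentSeries (p : ℤ[X]) : algebraMap ℤ[X] (LaurentSeries ℚ) p =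
    HahnSeries.ofPowerSeries ℤ ℚ (algebraMap ℤ[X] (PowerSeries ℚ) p) := rfl

instance : FaithfulSMul ℤ[X] (LaurentSeries ℚ) := by
  refine (faithfulSMul_iff_algebraMap_injective _ _).mpr
    (HahnSeries.ofPowerSeries_injective.comp fun a b h => ?_)
  ext k
  have := congr_arg (PowerSeries.coeff k) h
  rwa [coeff_algebraMap_powerSeries, coeff_algebraMap_powerSeries, algebraMap_int_eq,
    eq_intCast, eq_intCast, Int.cast_inj] at this

lemma algebraMap_eulerPoly_laurentSeries (p : ℤ[X]) :
    algebraMap ℤ[X] (LaurentSeries ℚ) (eulerPoly ℤ p) =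
      eulerLaurent ℚ (algebraMap ℤ[X] (LaurentSeries ℚ) p) := by
  rw [algebraMap_intPoly_laurentSeries, algebraMap_eulerPoly, ofPowerSeries_eulerPS,
    ← algebraMap_intPoly_laurentSeries]

lemma coeff_algebraMap_C_sub_X_sq_mul (c : ℤ) (g : LaurentSeries ℚ) (k : ℤ) :
    (algebraMap ℤ[X] (LaurentSeries ℚ) (C c - X ^ 2) * g).coeff k =
      c * g.coeff k - g.coeff (k - 2) := by
  have hC : algebraMap ℤ[X] (LaurentSeries ℚ) (C c) = HahnSeries.C (c : ℚ) := by simp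
  have hX : algebraMap ℤ[X] (LaurentSeries ℚ) (X ^ 2) = HahnSeries.single (2 : ℤ) (1 : ℚ) := by
    rw [map_pow, algebraMap_intPoly_laurentSeries, algebraMap_X_powerSeries, ← map_pow,
      HahnSeries.ofPowerSeries_X_pow]
    rfl
  rw [map_sub, hC, hX, sub_mul, HahnSeries.coeff_sub, HahnSeries.C_mul_eq_smul,
    HahnSeries.coeff_smul, smul_eq_mul, HahnSeries.coeff_single_mul, one_mul]

lemma eq_zero_of_bessel_equation {ν : ℕ} {g : LaurentSeries ℚ}
    (hg : eulerLaurent ℚ (eulerLaurent ℚ g) =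
      algebraMap ℤ[X] (LaurentSeries ℚ) (C ((ν : ℤ) ^ 2) - X ^ 2) * g)
    (h0 : g.coeff ν = 0) : g = 0 := by
  have hrec (k : ℤ) : ((k : ℚ) ^ 2 - (ν : ℚ) ^ 2) * g.coeff k = -g.coeff (k - 2) := by
    have := congr_arg (fun f : LaurentSeries ℚ => f.coeff k) hg
    simp only [coeff_eulerLaurent, coeff_algebraMap_C_sub_X_sq_mul] at this
    push_cast at this
    linear_combination this
  have hdown (j : ℕ) : g.coeff (ν - 2 * j) = 0 := by
    induction j with
    | zero => simpa using h0
    | succ j ih =>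
      have := hrec (ν - 2 * j)
      rw [ih, mul_zero, eq_comm, neg_eq_zero] at this
      rw [← this]
      congr 1
      push_cast
      ring
  by_contra hne
  have horder : g.coeff g.order ≠ 0 := fun h => hne (HahnSeries.coeff_order_eq_zero.mp h)
  have hindicial := hrec g.order
  rw [HahnSeries.coeff_eq_zero_of_lt_order (show g.order - 2 < g.order by omega), neg_zero,
    mul_eq_zero, or_iff_left horder, sub_eq_zero, sq_eq_sq_iff_eq_or_eq_neg] at hindicial
  rcases hindicial with h | h
  · exact horder ((show g.order = ν by exact_mod_cast h) ▸ h0)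
  · have hneg : g.order = -(ν : ℤ) := by exact_mod_cast h
    refine horder ?_
    rw [← hdown ν, hneg]
    congr 1
    ring

end LaurentSeries

section LinearEquation

variable {R L : Type*} [CommRing R] [Field L] [Algebra R L] {d : Derivation R L L} {q y : L}

lemma riccati_of_linear_equation (hy : y ≠ 0) (hode : d (d y) = q * y) :
    d (d y / y) = q - (d y / y) ^ 2 := by
  set u := d y / y
  have huy : d y = u * y := (div_mul_cancel₀ _ hy).symm
  have hderiv := congr_arg d huy
  rw [hode, Derivation.leibniz, smul_eq_mul, smul_eq_mul, huy] at hderiv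
  refine mul_right_cancel₀ hy ?_
  linear_combination -hderiv

lemma noSecondSolution_of_linear_equation [CharZero L] (hy : y ≠ 0) (hode : d (d y) = q * y)
    (huniq : ∀ g, d (d g) = q * g → ∃ c, d c = 0 ∧ g = c * y) : NoSecondSolution d (d y / y) := by
  intro t k hk ht
  have hu := riccati_of_linear_equation hy hode
  set u := d y / y
  have huy : d y = u * y := (div_mul_cancel₀ _ hy).symm
  obtain ⟨g, rfl⟩ : ∃ g, t = g * y := ⟨_, (div_mul_cancel₀ t hy).symm⟩
  rw [Derivation.leibniz, smul_eq_mul, smul_eq_mul, huy] at ht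
  have hg : y * d g = u * g * y - k := by linear_combination ht
  have hgode : d (d g) = q * g := by
    have hderiv := congr_arg d hg
    simp only [Derivation.leibniz, smul_eq_mul, map_sub, Derivation.map_natCast, huy, hu] at hderiv
    refine mul_right_cancel₀ hy ?_
    linear_combination hderiv
  obtain ⟨c, hc, rfl⟩ := huniq g hgode
  rw [Derivation.leibniz, hc, smul_zero, add_zero, smul_eq_mul, huy] at hg
  exact hk.ne' (Nat.cast_eq_zero.mp (by linear_combination hg : (k : L) = 0))

end LinearEquation

section SymmetricPowerDescent

lemma map_symMatrix {S S' : Type*} [CommRing S] [CommRing S'] (ψ : S →+* S') (q : S) (n : ℕ) :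
    (symMatrix q n).map ψ = symMatrix (ψ q) n := by
  ext i j
  simp only [symMatrix, Matrix.map_apply, Matrix.of_apply]
  split_ifs <;> simp

lemma map_ofFn {S S' : Type*} [CommRing S] [CommRing S'] [DecidableEq S] [DecidableEq S']
    (ψ : S →+* S') (n : ℕ) (P : Fin n → S) :
    (ofFn n P).map ψ = ofFn n fun i => ψ (P i) := by
  ext k
  rw [coeff_map]
  rcases lt_or_ge k n with hk | hk
  · rw [ofFn_coeff_eq_val_of_lt _ hk, ofFn_coeff_eq_val_of_lt _ hk]
  · rw [ofFn_coeff_eq_zero_of_ge _ hk, ofFn_coeff_eq_zero_of_ge _ hk, map_zero]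

variable {R R' S L : Type*} [CommRing R] [Field L] [Algebra R L] [CommRing R'] [CommRing S]
  [Algebra R' S] [Algebra S L]

lemma det_dualDeriv_symMatrix_ne_zero_of_transcendental {d : Derivation R' S S}
    {d' : Derivation R L L} (hd : ∀ s, algebraMap S L (d s) = d' (algebraMap S L s)) {q : S} {u : L}
    (hu : d' u = algebraMap S L q - u ^ 2) (H : NoSecondSolution d' u) (htr : Transcendental S u)
    {n : ℕ} {P : Fin (n + 1) → S} (hP : P ≠ 0) :
    (Matrix.of fun i j : Fin (n + 1) => (dualDeriv d (symMatrix q n))^[(i : ℕ)] P j).det ≠ 0 := by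
  classical
  have heval : (ofFn (n + 1) fun i => algebraMap S L (P i)).eval u ≠ 0 := by
    rw [← map_ofFn, eval_map_algebraMap]
    refine fun h => hP (funext fun i => ?_)
    rw [← ofFn_coeff_eq_val_of_lt P i.2, transcendental_iff.mp htr _ h, coeff_zero, Pi.zero_apply]
  intro hdet
  refine det_dualDeriv_symMatrix_ne_zero hu H heval ?_
  rw [← map_zero (algebraMap S L), ← hdet, RingHom.map_det]
  congr 1
  ext i j
  simp only [RingHom.mapMatrix_apply, Matrix.map_apply, Matrix.of_apply,
    map_dualDeriv_iterate _ hd, map_symMatrix]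

end SymmetricPowerDescent

/-! ### Bessel functions of integer order -/

section BesselJ

/-- The power series of `2 ^ ν * ν! * J_ν`, where `J_ν` is the Bessel function of integer order. -/
noncomputable def besselJPS (ν : ℕ) : PowerSeries ℚ :=
  PowerSeries.X ^ ν * besselPS (2 * ν + 1)

lemma eulerPS_X_pow (R : Type*) [CommRing R] (n : ℕ) :
    eulerPS R (PowerSeries.X ^ n) = (n : PowerSeries R) * PowerSeries.X ^ n := by
  ext k
  rw [coeff_eulerPS, ← map_natCast PowerSeries.C, PowerSeries.coeff_C_mul, PowerSeries.coeff_X_pow]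
  split_ifs with h
  · rw [h]
  · simp

lemma eulerPS_besselJPS (ν : ℕ) : eulerPS ℚ (besselJPS ν) =
    (ν : PowerSeries ℚ) * besselJPS ν + PowerSeries.X ^ ν * eulerPS ℚ (besselPS (2 * ν + 1)) := by
  rw [besselJPS, Derivation.leibniz, smul_eq_mul, smul_eq_mul, eulerPS_X_pow]
  ring

lemma eulerPS_eulerPS_besselJPS (ν : ℕ) : eulerPS ℚ (eulerPS ℚ (besselJPS ν)) =
    (C ((ν : ℤ) ^ 2) - X ^ 2 : ℤ[X]) • besselJPS ν := by
  have hscalar : algebraMap ℤ[X] (PowerSeries ℚ) (C ((ν : ℤ) ^ 2) - X ^ 2) =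
      (ν : PowerSeries ℚ) ^ 2 - PowerSeries.X ^ 2 := by
    rw [map_sub, map_pow, map_pow, map_pow, algebraMap_X_powerSeries]
    simp
  have hode := eulerPS_eulerPS_besselPS (2 * ν)
  rw [map_natCast] at hode
  rw [Algebra.smul_def, hscalar, eulerPS_besselJPS, map_add, Derivation.leibniz,
    Derivation.leibniz, Derivation.map_natCast, eulerPS_besselJPS, eulerPS_X_pow, hode, besselJPS]
  simp only [smul_eq_mul]
  push_cast
  ring

lemma coeff_besselJPS_self (ν : ℕ) : PowerSeries.coeff ν (besselJPS ν) = 1 := by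
  rw [besselJPS, PowerSeries.coeff_X_pow_mul', if_pos le_rfl, Nat.sub_self, coeff_zero_besselPS]

/-- The function of `besselJPS ν` as an element of a field, so that it has a logarithmic
derivative. -/
noncomputable def besselLaurent (ν : ℕ) : LaurentSeries ℚ :=
  HahnSeries.ofPowerSeries ℤ ℚ (besselJPS ν)

lemma coeff_besselLaurent_self (ν : ℕ) : (besselLaurent ν).coeff ν = 1 := by
  rw [besselLaurent, HahnSeries.ofPowerSeries_apply_coeff, coeff_besselJPS_self]

lemma besselLaurent_ne_zero (ν : ℕ) : besselLaurent ν ≠ 0 := fun h => by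
  simpa [h] using coeff_besselLaurent_self ν

lemma eulerLaurent_eulerLaurent_besselLaurent (ν : ℕ) :
    eulerLaurent ℚ (eulerLaurent ℚ (besselLaurent ν)) =
      algebraMap ℤ[X] (LaurentSeries ℚ) (C ((ν : ℤ) ^ 2) - X ^ 2) * besselLaurent ν := by
  rw [besselLaurent, ← ofPowerSeries_eulerPS, ← ofPowerSeries_eulerPS, eulerPS_eulerPS_besselJPS,
    Algebra.smul_def, map_mul, algebraMap_intPoly_laurentSeries]

lemma eulerLaurent_C (R : Type*) [CommRing R] (c : R) : eulerLaurent R (HahnSeries.C c) = 0 := by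
  ext k
  rw [coeff_eulerLaurent, HahnSeries.C_apply, HahnSeries.coeff_single]
  split_ifs with h <;> simp [h]

lemma exists_eq_mul_besselLaurent {ν : ℕ} {g : LaurentSeries ℚ}
    (hg : eulerLaurent ℚ (eulerLaurent ℚ g) =
      algebraMap ℤ[X] (LaurentSeries ℚ) (C ((ν : ℤ) ^ 2) - X ^ 2) * g) :
    ∃ c, eulerLaurent ℚ c = 0 ∧ g = c * besselLaurent ν := by
  refine ⟨HahnSeries.C (g.coeff ν), eulerLaurent_C ℚ _, sub_eq_zero.mp ?_⟩
  refine eq_zero_of_bessel_equation (ν := ν) ?_ ?_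
  · simp only [map_sub (eulerLaurent ℚ), eulerLaurent_mul, eulerLaurent_C, hg,
      eulerLaurent_eulerLaurent_besselLaurent, mul_zero, add_zero]
    ring
  · rw [HahnSeries.coeff_sub, HahnSeries.C_mul_eq_smul, HahnSeries.coeff_smul,
      coeff_besselLaurent_self, smul_eq_mul, mul_one, sub_self]

lemma det_dualDeriv_besselMatrix_ne_zero_of_unique {L : Type*} [Field L] [Algebra ℤ[X] L]
    [FaithfulSMul ℤ[X] L] (D : L →+ L) (hD : ∀ f g, D (f * g) = f * D g + g * D f)
    (hd : ∀ p, algebraMap ℤ[X] L (eulerPoly ℤ p) = D (algebraMap ℤ[X] L p)) {c : ℤ} {y : L}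
    (hy : y ≠ 0) (hode : D (D y) = algebraMap ℤ[X] L (C c - X ^ 2) * y)
    (huniq : ∀ g, D (D g) = algebraMap ℤ[X] L (C c - X ^ 2) * g → ∃ a, D a = 0 ∧ g = a * y)
    {n : ℕ} {P : Fin (n + 1) → ℤ[X]} (hP : P ≠ 0) :
    (Matrix.of fun i j : Fin (n + 1) =>
      (dualDeriv (eulerPoly ℤ) (symMatrix (C c - X ^ 2) n))^[(i : ℕ)] P j).det ≠ 0 := by
  let d : Derivation ℤ L L := Derivation.mk' D.toIntLinearMap hD
  have : CharZero L := charZero_of_injective_algebraMap (FaithfulSMul.algebraMap_injective ℤ[X] L)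
  have hu : d (d y / y) = _ := riccati_of_linear_equation hy hode
  have H : NoSecondSolution d (d y / y) := noSecondSolution_of_linear_equation hy hode huniq
  exact det_dualDeriv_symMatrix_ne_zero_of_transcendental hd hu H
    (transcendental_of_riccati hd hu H (algebraMap_ne_mul_of_bessel_riccati hd hu)) hP

lemma det_dualDeriv_besselMatrix_ne_zero (ν : ℕ) {n : ℕ} {P : Fin (n + 1) → ℤ[X]} (hP : P ≠ 0) :
    (Matrix.of fun i j : Fin (n + 1) => (dualDeriv (eulerPoly ℤ)
      (symMatrix (C ((ν : ℤ) ^ 2) - X ^ 2) n))^[(i : ℕ)] P j).det ≠ 0 :=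
  det_dualDeriv_besselMatrix_ne_zero_of_unique (eulerLaurent ℚ) eulerLaurent_mul
    algebraMap_eulerPoly_laurentSeries (besselLaurent_ne_zero ν)
    (eulerLaurent_eulerLaurent_besselLaurent ν) (fun _ => exists_eq_mul_besselLaurent) hP

end BesselJ

section ETypeClosure

open Finset.HasAntidiagonal

variable {C B B' : ℕ} {f g : PowerSeries ℚ}

lemma IsEType.mono (h : B ≤ B') (hf : IsEType C B f) : IsEType C B' f := by
  intro k
  obtain ⟨a, ha, hk⟩ := hf k
  exact ⟨a, ha.trans (by gcongr), hk⟩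

lemma isEType_one (C : ℕ) : IsEType C 1 1 := by
  intro k
  rcases eq_or_ne k 0 with rfl | hk
  · exact ⟨1, by simp, by simp⟩
  · exact ⟨0, by simp, by simp [PowerSeries.coeff_one, hk]⟩

lemma IsEType.eulerPS (hf : IsEType C B f) : IsEType C (2 * B) (eulerPS ℚ f) := by
  intro k
  obtain ⟨a, ha, hk⟩ := hf k
  refine ⟨k * a, ?_, ?_⟩
  · have hk2 : (k : ℤ) ≤ 2 ^ (k + 1) :=
      mod_cast Nat.lt_two_pow_self.le.trans (Nat.pow_le_pow_right two_pos k.le_succ)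
    rw [abs_mul, Nat.abs_cast, Nat.cast_mul, mul_pow]
    exact mul_le_mul hk2 ha (abs_nonneg a) (by positivity)
  · rw [coeff_eulerPS, hk]
    push_cast
    ring

lemma abs_sum_choose_mul_le {k : ℕ} {a b : ℕ → ℤ} {A A' : ℤ} (ha : ∀ i ≤ k, |a i| ≤ A)
    (hb : ∀ i ≤ k, |b i| ≤ A') :
    |∑ p ∈ antidiagonal k, (k.choose p.1 : ℤ) * (a p.1 * b p.2)| ≤ 2 ^ k * (A * A') := by
  have hterm (p : ℕ × ℕ) (hp : p ∈ antidiagonal k) :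
      |(k.choose p.1 : ℤ) * (a p.1 * b p.2)| ≤ k.choose p.1 * (A * A') := by
    rw [abs_mul, Nat.abs_cast, abs_mul]
    have hb' := hb p.2 (antidiagonal.snd_le hp)
    have ha' := ha p.1 (antidiagonal.fst_le hp)
    have hA : 0 ≤ A := (abs_nonneg _).trans ha'
    gcongr
  have hsum : ∑ p ∈ antidiagonal k, (k.choose p.1 : ℤ) = 2 ^ k := by
    rw [Finset.Nat.sum_antidiagonal_eq_sum_range_succ_mk]
    exact_mod_cast Nat.sum_range_choose k
  rw [← hsum, Finset.sum_mul]
  exact (Finset.abs_sum_le_sum_abs _ _).trans (Finset.sum_le_sum hterm)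

lemma div_pow_mul_factorial_mul_div {K : Type*} [Field K] [CharZero K] {c : K} (hc : c ≠ 0)
    (a b : K) (i j : ℕ) :
    a / (c ^ i * i.factorial) * (b / (c ^ j * j.factorial)) =
      (i + j).choose i * (a * b) / (c ^ (i + j) * (i + j).factorial) := by
  have hchoose : ((i + j).choose i * j.factorial * i.factorial : K) = (i + j).factorial := by
    rw [add_comm i j]
    exact_mod_cast Nat.add_choose_mul_factorial_mul_factorial j i
  have hi : (i.factorial : K) ≠ 0 := mod_cast i.factorial_ne_zero
  have hj : (j.factorial : K) ≠ 0 := mod_cast j.factorial_ne_zero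
  have hij : ((i + j).factorial : K) ≠ 0 := mod_cast (i + j).factorial_ne_zero
  rw [div_mul_div_comm, div_eq_div_iff (by simp [*]) (by simp [*]), ← hchoose, pow_add]
  ring

lemma IsEType.mul (hC : 0 < C) (hB : 0 < B) (hB' : 0 < B') (hf : IsEType C B f)
    (hg : IsEType C B' g) : IsEType C (2 * B * B') (f * g) := by
  choose a ha hfa using hf
  choose b hb hgb using hg
  intro k
  refine ⟨∑ p ∈ antidiagonal k, (k.choose p.1 : ℤ) * (a p.1 * b p.2), ?_, ?_⟩
  · have hmono {D i : ℕ} (hD : 0 < D) (hi : i ≤ k) : (D : ℤ) ^ (i + 1) ≤ (D : ℤ) ^ (k + 1) :=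
      pow_le_pow_right₀ (by exact_mod_cast hD) (by omega)
    calc |∑ p ∈ antidiagonal k, (k.choose p.1 : ℤ) * (a p.1 * b p.2)|
        ≤ 2 ^ k * ((B : ℤ) ^ (k + 1) * (B' : ℤ) ^ (k + 1)) :=
          abs_sum_choose_mul_le (fun i hi => (ha i).trans (hmono hB hi))
            fun i hi => (hb i).trans (hmono hB' hi)
      _ ≤ 2 ^ (k + 1) * ((B : ℤ) ^ (k + 1) * (B' : ℤ) ^ (k + 1)) := by
          gcongr
          exacts [one_le_two, k.le_succ]
      _ = ((2 * B * B' : ℕ) : ℤ) ^ (k + 1) := by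
          push_cast
          ring
  · rw [PowerSeries.coeff_mul, Int.cast_sum, Finset.sum_div]
    refine Finset.sum_congr rfl fun p hp => ?_
    rw [hfa, hgb, div_pow_mul_factorial_mul_div (Nat.cast_ne_zero.mpr hC.ne'),
      mem_antidiagonal.mp hp]
    push_cast
    rfl

lemma IsEType.exists_pow (hC : 0 < C) (hB : 0 < B) (hf : IsEType C B f) (n : ℕ) :
    ∃ B', 0 < B' ∧ IsEType C B' (f ^ n) := by
  induction n with
  | zero => exact ⟨1, one_pos, by simpa using isEType_one C⟩
  | succ n ih =>
    obtain ⟨B', hB', h⟩ := ih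
    exact ⟨2 * B' * B, by positivity, by simpa only [pow_succ] using h.mul hC hB' hB hf⟩

end ETypeClosure

section IntegerOrder

lemma coeff_besselPS_eq_choose (ν m : ℕ) : PowerSeries.coeff (2 * m) (besselPS (2 * ν + 1)) *
    (2 ^ (ν + 2 * m) * (ν + 2 * m).factorial) =
      (-1) ^ m * ν.factorial * 2 ^ ν * (ν + 2 * m).choose m := by
  have hcoeff : PowerSeries.coeff (2 * m) (besselPS (2 * ν + 1)) *
      (4 ^ m * m.factorial * (m + ν).factorial) = (-1) ^ m * ν.factorial := by
    have hΓ := coeff_two_mul_besselPS_mul_Gamma (2 * ν) m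
    rw [Nat.cast_mul, Nat.cast_ofNat, mul_div_cancel_left₀ _ two_ne_zero, ← Nat.cast_add,
      Real.Gamma_nat_eq_factorial, Real.Gamma_nat_eq_factorial] at hΓ
    exact_mod_cast hΓ
  have hchoose : ((ν + 2 * m).choose m * (m + ν).factorial * m.factorial : ℚ) =
      (ν + 2 * m).factorial := by
    rw [show ν + 2 * m = m + ν + m by ring]
    exact_mod_cast Nat.add_choose_mul_factorial_mul_factorial (m + ν) m
  rw [← hchoose, pow_add, pow_mul, show (2 : ℚ) ^ 2 = 4 by norm_num]
  linear_combination 2 ^ ν * ((ν + 2 * m).choose m : ℚ) * hcoeff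

lemma factorial_mul_two_pow_mul_choose_le (ν m : ℕ) :
    ν.factorial * 2 ^ ν * (ν + 2 * m).choose m ≤
      (ν.factorial * 2 ^ (ν + 1)) ^ (ν + 2 * m + 1) := by
  rw [pow_succ 2, ← mul_assoc, mul_pow]
  exact Nat.mul_le_mul (Nat.le_self_pow (by omega) _)
    ((Nat.choose_le_two_pow _ _).trans (Nat.pow_le_pow_right two_pos (Nat.le_succ _)))

lemma isEType_besselJPS (ν : ℕ) : IsEType 2 (ν.factorial * 2 ^ (ν + 1)) (besselJPS ν) := by
  intro k
  by_cases hk : ∃ m, k = ν + 2 * m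
  · obtain ⟨m, rfl⟩ := hk
    refine ⟨(-1) ^ m * ν.factorial * 2 ^ ν * (ν + 2 * m).choose m, ?_, ?_⟩
    · simp only [abs_mul, abs_pow, abs_neg, abs_one, one_pow, one_mul, Nat.abs_cast, Nat.abs_ofNat]
      exact_mod_cast factorial_mul_two_pow_mul_choose_le ν m
    · rw [besselJPS, PowerSeries.coeff_X_pow_mul', if_pos (by omega), Nat.add_sub_cancel_left,
        eq_div_iff (by positivity)]
      push_cast
      exact coeff_besselPS_eq_choose ν m
  · refine ⟨0, by rw [abs_zero]; positivity, ?_⟩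
    rw [besselJPS, PowerSeries.coeff_X_pow_mul', Int.cast_zero, zero_div]
    split_ifs with h
    · have hodd : ¬Even (k - ν) := fun ⟨m, hm⟩ => hk ⟨m, by omega⟩
      simp [besselPS, hodd]
    · rfl

end IntegerOrder

section IntegerOrderTranscendence

lemma derivation_pow_mul_pow_eq_sum_symMatrix {R S T : Type*} [CommRing R] [CommRing S]
    [CommRing T] [Algebra R T] [Algebra S T] {d : Derivation R T T} {q : S} {y : T}
    (hy : d (d y) = q • y) (n : ℕ) (i : Fin (n + 1)) :
    d (y ^ (n - i) * d y ^ (i : ℕ)) =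
      ∑ j : Fin (n + 1), symMatrix q n i j • (y ^ (n - j) * d y ^ (j : ℕ)) := by
  obtain ⟨i, hi⟩ := i
  simp only [symMatrix, Matrix.of_apply]
  rw [Fin.sum_univ_eq_sum_range (fun j => ((if j = i + 1 then ((n : S) - i) else 0) +
    (if i = j + 1 then (i : S) * q else 0)) • (y ^ (n - j) * d y ^ j)) (n + 1)]
  simp only [add_smul, ite_smul, zero_smul, Finset.sum_add_distrib]
  rw [Derivation.leibniz, Derivation.leibniz_pow, Derivation.leibniz_pow, hy, add_comm]
  simp only [nsmul_eq_mul, smul_eq_mul]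
  simp only [Algebra.smul_def, map_sub, map_mul, map_natCast]
  congr 1
  · rw [Finset.sum_ite_eq' (Finset.range (n + 1)) (i + 1)]
    split_ifs with h
    · obtain ⟨k, hk⟩ := Nat.exists_eq_add_of_lt (Nat.lt_of_succ_lt_succ (Finset.mem_range.mp h))
      rw [hk, show i + k + 1 - i = k + 1 by omega, show i + k + 1 - (i + 1) = k by omega,
        Nat.add_sub_cancel]
      push_cast
      ring
    · rw [show n - i = 0 by rw [Finset.mem_range] at h; omega]
      simp
  · rcases i with _ | i
    · simp
    · simp only [Nat.add_right_cancel_iff]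
      rw [Finset.sum_ite_eq (Finset.range (n + 1)) i, if_pos (Finset.mem_range.mpr (by omega)),
        Nat.add_sub_cancel, show n - i = n - (i + 1) + 1 by omega]
      ring

lemma natDegree_symMatrix_le {S : Type*} [CommRing S] (q : S[X]) (n : ℕ) (i j : Fin (n + 1)) :
    (symMatrix q n i j).natDegree ≤ q.natDegree := by
  simp only [symMatrix, Matrix.of_apply]
  refine (natDegree_add_le _ _).trans (max_le ?_ ?_) <;> split_ifs
  · exact (natDegree_sub_le _ _).trans (by simp)
  · simp
  · exact natDegree_mul_le.trans (by simp)
  · simp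

lemma natDegree_C_sub_X_sq_le (a : ℤ) : (C a - X ^ 2 : ℤ[X]).natDegree ≤ 2 := by
  compute_degree

lemma eulerPS_besselPS_mem_absConvergent (p : ℕ) (x : ℂ) :
    eulerPS ℚ (besselPS p) ∈ absConvergent x := by
  have hp : (p + 1 : ℚ) ≠ 0 := by positivity
  have hsmul : eulerPS ℚ (besselPS p) =
      (-(p + 1 : ℚ)⁻¹) • (algebraMap ℤ[X] (PowerSeries ℚ) (X ^ 2) * besselPS (p + 2)) := by
    rw [map_pow, algebraMap_X_powerSeries, neg_smul, ← smul_neg, ← eulerPS_besselPS,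
      ← PowerSeries.smul_eq_C_mul, inv_smul_smul₀ hp]
  rw [hsmul]
  exact Subalgebra.smul_mem _ (mul_mem (algebraMap_int_mem_absConvergent x _)
    (besselPS_mem_absConvergent _ x)) _

lemma besselJPS_mem_absConvergent (ν : ℕ) (x : ℂ) : besselJPS ν ∈ absConvergent x :=
  (isEType_besselJPS ν).mem_absConvergent two_pos x

lemma eulerPS_besselJPS_mem_absConvergent (ν : ℕ) (x : ℂ) :
    eulerPS ℚ (besselJPS ν) ∈ absConvergent x :=
  (isEType_besselJPS ν).eulerPS.mem_absConvergent two_pos x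

lemma psEval_besselJPS (ν : ℕ) (x : ℂ) :
    psEval x (besselJPS ν) = x ^ ν * psEval x (besselPS (2 * ν + 1)) :=
  psEval_X_pow_mul (besselPS_mem_absConvergent _ _) ν

lemma psEval_eulerPS_besselJPS (ν : ℕ) (x : ℂ) : psEval x (eulerPS ℚ (besselJPS ν)) =
    ν * psEval x (besselJPS ν) + x ^ ν * psEval x (eulerPS ℚ (besselPS (2 * ν + 1))) := by
  have hJ := besselJPS_mem_absConvergent ν x
  have hmem : PowerSeries.C (ν : ℚ) * besselJPS ν ∈ absConvergent x :=
    mul_mem (Subalgebra.algebraMap_mem (absConvergent x) (ν : ℚ)) hJ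
  rw [← psEval_X_pow_mul (eulerPS_besselPS_mem_absConvergent _ x), ← Rat.cast_natCast,
    ← psEval_C_mul, ← sub_eq_iff_eq_add',
    ← psEval_sub (eulerPS_besselJPS_mem_absConvergent ν x) hmem, eulerPS_besselJPS, map_natCast,
    add_sub_cancel_left]

lemma exists_isEType_pow_mul_pow {C B B' : ℕ} {f g : PowerSeries ℚ} (hC : 0 < C) (hB : 0 < B)
    (hB' : 0 < B') (hf : IsEType C B f) (hg : IsEType C B' g) (n : ℕ) :
    ∃ D, 0 < D ∧ ∀ i : Fin (n + 1), IsEType C D (f ^ (n - i) * g ^ (i : ℕ)) := by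
  choose F hF hfF using hf.exists_pow hC hB
  choose G hG hgG using hg.exists_pow hC hB'
  let D (i : Fin (n + 1)) := 2 * F (n - i) * G i
  have hD (i : Fin (n + 1)) : 0 < D i := Nat.mul_pos (Nat.mul_pos two_pos (hF _)) (hG _)
  exact ⟨∑ i, D i, Finset.sum_pos (fun i _ => hD i) Finset.univ_nonempty, fun i =>
    ((hfF (n - i)).mul hC (hF _) (hG _) (hgG i)).mono
      (Finset.single_le_sum (fun j _ => (hD j).le) (Finset.mem_univ i))⟩

lemma zero_estimate_besselJPS {K : Type*} [Field K] [CharZero K] {ν n N T t o : ℕ}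
    {P : Fin (N + 1) → ℤ[X]} {ρ s : K} (hρ : ρ ≠ 0) (hP : P ≠ 0) (hPn : ∀ i, (P i).natDegree ≤ n)
    (ho : PowerSeries.coeff o (besselJPS ν ^ N) ≠ 0)
    (hT : PowerSeries.X ^ T ∣
      ∑ i, P i • (besselJPS ν ^ (N - i) * eulerPS ℚ (besselJPS ν) ^ (i : ℕ)))
    (ht : ∀ k < t, formValue (symMatrix (C ((ν : ℤ) ^ 2) - X ^ 2) N) ρ
      (fun i => s ^ (i : ℕ)) P k = 0) :
    T + t ≤ (N + 1) * (n + N * 2) + o + N := by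
  have hle := zero_estimate_int hρ
    (fun i j => (natDegree_symMatrix_le _ N i j).trans (natDegree_C_sub_X_sq_le _)) hPn
    (fun i : Fin (N + 1) => Nat.lt_succ_iff.mp i.2) (det_dualDeriv_besselMatrix_ne_zero ν hP)
    (derivation_pow_mul_pow_eq_sum_symMatrix (eulerPS_eulerPS_besselJPS ν) N) (j₀ := 0)
    (by simpa using ho) hT (j₁ := 0) (by simp) ht
  rw [Fintype.card_fin] at hle
  linarith

theorem transcendental_of_logDeriv_besselJPS {ν s : ℕ} {x : ℂ} (hx : x ≠ 0)
    (hJ : psEval x (besselJPS ν) ≠ 0)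
    (hs : psEval x (eulerPS ℚ (besselJPS ν)) = s * psEval x (besselJPS ν)) :
    Transcendental ℚ x := by
  intro halg
  let K := IntermediateField.adjoin ℚ ({x} : Set ℂ)
  have : FiniteDimensional ℚ K := IntermediateField.adjoin.finiteDimensional halg.isIntegral
  have : NumberField K := {}
  let ρ : K := ⟨x, IntermediateField.subset_adjoin ℚ _ (by simp)⟩
  have hρ : ρ ≠ 0 := fun h => hx (congr_arg Subtype.val h)
  let δ := Module.finrank ℚ K
  let N := (δ + 2) * (δ ^ 2 + δ + 1)
  have hE := isEType_besselJPS ν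
  obtain ⟨B, hB, hEB⟩ :=
    exists_isEType_pow_mul_pow two_pos (by positivity) (by positivity) hE hE.eulerPS N
  have hJN : besselJPS ν ^ N ≠ 0 := pow_ne_zero N fun h => by
    simpa [h] using coeff_besselJPS_self ν
  obtain ⟨o, ho⟩ := PowerSeries.exists_coeff_ne_zero_iff_ne_zero.mpr hJN
  refine siegel_method (ι := Fin (N + 1)) two_pos hB hEB
    (derivation_pow_mul_pow_eq_sum_symMatrix (eulerPS_eulerPS_besselJPS ν) N)
    (φ := (algebraMap K ℂ).toRatAlgHom) (ρ := ρ) (w := fun i => (s : K) ^ (i : ℕ))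
    (pow_ne_zero N hJ) (fun i => ?_) rfl (by simp [N, δ]) (c₁ := (N + 1) * (N * 2) + o + N)
    fun P n T t hP hPn hT ht => ?_
  · have hJx := besselJPS_mem_absConvergent ν x
    have hJx' := eulerPS_besselJPS_mem_absConvergent ν x
    change psEval x _ = _
    rw [psEval_mul (pow_mem hJx _) (pow_mem hJx' _), psEval_pow hJx, psEval_pow hJx', hs, mul_pow,
      mul_left_comm, ← pow_add, Nat.sub_add_cancel (Nat.lt_succ_iff.mp i.2), mul_comm, map_pow,
      map_natCast]
  · have hle := zero_estimate_besselJPS hρ hP hPn ho hT ht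
    rw [Fintype.card_fin]
    linarith

end IntegerOrderTranscendence

section Main

variable {e ℓ : ℕ} {r : ℝ}

lemma transcendental_of_deriv_Xi_eq_zero_of_even (hr : 0 < r) (he : Even e)
    (h : deriv (Xi (e + 2) ℓ) r = 0) : Transcendental ℚ r := by
  obtain ⟨s, rfl⟩ := he
  have hx : (r : ℂ) ≠ 0 := by exact_mod_cast hr.ne'
  have hlog := psEval_eulerPS_of_deriv_Xi_eq_zero hr h
  rw [show 2 * ℓ + (s + s) + 1 = 2 * (ℓ + s) + 1 by ring] at hlog
  have hE : psEval r (besselPS (2 * (ℓ + s) + 1)) ≠ 0 := by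
    refine psEval_besselPS_ne_zero hx fun h0 => ?_
    have hstep := psEval_eulerPS_besselPS (2 * (ℓ + s) + 1) r
    rw [hlog, h0, mul_zero, neg_zero, mul_zero, eq_comm, neg_eq_zero] at hstep
    exact (mul_eq_zero.mp hstep).resolve_left (pow_ne_zero 2 hx)
  have hJ := psEval_besselJPS (ℓ + s) r
  have htr : Transcendental ℚ (r : ℂ) := by
    refine transcendental_of_logDeriv_besselJPS (ν := ℓ + s) (s := s) hx ?_ ?_
    · rw [hJ]
      exact mul_ne_zero (pow_ne_zero _ hx) hE
    · rw [psEval_eulerPS_besselJPS, hlog, hJ]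
      push_cast
      ring
  exact fun halg => htr (halg.algebraMap (A := ℂ))

lemma transcendental_of_deriv_Xi_eq_zero_of_odd (hr : 0 < r) (he : Odd e)
    (h : deriv (Xi (e + 2) ℓ) r = 0) : Transcendental ℚ r := by
  intro hralg
  obtain ⟨s, rfl⟩ := he
  have hx : (r : ℂ) ≠ 0 := by exact_mod_cast hr.ne'
  have halg : IsAlgebraic ℚ (r : ℂ) := hralg.algebraMap (A := ℂ)
  have hlog := psEval_eulerPS_of_deriv_Xi_eq_zero hr h
  rw [show 2 * ℓ + (2 * s + 1) + 1 = 2 * (ℓ + s + 1) by ring] at hlog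
  have hrel := psEval_eulerPS_besselPS (2 * (ℓ + s + 1)) r
  obtain ⟨a, b, a', b', ⟨ha, hb, ha', hb'⟩, hdet, hab, hab'⟩ :=
    exists_psEval_besselPS_two_mul hx halg (ℓ + s + 1)
  rw [hlog, hab, hab'] at hrel
  let m : ℕ := ℓ * (2 * (ℓ + s + 1) + 1)
  have hm : IsAlgebraic ℚ (m : ℂ) := isAlgebraic_natCast m
  refine transcendental_of_cos_sin_relation (A := r ^ 2 * a' - m * a) (B := r ^ 2 * b' - m * b)
    hx (((halg.pow 2).mul ha').sub (hm.mul ha)) (((halg.pow 2).mul hb').sub (hm.mul hb))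
    ?_ ?_ halg
  · by_contra! h0
    refine hdet ((mul_eq_zero.mp ?_).resolve_left (pow_ne_zero 2 hx))
    linear_combination a * h0.2 - b * h0.1
  · push_cast [m] at hrel ⊢
    linear_combination hrel

end Main

theorem Xi_deriv_zero_transcendental (d ℓ : ℕ) (hd : 2 ≤ d) (r : ℝ) (hr : 0 < r)
    (hzero : deriv (Xi d ℓ) r = 0) : Transcendental ℚ r := by
  obtain ⟨e, rfl⟩ := Nat.exists_eq_add_of_le' hd
  rcases Nat.even_or_odd e with he | he
  · exact transcendental_of_deriv_Xi_eq_zero_of_even hr he hzero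
  · exact transcendental_of_deriv_Xi_eq_zero_of_odd hr he hzero
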